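/- arXiv:1402.4969 — 10 statements merged into one kernel-verified Lean document; each statement's English description precedes it below -/
import Mathlib

section
/- Let R be a commutative ring and M an R-module. Then M is flat Mittag-Leffler if and only if every finite subset of M is contained in a submodule of M that is countably generated, projective, and pure in M. (Lemma B.1(1) of the appendix by Štovíček and Trlifaj.) -/
universe u

open TensorProduct

/-- The canonical map `M ⊗[R] (∏ i, Q i) →ₗ[R] ∏ i, (M ⊗[R] Q i)`,
determined by `m ⊗ (q_i)_i ↦ (m ⊗ q_i)_i`. -/
noncomputable def tensorPiMap (R : Type u) [CommRing R] (M : Type u) [AddCommGroup M]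
    [Module R M] {ι : Type u} (Q : ι → Type u) [∀ i, AddCommGroup (Q i)]
    [∀ i, Module R (Q i)] :
    (M ⊗[R] (∀ i, Q i)) →ₗ[R] ∀ i, M ⊗[R] Q i :=
  LinearMap.pi fun i => LinearMap.lTensor M (LinearMap.proj i)

/-- An `R`-module `M` is Mittag-Leffler if for every family `(Q i)` of `R`-modules the
canonical map `M ⊗[R] (∏ i, Q i) → ∏ i, (M ⊗[R] Q i)` is injective. -/
def IsMittagLeffler (R : Type u) [CommRing R] (M : Type u) [AddCommGroup M]
    [Module R M] : Prop :=
  ∀ (ι : Type u) (Q : ι → Type u) [∀ i, AddCommGroup (Q i)] [∀ i, Module R (Q i)],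
    Function.Injective (tensorPiMap R M Q)

/-- An `R`-module is flat Mittag-Leffler if it is flat and Mittag-Leffler. -/
def IsFlatMittagLeffler (R : Type u) [CommRing R] (M : Type u) [AddCommGroup M]
    [Module R M] : Prop :=
  Module.Flat R M ∧ IsMittagLeffler R M

/-- A submodule `N ⊆ M` is pure if for every `R`-module `Q` the induced map
`Q ⊗[R] N → Q ⊗[R] M` is injective. -/
def IsPureSubmodule {R : Type u} [CommRing R] {M : Type u} [AddCommGroup M] [Module R M]
    (N : Submodule R M) : Prop :=
  ∀ (Q : Type u) [AddCommGroup Q] [Module R Q],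
    Function.Injective (LinearMap.lTensor Q N.subtype)

namespace FML

variable {R : Type u} [CommRing R] {M : Type u} [AddCommGroup M] [Module R M]

/-- The matrix `a` dominates the tuple `m`. -/
def Dom {n k : ℕ} (m : Fin n → M) (a : Fin n → Fin k → R) : Prop :=
  ∀ (Q : Type u) [AddCommGroup Q] [Module R Q] (q : Fin n → Q),
    ∑ i, m i ⊗ₜ[R] q i = 0 → ∀ j, ∑ i, a i j • q i = 0

theorem vanish [Module.Flat R M] {n : ℕ} (m : Fin n → M) (Q : Type u) [AddCommGroup Q]
    [Module R Q] (q : Fin n → Q) (h : ∑ i, m i ⊗ₜ[R] q i = 0) :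
    ∃ (k : ℕ) (a : Fin n → Fin k → R) (y : Fin k → M),
      (∀ i, m i = ∑ j, a i j • y j) ∧ ∀ j, ∑ i, a i j • q i = 0 := by
  have h' : ∑ i, q i ⊗ₜ[R] m i = 0 := by
    have := congrArg (TensorProduct.comm R M Q) h
    simpa using this
  exact TensorProduct.vanishesTrivially_of_sum_tmul_eq_zero_of_rTensor_injective
    R (Module.Flat.rTensor_preserves_injective_linearMap _ (Submodule.injective_subtype _)) h'

theorem step (hM : IsFlatMittagLeffler R M) {n : ℕ} (m : Fin n → M) :
    ∃ (k : ℕ) (a : Fin n → Fin k → R) (y : Fin k → M),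
      (∀ i, m i = ∑ j, a i j • y j) ∧ Dom m a := by
  obtain ⟨hf, hml⟩ := hM
  by_contra hcon
  push Not at hcon
  let I : Type u := Σ k : ℕ, {p : (Fin n → Fin k → R) × (Fin k → M) //
    ∀ i, m i = ∑ j, p.1 i j • p.2 j}
  have key : ∀ p : I, ∃ (Q : Type u) (_ : AddCommGroup Q) (_ : Module R Q) (q : Fin n → Q),
      ∑ i, m i ⊗ₜ[R] q i = 0 ∧ ¬ ∀ j, ∑ i, p.2.1.1 i j • q i = 0 := by
    rintro ⟨k, ⟨a, y⟩, h⟩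
    have := hcon k a y h
    unfold Dom at this
    push Not at this
    obtain ⟨Q, i1, i2, q, h1, h2⟩ := this
    exact ⟨Q, i1, i2, q, h1, by push Not; exact h2⟩
  choose Q i1 i2 q hq1 hq2 using key
  have hz : ∑ i, m i ⊗ₜ[R] (fun p => q p i) = 0 := by
    apply hml I Q
    ext p
    simp [tensorPiMap, hq1]
  obtain ⟨k, a, y, h1, h2⟩ := vanish m _ _ hz
  refine hq2 ⟨k, ⟨a, y⟩, h1⟩ fun j => ?_
  have := congrFun (h2 j) ⟨k, ⟨a, y⟩, h1⟩
  simpa using this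

theorem Dom.factor {n k l : ℕ} {m : Fin n → M} {a : Fin n → Fin k → R} (h : Dom m a)
    (b : Fin n → Fin l → R) (z : Fin l → M) (hb : ∀ i, m i = ∑ j, b i j • z j) :
    ∃ c : Fin l → Fin k → R, ∀ i j, a i j = ∑ t, b i t * c t j := by
  let S : Submodule R (Fin n → R) := Submodule.span R (Set.range fun t i => b i t)
  have hsum : ∀ v : Fin n → R, ∑ i, v i • S.mkQ (Pi.single i 1) = S.mkQ v := by
    intro v
    simp_rw [← map_smul, ← map_sum]
    congr 1
    ext i
    simp [Finset.sum_apply, Pi.single_apply]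
  have := h (_ ⧸ S) (fun i => S.mkQ (Pi.single i 1)) (by
    simp_rw [hb, TensorProduct.sum_tmul, TensorProduct.smul_tmul]
    rw [Finset.sum_comm]
    simp_rw [← TensorProduct.tmul_sum]
    refine Finset.sum_eq_zero fun t _ => ?_
    have hbt : S.mkQ (fun i => b i t) = 0 :=
      (Submodule.Quotient.mk_eq_zero S).2 (Submodule.subset_span ⟨t, rfl⟩)
    rw [hsum (fun i => b i t), hbt, TensorProduct.tmul_zero])
  have h2 : ∀ j, ∃ c : Fin l → R, ∑ t, c t • (fun i => b i t) = fun i => a i j := by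
    intro j
    have h3 := this j
    rw [hsum (fun i => a i j)] at h3
    exact (Submodule.mem_span_range_iff_exists_fun R).1 ((Submodule.Quotient.mk_eq_zero S).1 h3)
  choose c hc using h2
  refine ⟨fun t j => c j t, fun i j => ?_⟩
  have := congrFun (hc j) i
  simp at this
  rw [← this]
  simp [mul_comm]

theorem exists_seq (hM : IsFlatMittagLeffler R M) {n : ℕ} (m : Fin n → M) :
    ∃ (k : ℕ → ℕ) (y : ∀ n, Fin (k n) → M) (a : ∀ n, Fin (k n) → Fin (k (n+1)) → R),
      (∀ n i, y n i = ∑ j, a n i j • y (n+1) j) ∧ (∀ n, Dom (y n) (a n)) ∧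
      Set.range (y 0) = Set.range m := by
  let T := Σ n : ℕ, (Fin n → M)
  have hs : ∀ t : T, ∃ (t' : T) (a : Fin t.1 → Fin t'.1 → R),
      (∀ i, t.2 i = ∑ j, a i j • t'.2 j) ∧ Dom t.2 a := by
    rintro ⟨n, m⟩
    obtain ⟨k, a, y, h⟩ := step hM m
    exact ⟨⟨k, y⟩, a, h⟩
  choose f a h1 h2 using hs
  let t : ℕ → T := fun i => Nat.rec ⟨n, m⟩ (fun _ x => f x) i
  exact ⟨fun i => (t i).1, fun i => (t i).2, fun i => a (t i), fun i => h1 (t i),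
    fun i => h2 (t i), rfl⟩

section seq

variable {k : ℕ → ℕ} (a : ∀ n, Fin (k n) → Fin (k (n+1)) → R)

theorem span_mono {V : Type u} [AddCommGroup V] [Module R V] (z : ∀ n, Fin (k n) → V)
    (hz : ∀ n i, z n i = ∑ j, a n i j • z (n+1) j) :
    Monotone fun n => Submodule.span R (Set.range (z n)) := by
  refine monotone_nat_of_le_succ fun n => ?_
  rw [Submodule.span_le]
  rintro _ ⟨i, rfl⟩
  rw [hz]
  exact Submodule.sum_mem _ fun j _ => Submodule.smul_mem _ _ (Submodule.subset_span ⟨j, rfl⟩)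

theorem mem_iSup_span {V : Type u} [AddCommGroup V] [Module R V] (z : ∀ n, Fin (k n) → V)
    (hz : ∀ n i, z n i = ∑ j, a n i j • z (n+1) j) (v : V) :
    v ∈ (⨆ n, Submodule.span R (Set.range (z n))) ↔
      ∃ n, ∃ r : Fin (k n) → R, ∑ i, r i • z n i = v := by
  rw [Submodule.mem_iSup_of_directed _ (span_mono a z hz).directed_le]
  simp_rw [Submodule.mem_span_range_iff_exists_fun]

theorem pure (y : ∀ n, Fin (k n) → M)
    (hy : ∀ n i, y n i = ∑ j, a n i j • y (n+1) j) (hd : ∀ n, Dom (y n) (a n)) :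
    IsPureSubmodule (⨆ n, Submodule.span R (Set.range (y n))) := by
  intro Q _ _
  set N := ⨆ n, Submodule.span R (Set.range (y n)) with hN
  let Y : ∀ n, Fin (k n) → N := fun n i => ⟨y n i, Submodule.mem_iSup_of_mem n
    (Submodule.subset_span ⟨i, rfl⟩)⟩
  have hY : ∀ n i, Y n i = ∑ j, a n i j • Y (n+1) j := by
    intro n i
    apply Subtype.ext
    simp [Y, ← hy]
  have hpush1 : ∀ n (q : Fin (k n) → Q), ∑ i, q i ⊗ₜ[R] Y n i =
      ∑ j, (∑ i, a n i j • q i) ⊗ₜ[R] Y (n+1) j := by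
    intro n q
    simp_rw [hY n, TensorProduct.tmul_sum, TensorProduct.sum_tmul, TensorProduct.smul_tmul]
    rw [Finset.sum_comm]
  have hpush : ∀ n n', n ≤ n' → ∀ q : Fin (k n) → Q, ∃ q' : Fin (k n') → Q,
      ∑ i, q i ⊗ₜ[R] Y n i = ∑ i, q' i ⊗ₜ[R] Y n' i := by
    intro n n' h q
    induction n', h using Nat.le_induction with
    | base => exact ⟨q, rfl⟩
    | succ l hl ih =>
      obtain ⟨q', h'⟩ := ih
      exact ⟨_, h'.trans (hpush1 l q')⟩
  have hform : ∀ x : Q ⊗[R] N, ∃ n, ∃ q : Fin (k n) → Q, x = ∑ i, q i ⊗ₜ[R] Y n i := by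
    intro x
    induction x with
    | zero => exact ⟨0, 0, by simp⟩
    | tmul q v =>
      obtain ⟨n, r, h⟩ := (mem_iSup_span a y hy v.1).1 v.2
      refine ⟨n, fun i => r i • q, ?_⟩
      have : v = ∑ i, r i • Y n i := by
        apply Subtype.ext
        simp [Y, h]
      rw [this]
      simp_rw [TensorProduct.tmul_sum, TensorProduct.smul_tmul]
    | add x x' h h' =>
      obtain ⟨n, q, h⟩ := h
      obtain ⟨n', q', h'⟩ := h'
      obtain ⟨p, hp⟩ := hpush n (max n n') (le_max_left _ _) q
      obtain ⟨p', hp'⟩ := hpush n' (max n n') (le_max_right _ _) q'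
      refine ⟨max n n', p + p', ?_⟩
      rw [h, h', hp, hp']
      simp [TensorProduct.add_tmul, Finset.sum_add_distrib]
  rw [injective_iff_map_eq_zero]
  intro x hx
  obtain ⟨n, q, rfl⟩ := hform x
  rw [hpush1]
  refine Finset.sum_eq_zero fun j _ => ?_
  rw [hd n Q q, TensorProduct.zero_tmul]
  have := congrArg (TensorProduct.comm R Q M) hx
  simpa [Y] using this

theorem proj (y : ∀ n, Fin (k n) → M)
    (hy : ∀ n i, y n i = ∑ j, a n i j • y (n+1) j) (hd : ∀ n, Dom (y n) (a n)) :
    Module.Projective R (⨆ n, Submodule.span R (Set.range (y n)) : Submodule R M) := by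
  set N := ⨆ n, Submodule.span R (Set.range (y n)) with hN
  have hyN : ∀ n i, y n i ∈ N := fun n i => Submodule.mem_iSup_of_mem n
    (Submodule.subset_span ⟨i, rfl⟩)
  let π : (N →₀ R) →ₗ[R] N := Finsupp.linearCombination R id
  let p : (N →₀ R) →ₗ[R] M := N.subtype ∘ₗ π
  have hp : ∀ v ∈ N, ∃ x, p x = v := fun v hv => ⟨Finsupp.single ⟨v, hv⟩ 1, by simp [p, π]⟩
  choose l hl using fun n i => hp _ (hyN n i)
  -- the recursion step
  have hstep : ∀ n, ∀ t : {t : Fin (k (n+1)) → (N →₀ R) // ∀ i, p (t i) = y (n+1) i},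
      ∃ t' : {t : Fin (k (n+2)) → (N →₀ R) // ∀ i, p (t i) = y (n+2) i},
        ∀ i, ∑ j, a n i j • t.1 j = ∑ j, a n i j • ∑ j', a (n+1) j j' • t'.1 j' := by
    rintro n ⟨t, ht⟩
    obtain ⟨c, hc⟩ := (hd n).factor (fun i j' => ∑ j, a n i j * a (n+1) j j') (y (n+2)) (by
      intro i
      rw [hy n i]
      simp_rw [hy (n+1), Finset.smul_sum, Finset.sum_smul, mul_smul]
      rw [Finset.sum_comm])
    let d : Fin (k (n+1)) → (N →₀ R) := fun j => t j - ∑ j', a (n+1) j j' • l (n+2) j'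
    have hpd : ∀ j, p (d j) = 0 := by
      intro j
      simp only [d, map_sub, map_sum, map_smul, ht, hl]
      rw [← hy, sub_self]
    refine ⟨⟨fun j' => l (n+2) j' + ∑ j, c j' j • d j, fun i => ?_⟩, fun i => ?_⟩
    · simp [hl, hpd]
    · have h1 : ∑ j, a n i j • d j = ∑ j, a n i j • ∑ j', a (n+1) j j' • ∑ s, c j' s • d s := by
        rw [Finset.sum_congr rfl fun j _ => by rw [hc i j]]
        simp_rw [Finset.sum_mul, Finset.smul_sum, Finset.sum_smul, mul_smul]
        rw [Finset.sum_comm]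
        simp_rw [Finset.sum_comm (s := (Finset.univ : Finset (Fin (k (n+1)))))
          (t := (Finset.univ : Finset (Fin (k (n+2)))))]
        refine Finset.sum_congr rfl fun j' _ => ?_
        rw [Finset.sum_comm]
      simp only [smul_add, Finset.sum_add_distrib]
      rw [← h1]
      simp [d, smul_sub]
  choose nx hnx using hstep
  let t : ∀ n, {t : Fin (k (n+1)) → (N →₀ R) // ∀ i, p (t i) = y (n+1) i} :=
    fun n => Nat.rec ⟨l 1, hl 1⟩ (fun n x => nx n x) n
  let s : ∀ n, Fin (k n) → (N →₀ R) := fun n i => ∑ j, a n i j • (t n).1 j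
  have hs : ∀ n i, s n i = ∑ j, a n i j • s (n+1) j := fun n i => hnx n (t n) i
  have hps : ∀ n i, p (s n i) = y n i := by
    intro n i
    simp only [s, map_sum, map_smul, (t n).2, ← hy]
  let z : ∀ n, Fin (k n) → M × (N →₀ R) := fun n i => (y n i, s n i)
  have hz : ∀ n i, z n i = ∑ j, a n i j • z (n+1) j := by
    intro n i
    ext1
    · simp only [z, Prod.fst_sum, Prod.smul_fst]; exact hy n i
    · simp only [z, Prod.snd_sum, Prod.smul_snd]; exact hs n i
  let P := ⨆ n, Submodule.span R (Set.range (z n))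
  have hP : ∀ w ∈ P, p w.2 = w.1 := by
    intro w hw
    obtain ⟨n, r, rfl⟩ := (mem_iSup_span a z hz w).1 hw
    simp [z, Prod.fst_sum, Prod.snd_sum, hps]
  have hP0 : ∀ w ∈ P, w.1 = 0 → w.2 = 0 := by
    intro w hw h0
    obtain ⟨n, r, rfl⟩ := (mem_iSup_span a z hz w).1 hw
    simp only [z, Prod.fst_sum, Prod.snd_sum, Prod.smul_fst, Prod.smul_snd] at h0 ⊢
    have := hd n R r (by
      have := congrArg (fun v => v ⊗ₜ[R] (1 : R)) h0
      simpa [TensorProduct.sum_tmul, TensorProduct.smul_tmul] using this)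
    simp only [s, Finset.smul_sum, smul_smul]
    rw [Finset.sum_comm]
    refine Finset.sum_eq_zero fun j _ => ?_
    rw [← Finset.sum_smul]
    have h3 := this j
    simp only [smul_eq_mul, mul_comm (a n _ j)] at h3
    rw [h3, zero_smul]
  have hPN : ∀ v ∈ N, ∃ x, (v, x) ∈ P := by
    intro v hv
    obtain ⟨n, r, rfl⟩ := (mem_iSup_span a y hy v).1 hv
    refine ⟨∑ i, r i • s n i, (mem_iSup_span a z hz _).2 ⟨n, r, ?_⟩⟩
    ext1 <;> simp [z, Prod.fst_sum, Prod.snd_sum]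
  choose σ hσ using fun v : N => hPN v.1 v.2
  have huniq : ∀ v x x', (v, x) ∈ P → (v, x') ∈ P → x = x' := by
    intro v x x' h h'
    have := hP0 _ (P.sub_mem h h') (by simp)
    exact sub_eq_zero.1 this
  let σ' : N →ₗ[R] (N →₀ R) :=
    { toFun := σ
      map_add' := fun v w => huniq _ _ _ (hσ _) (P.add_mem (hσ v) (hσ w))
      map_smul' := fun r v => huniq _ _ _ (hσ _) (P.smul_mem r (hσ v)) }
  rw [Module.projective_def']
  refine ⟨σ', ?_⟩
  ext v
  exact hP _ (hσ v)

end seq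

theorem pure_rTensor {N : Submodule R M} (h : IsPureSubmodule N) (Q : Type u) [AddCommGroup Q]
    [Module R Q] : Function.Injective (LinearMap.rTensor Q N.subtype) := by
  have := h Q
  rwa [LinearMap.lTensor_inj_iff_rTensor_inj] at this

theorem exists_lift
    (H : ∀ s : Finset M, ∃ N : Submodule R M, (s : Set M) ⊆ (N : Set M) ∧
        Module.Projective R N ∧ IsPureSubmodule N)
    (Q : Type u) [AddCommGroup Q] [Module R Q] (x : M ⊗[R] Q) :
    ∃ N : Submodule R M, Module.Projective R N ∧ IsPureSubmodule N ∧
      ∃ x' : N ⊗[R] Q, LinearMap.rTensor Q N.subtype x' = x := by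
  classical
  obtain ⟨S, rfl⟩ := TensorProduct.exists_finset x
  obtain ⟨N, h1, h2, h3⟩ := H (S.image Prod.fst)
  refine ⟨N, h2, h3, ?_⟩
  change _ ∈ LinearMap.range (LinearMap.rTensor Q N.subtype)
  refine Submodule.sum_mem _ fun i hi => ⟨⟨i.1, h1 ?_⟩ ⊗ₜ i.2, by simp⟩
  exact Finset.mem_coe.2 (Finset.mem_image_of_mem _ hi)

theorem free_ml (α : Type u) : IsMittagLeffler R (α →₀ R) := by
  classical
  intro ι Q _ _
  rw [injective_iff_map_eq_zero]
  intro x hx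
  apply (TensorProduct.finsuppScalarLeft R (∀ i, Q i) α).injective
  rw [map_zero]
  ext b i
  have key : ∀ x : (α →₀ R) ⊗[R] (∀ i, Q i),
      TensorProduct.finsuppScalarLeft R (Q i) α (tensorPiMap R (α →₀ R) Q x i) b =
      TensorProduct.finsuppScalarLeft R (∀ i, Q i) α x b i := by
    intro x
    induction x with
    | zero => simp
    | tmul f q => simp [tensorPiMap, TensorProduct.finsuppScalarLeft_apply_tmul_apply]
    | add x y hx hy => simp [hx, hy]
  rw [← key, hx]
  simp

theorem proj_ml {N : Type u} [AddCommGroup N] [Module R N] [hp : Module.Projective R N] :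
    IsMittagLeffler R N := by
  obtain ⟨s, hs⟩ := Module.projective_def'.1 hp
  intro ι Q _ _
  rw [injective_iff_map_eq_zero]
  intro x hx
  have h1 : LinearMap.rTensor (∀ i, Q i) s x = 0 := by
    apply free_ml N ι Q
    rw [map_zero]
    ext1 i
    have : ∀ x : N ⊗[R] (∀ i, Q i), tensorPiMap R (N →₀ R) Q (LinearMap.rTensor _ s x) i =
        LinearMap.rTensor _ s (tensorPiMap R N Q x i) := by
      intro x
      induction x with
      | zero => simp
      | tmul f q => simp [tensorPiMap]
      | add x y hx hy => simp [hx, hy]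
    rw [this, hx]; simp
  have := congrArg (LinearMap.rTensor (∀ i, Q i) (Finsupp.linearCombination R id)) h1
  rw [← LinearMap.rTensor_comp_apply, hs] at this
  simpa using this

theorem backward
    (H : ∀ s : Finset M, ∃ N : Submodule R M, (s : Set M) ⊆ (N : Set M) ∧
        Module.Projective R N ∧ IsPureSubmodule N) : IsFlatMittagLeffler R M := by
  constructor
  · rw [Module.Flat.iff_lTensor_preserves_injective_linearMap]
    intro P Q _ _ _ _ f hf
    rw [injective_iff_map_eq_zero]
    intro x hx
    obtain ⟨N, h1, h2, x', rfl⟩ := exists_lift H _ x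
    have h3 : LinearMap.lTensor N f x' = 0 := by
      apply pure_rTensor h2 Q
      rw [map_zero, ← hx, ← LinearMap.comp_apply, ← LinearMap.comp_apply,
        LinearMap.rTensor_comp_lTensor, LinearMap.lTensor_comp_rTensor]
    have := Module.Flat.lTensor_preserves_injective_linearMap (M := N) f hf
    rw [(injective_iff_map_eq_zero _).1 this _ h3, map_zero]
  · intro ι Q _ _
    rw [injective_iff_map_eq_zero]
    intro x hx
    obtain ⟨N, h1, h2, x', rfl⟩ := exists_lift H _ x
    have h3 : tensorPiMap R N Q x' = 0 := by
      ext1 i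
      apply pure_rTensor h2 (Q i)
      have h4 := congrFun hx i
      simp only [tensorPiMap, LinearMap.pi_apply, Pi.zero_apply] at h4 ⊢
      rw [map_zero, ← h4, ← LinearMap.comp_apply, ← LinearMap.comp_apply,
        LinearMap.rTensor_comp_lTensor, LinearMap.lTensor_comp_rTensor]
    rw [(injective_iff_map_eq_zero _).1 (proj_ml ι Q) _ h3, map_zero]

end FML

/-- **Lemma B.1(1)**: `M` is flat Mittag-Leffler iff every finite subset of `M` is
contained in a countably generated, projective, pure submodule of `M`. -/
theorem isFlatMittagLeffler_iff_finsets_contained_in_countably_generated_projective_pure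
    (R : Type u) [CommRing R] (M : Type u) [AddCommGroup M] [Module R M] :
    IsFlatMittagLeffler R M ↔
      ∀ s : Finset M, ∃ N : Submodule R M,
        (s : Set M) ⊆ (N : Set M) ∧
        (∃ T : Set M, T.Countable ∧ Submodule.span R T = N) ∧
        Module.Projective R N ∧
        IsPureSubmodule N := by
  constructor
  · intro hM s
    obtain ⟨k, y, a, hy, hd, h0⟩ := FML.exists_seq hM (fun i => (s.equivFin.symm i : M))
    refine ⟨⨆ n, Submodule.span R (Set.range (y n)), ?_, ?_, FML.proj a y hy hd,
      FML.pure a y hy hd⟩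
    · intro m hm
      refine Submodule.mem_iSup_of_mem 0 (Submodule.subset_span ?_)
      rw [h0]
      exact ⟨s.equivFin ⟨m, hm⟩, by simp⟩
    · exact ⟨⋃ n, Set.range (y n), Set.countable_iUnion fun n => Set.countable_range _,
        Submodule.span_iUnion _⟩
  · intro H
    refine FML.backward fun s => ?_
    obtain ⟨N, h1, _, h2, h3⟩ := H s
    exact ⟨N, h1, h2, h3⟩
end

section
/- Let R be a commutative ring and M an R-module. Then M is admissibly Ind-projective if and only if every finite subset of M is contained in a submodule of M that is finitely generated, projective, and pure in M. (Lemma B.1(2) of the appendix by Štovíček and Trlifaj, characterizing the essential image of Indᵃ(P_f(R)) in Mod(R).) -/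
universe u

/-- A presentation of `M` as an admissible Ind-object of the category of finitely
generated projective `R`-modules: a directed poset `I` and a monotone family of
submodules `P i ⊆ M` with union `M`, each finitely generated projective, such that
each inclusion `P i ⊆ P j` (for `i ≤ j`) admits an `R`-linear retraction. -/
structure AdmissibleIndPresentation (R : Type u) [Ring R] (M : Type u) [AddCommGroup M]
    [Module R M] : Type (u + 1) where
  I : Type u
  [ord : PartialOrder I]
  directed : IsDirected I (· ≤ ·)
  P : I → Submodule R M
  mono : Monotone P
  covers : ∀ x : M, ∃ i, x ∈ P i
  fg : ∀ i, (P i).FG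
  proj : ∀ i, Module.Projective R (P i)
  splits : ∀ i j, (h : i ≤ j) →
    ∃ r : (P j) →ₗ[R] (P i), ∀ v : P i, r (Submodule.inclusion (mono h) v) = v

/-- `M` is admissibly Ind-projective if it admits a presentation as an admissible
Ind-object of finitely generated projective modules. -/
def IsAdmissiblyIndProjective (R : Type u) [Ring R] (M : Type u) [AddCommGroup M]
    [Module R M] : Prop :=
  Nonempty (AdmissibleIndPresentation R M)

open TensorProduct in
/-- A finitely generated projective module has a finite dual basis. -/
theorem exists_finite_dual_basis (R : Type u) [CommRing R] (N : Type u) [AddCommGroup N]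
    [Module R N] [Module.Finite R N] [Module.Projective R N] :
    ∃ (n : ℕ) (x : Fin n → N) (f : Fin n → (N →ₗ[R] R)), ∀ v, ∑ i, f i v • x i = v := by
  obtain ⟨n, f, g, -, -, hfg⟩ := Module.Finite.exists_comp_eq_id_of_projective R N
  refine ⟨n, fun i => f (Pi.single i 1), fun i => LinearMap.proj i ∘ₗ g, fun v => ?_⟩
  have h1 : f (g v) = v := LinearMap.congr_fun hfg v
  conv_rhs => rw [← h1, pi_eq_sum_univ' (g v)]
  simp [map_sum]

open TensorProduct in
/-- A universally injective map of finitely generated projective modules is split. -/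
theorem exists_retraction_of_universally_injective {R : Type u} [CommRing R] {N N' : Type u}
    [AddCommGroup N] [Module R N] [Module.Finite R N] [Module.Projective R N]
    [AddCommGroup N'] [Module R N'] [Module.Finite R N'] [Module.Projective R N']
    (k : N →ₗ[R] N')
    (hk : ∀ (Q : Type u) [AddCommGroup Q] [Module R Q],
      Function.Injective (LinearMap.lTensor Q k)) :
    ∃ r : N' →ₗ[R] N, ∀ v, r (k v) = v := by
  obtain ⟨n, x, f, hx⟩ := exists_finite_dual_basis R N
  obtain ⟨m, y, g, hy⟩ := exists_finite_dual_basis R N'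
  let D : (N' →ₗ[R] R) →ₗ[R] (N →ₗ[R] R) := LinearMap.lcomp R R k
  let C := (N →ₗ[R] R) ⧸ LinearMap.range D
  let p : (N →ₗ[R] R) →ₗ[R] C := (LinearMap.range D).mkQ
  have hpD : ∀ a, p (D a) = 0 := fun a => 
    (Submodule.Quotient.mk_eq_zero _).2 ⟨a, rfl⟩
  have hf : ∀ a : N →ₗ[R] R, ∑ i, a (x i) • f i = a := fun a => by
    ext v
    conv_rhs => rw [← hx v]
    simp [mul_comm]
  have ht : LinearMap.lTensor C k (∑ i, p (f i) ⊗ₜ[R] x i) = 0 := by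
    have h1 : ∀ i, p (f i) ⊗ₜ[R] k (x i) = ∑ j, (p (g j (k (x i)) • f i)) ⊗ₜ[R] y j := fun i => by
      conv_lhs => rw [← hy (k (x i))]
      simp [TensorProduct.tmul_sum, TensorProduct.smul_tmul]
    simp only [map_sum, LinearMap.lTensor_tmul, h1]
    rw [Finset.sum_comm]
    refine Finset.sum_eq_zero fun j _ => ?_
    rw [← TensorProduct.sum_tmul, ← map_sum]
    have : ∑ i, g j (k (x i)) • f i = D (g j) := hf (D (g j))
    rw [this, hpD, TensorProduct.zero_tmul]
  have ht0 : ∑ i, p (f i) ⊗ₜ[R] x i = 0 := hk C (ht.trans (map_zero _).symm)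
  have hsurj : ∀ a : N →ₗ[R] R, ∃ b : N' →ₗ[R] R, D b = a := fun a => by
    have h2 := congrArg (fun t => TensorProduct.rid R C (LinearMap.lTensor C a t)) ht0
    simp only [map_sum, LinearMap.lTensor_tmul, TensorProduct.rid_tmul, map_zero] at h2
    simp only [← map_smul, ← map_sum, hf] at h2
    exact (Submodule.Quotient.mk_eq_zero _).1 h2
  choose e he using fun i => hsurj (f i)
  refine ⟨∑ i, (e i).smulRight (x i), fun v => ?_⟩
  conv_rhs => rw [← hx v]
  simp only [LinearMap.sum_apply, LinearMap.smulRight_apply]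
  refine Finset.sum_congr rfl fun i _ => ?_
  rw [← he i]
  rfl

/-- **Lemma B.1(2)**: `M` is admissibly Ind-projective iff every finite subset of `M`
is contained in a finitely generated, projective, pure submodule of `M`. -/
theorem isAdmissiblyIndProjective_iff_finsets_contained_in_fg_projective_pure
    (R : Type u) [CommRing R] (M : Type u) [AddCommGroup M] [Module R M] :
    IsAdmissiblyIndProjective R M ↔
      ∀ s : Finset M, ∃ N : Submodule R M,
        (s : Set M) ⊆ (N : Set M) ∧
        N.FG ∧
        Module.Projective R N ∧
        IsPureSubmodule N := by
  constructor
  · rintro ⟨A⟩ s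
    let _ := A.ord
    have := A.directed
    have hne : Nonempty A.I := ⟨(A.covers 0).choose⟩
    choose c hc using A.covers
    have hfin : ∀ s : Finset M, ∃ i, (s : Set M) ⊆ A.P i := fun s => by
      classical
      obtain ⟨i, hi⟩ := Finset.exists_le (s.image c)
      exact ⟨i, fun x hx => A.mono (hi _ (Finset.mem_image_of_mem c hx)) (hc x)⟩
    obtain ⟨i, hi⟩ := hfin s
    refine ⟨A.P i, hi, A.fg i, A.proj i, ?_⟩
    intro Q _ _
    rw [LinearMap.lTensor_inj_iff_rTensor_inj, injective_iff_map_eq_zero]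
    intro t ht
    obtain ⟨Q', hPQ, ⟨s', hs'⟩, hz⟩ := TensorProduct.eq_zero_of_fg_of_subtype_eq_zero (A.fg i) ht
    obtain ⟨j, hj⟩ := hfin s'
    obtain ⟨l, hil, hjl⟩ := exists_ge_ge i j
    have hQl : Q' ≤ A.P l := by
      rw [← hs', Submodule.span_le]
      exact hj.trans (A.mono hjl)
    obtain ⟨r, hr⟩ := A.splits i l hil
    have hcomp : (r ∘ₗ Submodule.inclusion hQl) ∘ₗ Submodule.inclusion hPQ = LinearMap.id := by
      ext v
      exact congrArg Subtype.val (hr v)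
    have h3 := congrArg (LinearMap.rTensor Q (r ∘ₗ Submodule.inclusion hQl)) hz
    rw [← LinearMap.comp_apply, ← LinearMap.rTensor_comp, hcomp, map_zero] at h3
    simpa using h3
  · intro h
    have hsplit : ∀ N N' : Submodule R M, ∀ hle : N ≤ N', N.FG → Module.Projective R N →
        IsPureSubmodule N → N'.FG → Module.Projective R N' →
        ∃ r : N' →ₗ[R] N, ∀ v : N, r (Submodule.inclusion hle v) = v := by
      intro N N' hle h1 h2 h3 h4 h5
      have := Module.Finite.iff_fg.2 h1
      have := Module.Finite.iff_fg.2 h4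
      refine exists_retraction_of_universally_injective (Submodule.inclusion hle) ?_
      intro Q _ _
      have h6 := h3 Q
      rw [← Submodule.subtype_comp_inclusion N N' hle, LinearMap.lTensor_comp,
        LinearMap.coe_comp] at h6
      exact h6.of_comp
    refine ⟨{ I := {N : Submodule R M // N.FG ∧ Module.Projective R N ∧ IsPureSubmodule N}
              directed := ⟨?_⟩
              P := Subtype.val
              mono := fun _ _ hab => hab
              covers := ?_
              fg := fun i => i.2.1
              proj := fun i => i.2.2.1
              splits := fun i j hij => hsplit _ _ hij i.2.1 i.2.2.1 i.2.2.2 j.2.1 j.2.2.1 }⟩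
    · rintro ⟨N, ⟨s, hs⟩, hN⟩ ⟨N', ⟨s', hs'⟩, hN'⟩
      classical
      obtain ⟨K, hK, hK'⟩ := h (s ∪ s')
      rw [Finset.coe_union, Set.union_subset_iff] at hK
      refine ⟨⟨K, hK'⟩, ?_, ?_⟩
      · change N ≤ K
        rw [← hs, Submodule.span_le]; exact hK.1
      · change N' ≤ K
        rw [← hs', Submodule.span_le]; exact hK.2
    · intro x
      obtain ⟨K, hK, hK'⟩ := h {x}
      exact ⟨⟨K, hK'⟩, hK (by simp)⟩
end

section
/- Let R be a commutative ring. The following conditions are equivalent: (a) every flat Mittag-Leffler R-module is admissibly Ind-projective; (b) every countably generated projective R-module is isomorphic to a direct sum of finitely generated R-modules; (c) the class of admissibly Ind-projective R-modules is closed under direct summands, i.e. for all R-modules M and N, if the external direct sum M ⊕ N is admissibly Ind-projective then so is M. (Lemma B.1(3) of the appendix by Štovíček and Trlifaj.) -/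
universe u

open TensorProduct DirectSum

/-- Uniform Mittag-Leffler stabilization property of maps from finite free modules. -/
def KProp (R : Type u) [CommRing R] (M : Type u) [AddCommGroup M] [Module R M] : Prop :=
  ∀ (n : ℕ) (x : (Fin n →₀ R) →ₗ[R] M), ∃ (m : ℕ) (A : (Fin n →₀ R) →ₗ[R] (Fin m →₀ R))
    (y : (Fin m →₀ R) →ₗ[R] M), y ∘ₗ A = x ∧
    ∀ (k : ℕ) (B : (Fin m →₀ R) →ₗ[R] (Fin k →₀ R)) (z : (Fin k →₀ R) →ₗ[R] M),
      z ∘ₗ B = y → ∃ C : (Fin k →₀ R) →ₗ[R] (Fin m →₀ R), C ∘ₗ B ∘ₗ A = A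

theorem AdmissibleIndPresentation.exists_le {R : Type u} [Ring R] {M : Type u} [AddCommGroup M]
    [Module R M] (D : AdmissibleIndPresentation R M) (i₀ : D.I) (N : Submodule R M) (hN : N.FG) :
    ∃ i, D.ord.le i₀ i ∧ N ≤ D.P i := by
  let _ := D.ord
  have := D.directed
  obtain ⟨s, rfl⟩ := hN
  classical
  induction s using Finset.induction_on with
  | empty => exact ⟨i₀, le_refl i₀, by simp⟩
  | insert a s _ ih =>
    obtain ⟨i, hi0, hi⟩ := ih
    obtain ⟨j, hj⟩ := D.covers a
    obtain ⟨k, hik, hjk⟩ := exists_ge_ge i j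
    refine ⟨k, le_trans hi0 hik, ?_⟩
    rw [Finset.coe_insert, Submodule.span_insert]
    refine sup_le ?_ (hi.trans (D.mono hik))
    rw [Submodule.span_singleton_le_iff_mem]
    exact D.mono hjk hj

theorem admissible_flat {R : Type u} [CommRing R] {M : Type u} [AddCommGroup M]
    [Module R M] (D : AdmissibleIndPresentation R M) : Module.Flat R M := by
  refine Module.Flat.of_forall_exists_factorization ?_
  intro l f x hx
  obtain ⟨i₀, -⟩ := D.covers 0
  obtain ⟨i, -, hi⟩ := D.exists_le i₀ (LinearMap.range x) (Module.Finite.fg_top.map x |> fun h => by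
    rwa [Submodule.map_top] at h)
  have := D.proj i
  let x' : (Fin l →₀ R) →ₗ[R] D.P i := x.codRestrict (D.P i) fun v => hi ⟨v, rfl⟩
  have hx' : x' f = 0 := Subtype.ext hx
  obtain ⟨k, a, y, h1, h2⟩ := Module.Flat.exists_factorization_of_apply_eq_zero_of_free hx'
  refine ⟨k, a, (D.P i).subtype ∘ₗ y, ?_, h2⟩
  rw [LinearMap.comp_assoc, ← h1]
  rfl

theorem admissible_K {R : Type u} [CommRing R] {M : Type u} [AddCommGroup M]
    [Module R M] (D : AdmissibleIndPresentation R M) : KProp R M := by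
  intro n x
  obtain ⟨i₀, -⟩ := D.covers 0
  obtain ⟨i, -, hi⟩ := D.exists_le i₀ (LinearMap.range x) (Module.Finite.fg_top.map x |> fun h => by
    rwa [Submodule.map_top] at h)
  have := D.proj i
  have : Module.Finite R (D.P i) := Module.Finite.of_fg (D.fg i)
  obtain ⟨m, p, hp⟩ := Module.Finite.exists_fin' R (D.P i)
  let p' : (Fin m →₀ R) →ₗ[R] D.P i := p ∘ₗ (Finsupp.linearEquivFunOnFinite R R (Fin m)).toLinearMap
  have hp' : Function.Surjective p' := hp.comp (LinearEquiv.surjective _)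
  obtain ⟨s, hs⟩ := Module.projective_lifting_property p' LinearMap.id hp'
  let x' : (Fin n →₀ R) →ₗ[R] D.P i := x.codRestrict (D.P i) fun v => hi ⟨v, rfl⟩
  have hs' : ∀ v, p' (s v) = v := fun v => LinearMap.congr_fun hs v
  refine ⟨m, s ∘ₗ x', (D.P i).subtype ∘ₗ p', ?_, ?_⟩
  · refine LinearMap.ext fun v => ?_
    simp only [LinearMap.comp_apply, hs']
    rfl
  · intro k B z hz
    obtain ⟨j, hij, hj⟩ := D.exists_le i (LinearMap.range z) (Module.Finite.fg_top.map z |> fun h => by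
      rwa [Submodule.map_top] at h)
    let z' : (Fin k →₀ R) →ₗ[R] D.P j := z.codRestrict (D.P j) fun v => hj ⟨v, rfl⟩
    obtain ⟨r, hr⟩ := D.splits i j hij
    refine ⟨s ∘ₗ r ∘ₗ z', LinearMap.ext fun v => ?_⟩
    simp only [LinearMap.comp_apply]
    congr 1
    refine Eq.trans ?_ (hr (x' v))
    congr 1
    apply Subtype.ext
    have := LinearMap.congr_fun hz (s (x' v))
    simp only [LinearMap.comp_apply, hs'] at this
    exact this

theorem K_of_prod {R : Type u} [CommRing R] {M N : Type u} [AddCommGroup M] [Module R M]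
    [AddCommGroup N] [Module R N] [Module.Flat R N] (h : KProp R (M × N)) : KProp R M := by
  intro n x
  obtain ⟨m, A, y, hyA, hK⟩ := h n (LinearMap.inl R M N ∘ₗ x)
  refine ⟨m, A, LinearMap.fst R M N ∘ₗ y, ?_, ?_⟩
  · rw [LinearMap.comp_assoc, hyA, ← LinearMap.comp_assoc, LinearMap.fst_comp_inl, LinearMap.id_comp]
  · intro k B z hz
    have h0 : (LinearMap.snd R M N ∘ₗ y) ∘ₗ A = 0 := by
      rw [LinearMap.comp_assoc, hyA, ← LinearMap.comp_assoc, LinearMap.snd_comp_inl,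
        LinearMap.zero_comp]
    obtain ⟨k2, B2, z2, h1, h2⟩ := Module.Flat.exists_factorization_of_comp_eq_zero_of_free h0
    let e : ((Fin k →₀ R) × (Fin k2 →₀ R)) ≃ₗ[R] (Fin (k + k2) →₀ R) :=
      (Finsupp.sumFinsuppLEquivProdFinsupp R).symm ≪≫ₗ
        Finsupp.domLCongr finSumFinEquiv
    obtain ⟨C, hC⟩ := hK (k + k2) (e.toLinearMap ∘ₗ B.prod B2)
      (z.prodMap z2 ∘ₗ e.symm.toLinearMap) (by
        refine LinearMap.ext fun v => ?_
        have a1 := LinearMap.congr_fun hz v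
        have a2 := LinearMap.congr_fun h1 v
        simp at a1 a2
        simp [Prod.ext_iff, a1, a2])
    refine ⟨C ∘ₗ e.toLinearMap ∘ₗ LinearMap.inl R _ _, ?_⟩
    refine LinearMap.ext fun v => ?_
    have a1 := LinearMap.congr_fun hC v
    have a2 := LinearMap.congr_fun h2 v
    simp only [LinearMap.comp_apply, LinearMap.prod_apply, Function.prod, LinearMap.zero_apply, LinearMap.inl_apply] at a1 a2 ⊢
    rw [a2] at a1
    exact a1

theorem exists_content {R : Type u} [CommRing R] {M : Type u} [AddCommGroup M]
    [Module R M] [Module.Flat R M] (h : IsMittagLeffler R M) {F : Type u} [AddCommGroup F]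
    [Module R F] (t : M ⊗[R] F) :
    ∃ K : Submodule R F, t ∈ LinearMap.range (LinearMap.lTensor M K.subtype) ∧
      ∀ Q : Submodule R F, t ∈ LinearMap.range (LinearMap.lTensor M Q.subtype) → K ≤ Q := by
  let ι := {Q : Submodule R F // t ∈ LinearMap.range (LinearMap.lTensor M Q.subtype)}
  let g : F →ₗ[R] (∀ q : ι, F ⧸ q.1) := LinearMap.pi fun q => q.1.mkQ
  have hg : LinearMap.lTensor M g t = 0 := by
    apply h ι (fun q => F ⧸ q.1)
    rw [map_zero]
    funext q
    have : tensorPiMap R M (fun q : ι => F ⧸ q.1) (LinearMap.lTensor M g t) q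
        = LinearMap.lTensor M q.1.mkQ t := by
      simp only [tensorPiMap, LinearMap.pi_apply]
      rw [← LinearMap.comp_apply, ← LinearMap.lTensor_comp]
      rfl
    rw [this]
    obtain ⟨q, w, hw⟩ := q
    change LinearMap.lTensor M q.mkQ t = 0
    rw [← hw, ← LinearMap.comp_apply, ← LinearMap.lTensor_comp]
    have : q.mkQ ∘ₗ q.subtype = 0 := by ext; simp
    rw [this]; simp
  have hex : Function.Exact (LinearMap.ker g).subtype g := LinearMap.exact_subtype_ker_map g
  refine ⟨LinearMap.ker g, (Module.Flat.lTensor_exact M hex t).1 hg, fun Q hQ v hv => ?_⟩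
  have h2 := congrFun (show g v = 0 from hv) ⟨Q, hQ⟩
  exact (Submodule.Quotient.mk_eq_zero Q).1 h2

theorem K_of_ML {R : Type u} [CommRing R] {M : Type u} [AddCommGroup M]
    [Module R M] [Module.Flat R M] (h : IsMittagLeffler R M) : KProp R M := by
  classical
  intro n x
  -- the tensor of `x`
  let t : M ⊗[R] (Fin n →₀ R) := ∑ i, x (Finsupp.single i 1) ⊗ₜ Finsupp.single i 1
  obtain ⟨K, ⟨w, hw⟩, hmin⟩ := exists_content h t
  obtain ⟨m, y, c, hyc⟩ := TensorProduct.exists_sum_tmul_eq w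
  have hxy : ∀ i, x (Finsupp.single i 1) = ∑ j, (c j : Fin n →₀ R) i • y j := by
    intro i
    have := congrArg (fun s => TensorProduct.rid R M (LinearMap.lTensor M (Finsupp.lapply i) s)) hw
    simp [t, hyc, Finsupp.single_apply] at this
    simpa using this.symm
  let A : (Fin n →₀ R) →ₗ[R] (Fin m →₀ R) :=
    Finsupp.linearCombination R fun i => Finsupp.equivFunOnFinite.symm fun j => (c j : Fin n →₀ R) i
  have hAi : ∀ i j, A (Finsupp.single i 1) j = (c j : Fin n →₀ R) i := by
    intro i j; simp [A]
  refine ⟨m, A, Finsupp.linearCombination R y, ?_, ?_⟩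
  · ext i
    simp only [LinearMap.comp_apply, Finsupp.lsingle_apply, hxy]
    rw [Finsupp.linearCombination_apply, Finsupp.sum_fintype _ _ (by simp)]
    simp [hAi]
  · intro k B z hz
    -- rows of `B ∘ A`
    let d : Fin k → (Fin n →₀ R) := fun l =>
      Finsupp.equivFunOnFinite.symm fun i => B (A (Finsupp.single i 1)) l
    let Q : Submodule R (Fin n →₀ R) := Submodule.span R (Set.range d)
    have ht : t ∈ LinearMap.range (LinearMap.lTensor M Q.subtype) := by
      refine ⟨∑ l, z (Finsupp.single l 1) ⊗ₜ ⟨d l, Submodule.subset_span ⟨l, rfl⟩⟩, ?_⟩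
      have hd : ∀ l, d l = ∑ i, d l i • Finsupp.single i (1 : R) := by
        intro l
        ext i
        simp [Finsupp.finsetSum_apply, Finsupp.single_apply]
      have hxz : ∀ i, x (Finsupp.single i 1) = ∑ l, d l i • z (Finsupp.single l 1) := by
        intro i
        have e1 : x (Finsupp.single i 1) = z (B (A (Finsupp.single i 1))) := by
          have e2 := LinearMap.congr_fun hz (A (Finsupp.single i 1))
          rw [LinearMap.comp_apply] at e2
          rw [e2, hxy, Finsupp.linearCombination_apply, Finsupp.sum_fintype _ _ (by simp)]
          simp [hAi]
        rw [e1]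
        have e3 : B (A (Finsupp.single i 1)) = ∑ l, d l i • Finsupp.single l (1 : R) := by
          ext l
          simp [Finsupp.finsetSum_apply, Finsupp.single_apply, d]
        rw [e3, map_sum]
        simp only [map_smul]
      simp only [map_sum, LinearMap.lTensor_tmul, Submodule.subtype_apply, t]
      simp only [hxz, TensorProduct.sum_tmul]
      rw [Finset.sum_comm]
      refine Finset.sum_congr rfl fun l _ => ?_
      conv_lhs => rw [hd l, TensorProduct.tmul_sum]
      refine Finset.sum_congr rfl fun i _ => ?_
      rw [TensorProduct.smul_tmul]
    have hcQ : ∀ j, (c j : Fin n →₀ R) ∈ Q := by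
      intro j
      exact hmin Q ht (c j).2
    have : ∀ j, ∃ b : Fin k → R, ∑ l, b l • d l = (c j : Fin n →₀ R) := fun j =>
      (Submodule.mem_span_range_iff_exists_fun R).1 (hcQ j)
    choose b hb using this
    refine ⟨Finsupp.linearCombination R fun l => Finsupp.equivFunOnFinite.symm fun j => b j l, ?_⟩
    ext i j
    simp only [LinearMap.comp_apply, Finsupp.lsingle_apply, hAi]
    rw [Finsupp.linearCombination_apply, Finsupp.sum_fintype _ _ (by simp), ← hb j]
    simp [Finsupp.finsetSum_apply, d, mul_comm]

theorem projective_ML {R : Type u} [CommRing R] {M : Type u} [AddCommGroup M]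
    [Module R M] [Module.Projective R M] : IsMittagLeffler R M := by
  classical
  intro ι Q _ _
  have key : ∀ (X : Type u) [AddCommGroup X] [Module R X] (t : M ⊗[R] X),
      (∀ f : M →ₗ[R] R, TensorProduct.lid R X (LinearMap.rTensor X f t) = 0) → t = 0 := by
    intro X _ _ t ht
    obtain ⟨s, hs⟩ := (Module.projective_def' (R := R) (P := M)).1 inferInstance
    have h1 : LinearMap.rTensor X s t = 0 := by
      apply (TensorProduct.finsuppScalarLeft R X M).injective
      rw [map_zero]
      ext m
      have h2 := ht (Finsupp.lapply m ∘ₗ s)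
      rw [LinearMap.rTensor_comp, LinearMap.comp_apply] at h2
      rw [Finsupp.zero_apply, ← h2]
      generalize LinearMap.rTensor X s t = r
      induction r using TensorProduct.induction_on with
      | zero => simp
      | tmul a b => simp [TensorProduct.finsuppScalarLeft_apply_tmul_apply]
      | add a b ha hb => simp only [map_add, Finsupp.add_apply, ha, hb]
    have h3 : LinearMap.rTensor X (Finsupp.linearCombination R id ∘ₗ s) t = 0 := by
      rw [LinearMap.rTensor_comp, LinearMap.comp_apply, h1, map_zero]
    rw [hs] at h3
    simpa using h3
  rw [injective_iff_map_eq_zero]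
  intro t ht
  apply key
  intro f
  funext i
  have h1 : LinearMap.lTensor M (LinearMap.proj i) t = (0 : M ⊗[R] Q i) := congrFun ht i
  have h2 : ∀ t : M ⊗[R] (∀ i, Q i), TensorProduct.lid R _ (LinearMap.rTensor _ f t) i =
      TensorProduct.lid R _ (LinearMap.rTensor _ f (LinearMap.lTensor M (LinearMap.proj i) t)) := by
    intro t
    induction t using TensorProduct.induction_on with
    | zero => simp
    | tmul a b => simp
    | add a b ha hb => simp only [map_add, Pi.add_apply, ha, hb]
  rw [h2, h1]; simp

theorem iSupIndep_of_chain {R : Type u} [CommRing R] {M : Type u} [AddCommGroup M]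
    [Module R M] (P D : ℕ → Submodule R M) (hP : Monotone P) (hD : ∀ k, D k ≤ P k)
    (hdis : ∀ k, Disjoint (P k) (D (k + 1))) : iSupIndep D := by
  classical
  rw [iSupIndep_iff_finsetSum_eq_zero_imp_eq_zero]
  have key : ∀ n, ∀ v : ℕ → M, (∀ i, v i ∈ D i) → ∑ i ∈ Finset.range n, v i = 0 →
      ∀ i < n, v i = 0 := by
    intro n
    induction n with
    | zero => intro v _ _ i hi; omega
    | succ n ih =>
      intro v hv hs
      rw [Finset.sum_range_succ] at hs
      have hn : v n = 0 := by
        cases n with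
        | zero => simpa using hs
        | succ n =>
          refine Submodule.disjoint_def.1 (hdis n) _ ?_ (hv _)
          rw [eq_neg_of_add_eq_zero_right hs]
          refine neg_mem (sum_mem fun i hi => ?_)
          exact hP (Nat.lt_succ_iff.1 (Finset.mem_range.1 hi)) (hD i (hv i))
      rw [hn, add_zero] at hs
      intro i hi
      rcases Nat.lt_succ_iff_lt_or_eq.1 hi with h | rfl
      · exact ih v hv hs i h
      · exact hn
  intro s v hvD hs i hi
  let v' : ℕ → M := fun i => if i ∈ s then v i else 0
  have := key (s.sup id + 1) v' (by
    intro i; by_cases h : i ∈ s <;> simp [v', h, hvD]) (by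
    rw [← hs, ← Finset.sum_subset (s₁ := s)]
    · refine Finset.sum_congr rfl fun i hi => by simp [v', hi]
    · intro i hi
      exact Finset.mem_range.2 (Nat.lt_succ_of_le (Finset.le_sup (f := id) hi))
    · intro i _ h; simp [v', h]) i (Nat.lt_succ_of_le (Finset.le_sup (f := id) hi))
  simpa [v', hi] using this

theorem decompose_of_admissible {R : Type u} [CommRing R] {M : Type u} [AddCommGroup M]
    [Module R M] (hS : ∃ S : Set M, S.Countable ∧ Submodule.span R S = ⊤)
    (h : IsAdmissiblyIndProjective R M) :
    ∃ (ι : Type u) (Q : ι → ModuleCat.{u} R),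
      (∀ i, Module.Finite R (Q i)) ∧ Nonempty (M ≃ₗ[R] ⨁ i, (Q i : Type u)) := by
  classical
  obtain ⟨D⟩ := h
  obtain ⟨S, hSc, hS⟩ := hS
  obtain ⟨f, hf⟩ := (hSc.insert 0).exists_eq_range (Set.insert_nonempty _ _)
  obtain ⟨i₀, -⟩ := D.covers 0
  let _ := D.ord
  have step : ∀ (k : ℕ) (i : D.I), ∃ j, i ≤ j ∧ f k ∈ D.P j := by
    intro k i
    obtain ⟨j, h1, h2⟩ := D.exists_le i (Submodule.span R {f k}) (Submodule.fg_span_singleton _)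
    exact ⟨j, h1, h2 (Submodule.mem_span_singleton_self _)⟩
  choose nxt hle hmem using step
  let idx : ℕ → D.I := fun n => Nat.rec i₀ (fun k i => nxt k i) n
  have hidx : ∀ k, idx k ≤ idx (k + 1) := fun k => hle k (idx k)
  have hfi : ∀ k, f k ∈ D.P (idx (k + 1)) := fun k => hmem k (idx k)
  let P : ℕ → Submodule R M := fun k => D.P (idx k)
  have hP : Monotone P := monotone_nat_of_le_succ fun k => D.mono (hidx k)
  choose r hr using fun k => D.splits _ _ (hidx k)
  let E : ∀ k, P (k + 1) →ₗ[R] M := fun k => (P (k + 1)).subtype - (P k).subtype ∘ₗ r k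
  let B : ℕ → Submodule R M := fun n => Nat.casesOn (motive := fun _ => Submodule R M) n (P 0) fun k => LinearMap.range (E k)
  have hfin : ∀ k, Module.Finite R (P k) := fun k => Module.Finite.of_fg (D.fg _)
  have hBfin : ∀ k : ℕ, Module.Finite R ↥(B k) := by
    rintro (_ | k)
    · exact hfin 0
    · have := hfin (k + 1)
      exact Module.Finite.range (E k)
  have hBP : ∀ k, B k ≤ P k := by
    rintro (_ | k)
    · exact le_rfl
    · rintro _ ⟨v, rfl⟩
      exact sub_mem v.2 (hP (Nat.le_succ k) (r k v).2)
  have hdis : ∀ k, Disjoint (P k) (B (k + 1)) := by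
    intro k
    rw [Submodule.disjoint_def]
    rintro _ hx ⟨v, rfl⟩
    have h1 := hr k ⟨E k v, hx⟩
    have h2 : Submodule.inclusion (D.mono (hidx k)) ⟨E k v, hx⟩ =
        v - Submodule.inclusion (D.mono (hidx k)) (r k v) := Subtype.ext rfl
    rw [h2, map_sub, hr, sub_self] at h1
    exact (congrArg Subtype.val h1).symm
  have hind := iSupIndep_of_chain P B hP hBP hdis
  have hPB : ∀ k, P k ≤ ⨆ n, B n := by
    intro k
    induction k with
    | zero => exact le_iSup B 0
    | succ k ih =>
      intro v hv
      have : v = E k ⟨v, hv⟩ + (r k ⟨v, hv⟩ : M) := by simp [E]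
      rw [this]
      exact add_mem (le_iSup B (k + 1) ⟨_, rfl⟩) (ih (r k _).2)
  have htop : ⨆ n, B n = ⊤ := by
    rw [eq_top_iff, ← hS, Submodule.span_le]
    intro s hs
    have : s ∈ Set.range f := hf ▸ Set.mem_insert_of_mem _ hs
    obtain ⟨k, rfl⟩ := this
    exact hPB (k + 1) (hfi k)
  have hI : DirectSum.IsInternal (fun i : ULift.{u} ℕ => B i.down) := by
    apply DirectSum.isInternal_submodule_of_iSupIndep_of_iSup_eq_top
    · exact hind.comp ULift.down_injective
    · rw [← htop]
      exact Equiv.ulift.iSup_comp (g := B)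
  refine ⟨ULift.{u} ℕ, fun i => ModuleCat.of R (B i.down), fun i => hBfin _, ⟨?_⟩⟩
  exact (LinearEquiv.ofBijective (DirectSum.coeLinearMap fun i : ULift.{u} ℕ => B i.down) hI).symm

theorem admissible_of_equiv {R : Type u} [CommRing R] {M N : Type u} [AddCommGroup M]
    [Module R M] [AddCommGroup N] [Module R N] (e : M ≃ₗ[R] N)
    (h : IsAdmissiblyIndProjective R M) : IsAdmissiblyIndProjective R N := by
  obtain ⟨D⟩ := h
  let _ := D.ord
  let φ : ∀ i, D.P i ≃ₗ[R] (D.P i).map e.toLinearMap := fun i => e.submoduleMap (D.P i)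
  refine ⟨{
    I := D.I
    ord := D.ord
    directed := D.directed
    P := fun i => (D.P i).map e.toLinearMap
    mono := fun i j h => Submodule.map_mono (D.mono h)
    covers := fun x => ?_
    fg := fun i => (D.fg i).map _
    proj := fun i => ?_
    splits := fun i j h => ?_ }⟩
  · obtain ⟨i, hi⟩ := D.covers (e.symm x)
    exact ⟨i, e.symm x, hi, by simp⟩
  · have := D.proj i
    exact Module.Projective.of_equiv (φ i)
  · obtain ⟨r, hr⟩ := D.splits i j h
    refine ⟨(φ i).toLinearMap ∘ₗ r ∘ₗ (φ j).symm.toLinearMap, fun v => ?_⟩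
    obtain ⟨v, rfl⟩ := (φ i).surjective v
    have : Submodule.inclusion (Submodule.map_mono (D.mono h)) (φ i v) =
      φ j (Submodule.inclusion (D.mono h) v) := rfl
    simp only [LinearMap.comp_apply, LinearEquiv.coe_coe]
    rw [this, LinearEquiv.symm_apply_apply, hr]

theorem admissible_free (R : Type u) [CommRing R] : IsAdmissiblyIndProjective R (ℕ →₀ R) := by
  classical
  refine ⟨{
    I := ULift.{u} ℕ
    ord := inferInstance
    directed := inferInstance
    P := fun i => Finsupp.supported R R (Set.Iio i.down)
    mono := fun i j h => Finsupp.supported_mono (Set.Iio_subset_Iio h)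
    covers := fun x => ⟨⟨x.support.sup id + 1⟩, fun i hi =>
      Nat.lt_succ_of_le (Finset.le_sup (f := id) hi)⟩
    fg := fun i => ?_
    proj := fun i => Module.Projective.of_equiv (Finsupp.supportedEquivFinsupp (Set.Iio i.down)).symm
    splits := fun i j h => ⟨Finsupp.restrictDom R R (Set.Iio i.down) ∘ₗ Submodule.subtype _,
      fun v => ?_⟩ }⟩
  · have := Module.Finite.equiv (Finsupp.supportedEquivFinsupp (M := R) (R := R) (Set.Iio i.down)).symm
    exact Module.Finite.iff_fg.1 this
  · exact LinearMap.congr_fun (Finsupp.restrictDom_comp_subtype (M := R) (R := R) (Set.Iio i.down)) v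

theorem cg_projective_summand {R : Type u} [CommRing R] {M : Type u} [AddCommGroup M]
    [Module R M] (hS : ∃ S : Set M, S.Countable ∧ Submodule.span R S = ⊤)
    (hM : Module.Projective R M) :
    ∃ N : Submodule R (ℕ →₀ R), Nonempty ((ℕ →₀ R) ≃ₗ[R] (M × N)) := by
  obtain ⟨S, hSc, hS⟩ := hS
  obtain ⟨f, hf⟩ := (hSc.insert 0).exists_eq_range (Set.insert_nonempty _ _)
  let p : (ℕ →₀ R) →ₗ[R] M := Finsupp.linearCombination R f
  have hp : Function.Surjective p := by
    rw [← LinearMap.range_eq_top, Finsupp.range_linearCombination, ← hf, eq_top_iff, ← hS]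
    exact Submodule.span_mono (Set.subset_insert _ _)
  obtain ⟨s, hs⟩ := Module.projective_lifting_property p LinearMap.id hp
  have hs' : ∀ v, p (s v) = v := fun v => LinearMap.congr_fun hs v
  have hk : ∀ v : ℕ →₀ R, ((LinearMap.id : (ℕ →₀ R) →ₗ[R] (ℕ →₀ R)) - s ∘ₗ p) v ∈ LinearMap.ker p := fun v => by simp [hs']
  refine ⟨LinearMap.ker p, ⟨LinearEquiv.ofLinearMap
    (p.prod ((LinearMap.id - s ∘ₗ p).codRestrict (LinearMap.ker p) hk))
    (s.coprod (LinearMap.ker p).subtype) ?_ ?_⟩⟩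
  · refine LinearMap.ext fun ⟨m, n⟩ => ?_
    have hn : p n = 0 := n.2
    refine Prod.ext ?_ (Subtype.ext ?_)
    · simp [hs', hn]
    · simp [hs', hn]
  · refine LinearMap.ext fun v => ?_
    simp

theorem exists_finite_idempotent {R : Type u} [CommRing R] {L : Type u} [AddCommGroup L] [Module R L]
    {ι : Type u} (Q : ι → ModuleCat.{u} R) (hQ : ∀ i, Module.Finite R (Q i))
    (φ : L ≃ₗ[R] ⨁ i, (Q i : Type u)) (N : Submodule R L) (hN : N.FG) :
    ∃ e : L →ₗ[R] L, (∀ v, e (e v) = e v) ∧ (LinearMap.range e).FG ∧ ∀ v ∈ N, e v = v := by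
  classical
  obtain ⟨s, rfl⟩ := hN
  let T : Finset ι := s.biUnion fun v => DFinsupp.support (φ v)
  let e' : (⨁ i, (Q i : Type u)) →ₗ[R] (⨁ i, (Q i : Type u)) :=
    ∑ i ∈ T, DirectSum.lof R ι (fun i => (Q i : Type u)) i ∘ₗ
      DirectSum.component R ι (fun i => (Q i : Type u)) i
  have he' : ∀ v i, e' v i = if i ∈ T then v i else 0 := by
    intro v i
    have : e' v i = DirectSum.component R ι (fun i => (Q i : Type u)) i (e' v) := rfl
    rw [this]
    simp only [e', LinearMap.sum_apply, map_sum, LinearMap.comp_apply]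
    split_ifs with h
    · rw [Finset.sum_eq_single_of_mem i h]
      · rw [DirectSum.component.lof_self]
        rfl
      · intro j _ hj
        rw [DirectSum.component.of, dif_neg hj]
    · refine Finset.sum_eq_zero fun j hj => ?_
      rw [DirectSum.component.of, dif_neg]
      rintro rfl
      exact h hj
  let e : L →ₗ[R] L := φ.symm.toLinearMap ∘ₗ e' ∘ₗ φ.toLinearMap
  have hidem : ∀ v, e (e v) = e v := by
    intro v
    simp only [e, LinearMap.comp_apply, LinearEquiv.coe_coe, LinearEquiv.apply_symm_apply]
    congr 1
    refine DFinsupp.ext fun i => ?_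
    rw [he' (e' _), he']
    split_ifs <;> rfl
  refine ⟨e, hidem, ?_, ?_⟩
  · let W : Submodule R (⨁ i, (Q i : Type u)) :=
      ⨆ i ∈ T, LinearMap.range (DirectSum.lof R ι (fun i => (Q i : Type u)) i)
    have hW : W.FG := Submodule.fg_biSup T _ fun i _ => by
      have := hQ i
      exact Module.Finite.iff_fg.1 (Module.Finite.range _)
    have he'W : ∀ v, e' v ∈ W := by
      intro v
      simp only [e', LinearMap.sum_apply]
      refine sum_mem fun i hi => ?_
      exact Submodule.mem_iSup_of_mem i (Submodule.mem_iSup_of_mem hi ⟨_, rfl⟩)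
    have : LinearMap.range e = (W.map φ.symm.toLinearMap).map e := by
      apply le_antisymm
      · rintro _ ⟨v, rfl⟩
        exact ⟨e v, ⟨e' (φ v), he'W _, rfl⟩, hidem v⟩
      · rintro _ ⟨v, -, rfl⟩
        exact ⟨v, rfl⟩
    rw [this]
    exact (hW.map _).map _
  · intro v hv
    have : Submodule.span R (s : Set L) ≤ LinearMap.eqLocus e LinearMap.id := by
      rw [Submodule.span_le]
      intro w hw
      change φ.symm (e' (φ w)) = w
      rw [LinearEquiv.symm_apply_eq]
      refine DFinsupp.ext fun i => ?_
      rw [he']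
      split_ifs with h
      · rfl
      · by_contra h2
        exact h (Finset.mem_biUnion.2 ⟨w, hw, DFinsupp.mem_support_iff.2 (Ne.symm h2)⟩)
    exact this hv

theorem exists_tower {R : Type u} [CommRing R] {M : Type u} [AddCommGroup M] [Module R M]
    (hK : KProp R M) (N : Submodule R M) (hN : N.FG) :
    ∃ (n : ℕ → ℕ) (y : ∀ k, (Fin (n k) →₀ R) →ₗ[R] M)
      (A : ∀ k, (Fin (n k) →₀ R) →ₗ[R] (Fin (n (k + 1)) →₀ R)),
      N ≤ LinearMap.range (y 0) ∧ (∀ k, y (k + 1) ∘ₗ A k = y k) ∧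
      ∀ k, ∀ (m : ℕ) (B : (Fin (n (k + 1)) →₀ R) →ₗ[R] (Fin m →₀ R))
        (z : (Fin m →₀ R) →ₗ[R] M),
        z ∘ₗ B = y (k + 1) → ∃ C : (Fin m →₀ R) →ₗ[R] (Fin (n (k + 1)) →₀ R),
          C ∘ₗ B ∘ₗ A k = A k := by
  classical
  have : Module.Finite R N := Module.Finite.of_fg hN
  obtain ⟨m, p, hp⟩ := Module.Finite.exists_fin' R N
  let x₀ : (Fin m →₀ R) →ₗ[R] M :=
    N.subtype ∘ₗ p ∘ₗ (Finsupp.linearEquivFunOnFinite R R (Fin m)).toLinearMap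
  choose nx A y h1 h2 using hK
  let st : ℕ → Σ n : ℕ, (Fin n →₀ R) →ₗ[R] M := fun k =>
    Nat.rec ⟨m, x₀⟩ (fun _ s => ⟨nx s.1 s.2, y s.1 s.2⟩) k
  refine ⟨fun k => (st k).1, fun k => (st k).2, fun k => A (st k).1 (st k).2, ?_,
    fun k => h1 (st k).1 (st k).2, fun k => h2 (st k).1 (st k).2⟩
  intro v hv
  obtain ⟨w, hw⟩ := hp ⟨v, hv⟩
  refine ⟨(Finsupp.linearEquivFunOnFinite R R (Fin m)).symm w, ?_⟩
  change ((p ((Finsupp.linearEquivFunOnFinite R R (Fin m))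
    ((Finsupp.linearEquivFunOnFinite R R (Fin m)).symm w)) : N) : M) = v
  rw [LinearEquiv.apply_symm_apply, hw]

section tower
variable {R : Type u} [CommRing R] {M : Type u} [AddCommGroup M] [Module R M]
  {n : ℕ → ℕ} {y : ∀ k, (Fin (n k) →₀ R) →ₗ[R] M}
  {A : ∀ k, (Fin (n k) →₀ R) →ₗ[R] (Fin (n (k + 1)) →₀ R)}

theorem tower_projective [Module.Flat R M] (hy : ∀ k, y (k + 1) ∘ₗ A k = y k)
    (hst : ∀ k, ∀ (m : ℕ) (B : (Fin (n (k + 1)) →₀ R) →ₗ[R] (Fin m →₀ R))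
        (z : (Fin m →₀ R) →ₗ[R] M),
        z ∘ₗ B = y (k + 1) → ∃ C : (Fin m →₀ R) →ₗ[R] (Fin (n (k + 1)) →₀ R),
          C ∘ₗ B ∘ₗ A k = A k) :
    Module.Projective R ↥(⨆ k, LinearMap.range (y k)) := by
  classical
  have hy' : ∀ k v, y (k + 1) (A k v) = y k v := fun k v => LinearMap.congr_fun (hy k) v
  choose C hC using fun k => hst k _ (A (k + 1)) (y (k + 2)) (hy (k + 1))
  have hC' : ∀ k v, C k (A (k + 1) (A k v)) = A k v := fun k v => LinearMap.congr_fun (hC k) v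
  have hinj : ∀ k v, y k v = 0 → A k v = 0 := by
    intro k v hv
    have h0 : y (k + 1) (A k v) = 0 := by rw [hy', hv]
    obtain ⟨l, B, z, h1, h2⟩ := Module.Flat.exists_factorization_of_apply_eq_zero_of_free h0
    obtain ⟨C', hC'⟩ := hst k l B z h1.symm
    have := LinearMap.congr_fun hC' v
    simp only [LinearMap.comp_apply] at this
    rw [← this, h2, map_zero]
  let G : Type u := (Σ k, Fin (n k)) →₀ R
  let e : ∀ k, (Fin (n k) →₀ R) →ₗ[R] G := fun k =>
    Finsupp.lmapDomain R R (fun i : Fin (n k) => (⟨k, i⟩ : Σ k, Fin (n k)))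
  have hes : ∀ k i r, e k (Finsupp.single i r) = Finsupp.single ⟨k, i⟩ r := fun k i r =>
    Finsupp.mapDomain_single
  have huniv : ∀ (X : Type u) [AddCommGroup X] [Module R X]
      (f : ∀ k, (Fin (n k) →₀ R) →ₗ[R] X), ∃ g : G →ₗ[R] X, ∀ k v, g (e k v) = f k v := by
    intro X _ _ f
    refine ⟨Finsupp.linearCombination R (fun q : Σ k, Fin (n k) => f q.1 (Finsupp.single q.2 1)),
      fun k v => ?_⟩
    induction v using Finsupp.induction_linear with
    | zero => simp
    | add a b ha hb => rw [map_add, map_add, map_add, ha, hb]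
    | single i r =>
      rw [hes, Finsupp.linearCombination_single, ← map_smul, Finsupp.smul_single_one]
  obtain ⟨π, hπe⟩ := huniv M y
  have hrange : LinearMap.range π = ⨆ k, LinearMap.range (y k) := by
    apply le_antisymm
    · rintro _ ⟨g, rfl⟩
      induction g using Finsupp.induction_linear with
      | zero => simp
      | add a b ha hb => rw [map_add]; exact add_mem ha hb
      | single q r =>
        obtain ⟨k, i⟩ := q
        rw [← hes, hπe]
        exact Submodule.mem_iSup_of_mem k ⟨_, rfl⟩
    · refine iSup_le fun k => ?_
      rintro _ ⟨v, rfl⟩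
      exact ⟨e k v, hπe k v⟩
  rw [← hrange]
  let T : ∀ k, (Fin (n (k + 1)) →₀ R) →ₗ[R] G := fun k =>
    Nat.rec (motive := fun k => (Fin (n (k + 1)) →₀ R) →ₗ[R] G) (e 1)
      (fun k t => e (k + 2) + (t - e (k + 2) ∘ₗ A (k + 1)) ∘ₗ C k) k
  have hT : ∀ k v, T (k + 1) v =
      e (k + 2) v + (T k (C k v) - e (k + 2) (A (k + 1) (C k v))) := fun k v => rfl
  have hπT : ∀ k v, π (T k v) = y (k + 1) v := by
    intro k
    induction k with
    | zero => exact hπe 1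
    | succ k ih =>
      intro v
      rw [hT, map_add, map_sub, hπe, hπe, ih, hy', sub_self, add_zero]
  let σ : ∀ k, (Fin (n k) →₀ R) →ₗ[R] G := fun k => T k ∘ₗ A k
  have hσ : ∀ k v, σ (k + 1) (A k v) = σ k v := by
    intro k v
    change T (k + 1) (A (k + 1) (A k v)) = T k (A k v)
    rw [hT, hC']
    abel
  have hπσ : ∀ k v, π (σ k v) = y k v := by
    intro k v
    change π (T k (A k v)) = _
    rw [hπT, hy']
  have hσ0 : ∀ k v, y k v = 0 → σ k v = 0 := by
    intro k v hv
    change T k (A k v) = 0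
    rw [hinj k v hv, map_zero]
  obtain ⟨θ, hθe⟩ := huniv G σ
  have hπθ : π ∘ₗ θ = π := by
    refine LinearMap.ext fun g => ?_
    rw [LinearMap.comp_apply]
    induction g using Finsupp.induction_linear with
    | zero => simp
    | add a b ha hb => rw [map_add, map_add, map_add, ha, hb]
    | single q r =>
      obtain ⟨k, i⟩ := q
      rw [← hes, hθe, hπσ, hπe]
  have htrans : ∀ k j (w : Fin (n k) →₀ R), ∃ w' : Fin (n (k + j)) →₀ R,
      σ (k + j) w' = σ k w ∧ y (k + j) w' = y k w := by
    intro k j w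
    induction j with
    | zero => exact ⟨w, rfl, rfl⟩
    | succ j ih =>
      obtain ⟨w', h1, h2⟩ := ih
      exact ⟨A (k + j) w', (hσ _ _).trans h1, (hy' _ _).trans h2⟩
  have htrans' : ∀ k l (_ : k ≤ l) (w : Fin (n k) →₀ R), ∃ w' : Fin (n l) →₀ R,
      σ l w' = σ k w ∧ y l w' = y k w := by
    intro k l hkl w
    obtain ⟨j, rfl⟩ := Nat.exists_eq_add_of_le hkl
    exact htrans k j w
  have hrep : ∀ g : G, ∃ (k : ℕ) (w : Fin (n k) →₀ R), θ g = σ k w ∧ π g = y k w := by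
    intro g
    induction g using Finsupp.induction_linear with
    | zero => exact ⟨0, 0, by simp, by simp⟩
    | single q r =>
      obtain ⟨k, i⟩ := q
      refine ⟨k, Finsupp.single i r, ?_, ?_⟩
      · rw [← hes, hθe]
      · rw [← hes, hπe]
    | add a b ha hb =>
      obtain ⟨k, w, h1, h2⟩ := ha
      obtain ⟨l, w', h3, h4⟩ := hb
      obtain ⟨u, h5, h6⟩ := htrans' k (max k l) (le_max_left _ _) w
      obtain ⟨u', h7, h8⟩ := htrans' l (max k l) (le_max_right _ _) w'
      refine ⟨max k l, u + u', ?_, ?_⟩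
      · rw [map_add, map_add, h5, h7, h1, h3]
      · rw [map_add, map_add, h6, h8, h2, h4]
  have hker : LinearMap.ker π ≤ LinearMap.ker θ := by
    intro g hg
    obtain ⟨k, w, h1, h2⟩ := hrep g
    rw [LinearMap.mem_ker] at hg ⊢
    rw [h1]
    exact hσ0 k w (by rw [← h2, hg])
  have hGp : Module.Projective R G := inferInstanceAs (Module.Projective R ((Σ k, Fin (n k)) →₀ R))
  let i : LinearMap.range π →ₗ[R] G :=
    (LinearMap.ker π).liftQ θ hker ∘ₗ π.quotKerEquivRange.symm.toLinearMap
  refine Module.Projective.of_split (M := G) i π.rangeRestrict ?_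
  refine LinearMap.ext fun ⟨_, g, rfl⟩ => ?_
  apply Subtype.ext
  have h1 : i ⟨π g, g, rfl⟩ = θ g := by
    change (LinearMap.ker π).liftQ θ hker (π.quotKerEquivRange.symm ⟨π g, g, rfl⟩) = θ g
    have : π.quotKerEquivRange.symm ⟨π g, g, rfl⟩ = (LinearMap.ker π).mkQ g := by
      rw [LinearEquiv.symm_apply_eq]; rfl
    rw [this]; rfl
  change π (i ⟨π g, g, rfl⟩) = π g
  rw [h1]
  exact LinearMap.congr_fun hπθ g

end tower

/-- Finitely generated projective submodules that split off every larger finitely generated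
projective submodule. -/
def GoodSub (R : Type u) [CommRing R] {M : Type u} [AddCommGroup M] [Module R M]
    (P : Submodule R M) : Prop :=
  P.FG ∧ Module.Projective R P ∧ ∀ P' : Submodule R M, ∀ h : P ≤ P', P'.FG →
    Module.Projective R P' → ∃ r : P' →ₗ[R] P, ∀ v : P, r (Submodule.inclusion h v) = v

theorem exists_good {R : Type u} [CommRing R]
    (hb : ∀ (M : Type u) [AddCommGroup M] [Module R M],
        (∃ S : Set M, S.Countable ∧ Submodule.span R S = ⊤) → Module.Projective R M →
        ∃ (ι : Type u) (Q : ι → ModuleCat.{u} R),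
          (∀ i, Module.Finite R (Q i)) ∧ Nonempty (M ≃ₗ[R] ⨁ i, (Q i : Type u)))
    {M : Type u} [AddCommGroup M] [Module R M] [Module.Flat R M] (hK : KProp R M)
    (N : Submodule R M) (hN : N.FG) : ∃ P, N ≤ P ∧ GoodSub R P := by
  classical
  obtain ⟨n, y, A, hN0, hy, hst⟩ := exists_tower hK N hN
  have hy' : ∀ k v, y (k + 1) (A k v) = y k v := fun k v => LinearMap.congr_fun (hy k) v
  have hLp := tower_projective hy hst
  have hmono : Monotone fun k => LinearMap.range (y k) := by
    refine monotone_nat_of_le_succ fun k => ?_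
    rintro _ ⟨v, rfl⟩
    exact ⟨A k v, hy' k v⟩
  have hmemL : ∀ x, x ∈ (⨆ k, LinearMap.range (y k)) → ∃ k, x ∈ LinearMap.range (y k) :=
    fun x hx => (Submodule.mem_iSup_of_directed _ hmono.directed_le).1 hx
  have hleL : ∀ k, LinearMap.range (y k) ≤ ⨆ k, LinearMap.range (y k) :=
    fun k => le_iSup (fun k => LinearMap.range (y k)) k
  generalize (⨆ k, LinearMap.range (y k)) = L at *
  -- countable generation
  have hcg : ∃ S : Set L, S.Countable ∧ Submodule.span R S = ⊤ := by
    let f : (Σ k, Fin (n k)) → L := fun q => ⟨y q.1 (Finsupp.single q.2 1), hleL _ ⟨_, rfl⟩⟩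
    refine ⟨Set.range f, Set.countable_range f, ?_⟩
    rw [eq_top_iff]
    rintro ⟨x, hx⟩ -
    obtain ⟨k, v, rfl⟩ := hmemL x hx
    have : (⟨y k v, hx⟩ : L) = (y k).codRestrict L (fun v => hleL k ⟨v, rfl⟩) v := rfl
    rw [this]
    clear this hx
    induction v using Finsupp.induction_linear with
    | zero => rw [map_zero]; exact zero_mem _
    | add a b ha hb => rw [map_add]; exact add_mem ha hb
    | single i r =>
      rw [← Finsupp.smul_single_one, map_smul]
      exact Submodule.smul_mem _ _ (Submodule.subset_span ⟨⟨k, i⟩, rfl⟩)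
  obtain ⟨ι, Q, hQ, ⟨φ⟩⟩ := hb L hcg hLp
  have hNL : N ≤ L := hN0.trans (hleL 0)
  have hN' : (N.comap L.subtype).FG := by
    apply Submodule.fg_of_fg_map_injective L.subtype L.injective_subtype
    rwa [Submodule.map_comap_subtype, inf_eq_right.2 hNL]
  obtain ⟨e, he, hefg, heN⟩ := exists_finite_idempotent Q hQ φ _ hN'
  let P : Submodule R M := (LinearMap.range e).map L.subtype
  have hPfg : P.FG := hefg.map _
  have hPproj : Module.Projective R P := by
    have h1 : Module.Projective R (LinearMap.range e) := by
      refine Module.Projective.of_split (M := L) (LinearMap.range e).subtype e.rangeRestrict ?_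
      refine LinearMap.ext fun ⟨_, v, rfl⟩ => Subtype.ext (he v)
    exact Module.Projective.of_equiv
      (Submodule.equivMapOfInjective L.subtype L.injective_subtype (LinearMap.range e))
  have hPL : P ≤ L := Submodule.map_subtype_le L _
  let π : L →ₗ[R] P := (L.subtype ∘ₗ e).codRestrict P fun v => ⟨e v, ⟨v, rfl⟩, rfl⟩
  have hπ : ∀ v (hv : v ∈ P), π ⟨v, hPL hv⟩ = ⟨v, hv⟩ := by
    rintro _ ⟨_, ⟨w, rfl⟩, rfl⟩
    apply Subtype.ext
    exact congrArg (fun l : L => (l : M)) (he w)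
  refine ⟨P, ?_, hPfg, hPproj, ?_⟩
  · intro v hv
    exact ⟨⟨v, hNL hv⟩, ⟨⟨v, hNL hv⟩, heN _ hv⟩, rfl⟩
  intro P' hPP' hP'fg hP'proj
  obtain ⟨k, hk⟩ : ∃ k, P ≤ LinearMap.range (y k) := by
    have : ∀ s : Finset M, (s : Set M) ⊆ L → ∃ k, (s : Set M) ⊆ LinearMap.range (y k) := by
      intro s
      induction s using Finset.induction_on with
      | empty => intro _; exact ⟨0, by simp⟩
      | insert a s _ ih =>
        intro h
        rw [Finset.coe_insert, Set.insert_subset_iff] at h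
        obtain ⟨k, hk⟩ := ih h.2
        obtain ⟨l, hl⟩ := hmemL a h.1
        refine ⟨max k l, ?_⟩
        rw [Finset.coe_insert, Set.insert_subset_iff]
        exact ⟨hmono (le_max_right k l) hl, hk.trans (hmono (le_max_left k l))⟩
    obtain ⟨s, hs⟩ := hPfg
    obtain ⟨k, hk⟩ := this s (Submodule.span_le.1 (hs.le.trans hPL))
    exact ⟨k, hs ▸ Submodule.span_le.2 hk⟩
  obtain ⟨s, hs⟩ := Module.projective_lifting_property (y k).rangeRestrict
    (Submodule.inclusion hk) (LinearMap.surjective_rangeRestrict _)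
  have hs' : ∀ v, y k (s v) = v := fun v => congrArg Subtype.val (LinearMap.congr_fun hs v)
  have : Module.Finite R P := Module.Finite.of_fg hPfg
  have : Module.Finite R P' := Module.Finite.of_fg hP'fg
  obtain ⟨q, p, hp⟩ := Module.Finite.exists_fin' R P'
  obtain ⟨s₁, hs₁⟩ := Module.projective_lifting_property p LinearMap.id hp
  have hs₁' : ∀ v, p (s₁ v) = v := fun v => LinearMap.congr_fun hs₁ v
  let x : ((Fin (n (k + 1)) →₀ R) × (Fin q → R)) →ₗ[R] M := (y (k + 1)).coprod (P'.subtype ∘ₗ p)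
  let f : P →ₗ[R] ((Fin (n (k + 1)) →₀ R) × (Fin q → R)) :=
    (A k ∘ₗ s).prod (-(s₁ ∘ₗ Submodule.inclusion hPP'))
  have hxf : x ∘ₗ f = 0 := by
    refine LinearMap.ext fun v => ?_
    simp [x, f, hy', hs', hs₁']
  obtain ⟨m, a, z, hxa, haf⟩ := Module.Flat.exists_factorization_of_comp_eq_zero_of_free hxf
  obtain ⟨C, hC⟩ := hst k m (a ∘ₗ LinearMap.inl R _ _) z (by
    rw [← LinearMap.comp_assoc, ← hxa]
    simp [x])
  refine ⟨π ∘ₗ (y (k + 1)).codRestrict L (fun v => hleL _ ⟨v, rfl⟩) ∘ₗ C ∘ₗ a ∘ₗ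
    LinearMap.inr R _ _ ∘ₗ s₁, fun v => ?_⟩
  have h1 : a (0, s₁ (Submodule.inclusion hPP' v)) = a (A k (s v), 0) := by
    have h2 := LinearMap.congr_fun haf v
    have h3 : f v = (A k (s v), 0) - (0, s₁ (Submodule.inclusion hPP' v)) := by
      simp [f]
    rw [LinearMap.comp_apply, h3, map_sub, LinearMap.zero_apply, sub_eq_zero] at h2
    exact h2.symm
  have h4 : C (a (A k (s v), 0)) = A k (s v) := LinearMap.congr_fun hC (s v)
  simp only [LinearMap.comp_apply, LinearMap.inr_apply]
  rw [h1, h4]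
  have h5 : (y (k + 1)).codRestrict L (fun v => hleL _ ⟨v, rfl⟩) (A k (s v)) = ⟨v, hPL v.2⟩ :=
    Subtype.ext ((hy' _ _).trans (hs' v))
  rw [h5, hπ]

theorem admissible_of_K {R : Type u} [CommRing R]
    (hb : ∀ (M : Type u) [AddCommGroup M] [Module R M],
        (∃ S : Set M, S.Countable ∧ Submodule.span R S = ⊤) → Module.Projective R M →
        ∃ (ι : Type u) (Q : ι → ModuleCat.{u} R),
          (∀ i, Module.Finite R (Q i)) ∧ Nonempty (M ≃ₗ[R] ⨁ i, (Q i : Type u)))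
    {M : Type u} [AddCommGroup M] [Module R M] [Module.Flat R M] (hK : KProp R M) :
    IsAdmissiblyIndProjective R M := by
  refine ⟨{
    I := {P : Submodule R M // GoodSub R P}
    ord := inferInstance
    directed := ⟨fun P P' => ?_⟩
    P := fun P => P.1
    mono := fun _ _ h => h
    covers := fun x => ?_
    fg := fun P => P.2.1
    proj := fun P => P.2.2.1
    splits := fun P P' h => P.2.2.2 P'.1 h P'.2.1 P'.2.2.1 }⟩
  · obtain ⟨P'', h1, h2⟩ := exists_good hb hK (P.1 ⊔ P'.1) (P.2.1.sup P'.2.1)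
    exact ⟨⟨P'', h2⟩, le_sup_left.trans h1, le_sup_right.trans h1⟩
  · obtain ⟨P, h1, h2⟩ := exists_good hb hK (Submodule.span R {x}) (Submodule.fg_span_singleton x)
    exact ⟨⟨P, h2⟩, h1 (Submodule.mem_span_singleton_self x)⟩

/-- **Lemma B.1(3)**: for a commutative ring `R`, the following are equivalent:
(a) every flat Mittag-Leffler `R`-module is admissibly Ind-projective;
(b) every countably generated projective `R`-module is isomorphic to a direct sum of
finitely generated `R`-modules;
(c) the class of admissibly Ind-projective `R`-modules is closed under direct summands. -/
theorem flatMittagLeffler_eq_indProjective_iff_projectives_decompose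
    (R : Type u) [CommRing R] :
    ((∀ (M : Type u) [AddCommGroup M] [Module R M],
        IsFlatMittagLeffler R M → IsAdmissiblyIndProjective R M) ↔
      (∀ (M : Type u) [AddCommGroup M] [Module R M],
        (∃ S : Set M, S.Countable ∧ Submodule.span R S = ⊤) → Module.Projective R M →
        ∃ (ι : Type u) (Q : ι → ModuleCat.{u} R),
          (∀ i, Module.Finite R (Q i)) ∧ Nonempty (M ≃ₗ[R] ⨁ i, (Q i : Type u)))) ∧
    ((∀ (M : Type u) [AddCommGroup M] [Module R M],
        (∃ S : Set M, S.Countable ∧ Submodule.span R S = ⊤) → Module.Projective R M →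
        ∃ (ι : Type u) (Q : ι → ModuleCat.{u} R),
          (∀ i, Module.Finite R (Q i)) ∧ Nonempty (M ≃ₗ[R] ⨁ i, (Q i : Type u))) ↔
      (∀ (M N : Type u) [AddCommGroup M] [Module R M] [AddCommGroup N] [Module R N],
        IsAdmissiblyIndProjective R (M × N) → IsAdmissiblyIndProjective R M)) := by
  refine ⟨⟨fun ha M _ _ hS hM => ?_, fun hb M _ _ hM => ?_⟩,
    ⟨fun hb M N _ _ _ _ h => ?_, fun hc M _ _ hS hM => ?_⟩⟩
  · exact decompose_of_admissible hS (ha M ⟨inferInstance, projective_ML⟩)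
  · have := hM.1
    exact admissible_of_K hb (K_of_ML hM.2)
  · obtain ⟨D⟩ := h
    have hfl := admissible_flat D
    have : Module.Flat R M := Module.Flat.of_retract (LinearMap.inl R M N) (LinearMap.fst R M N)
      (LinearMap.fst_comp_inl R M N)
    have : Module.Flat R N := Module.Flat.of_retract (LinearMap.inr R M N) (LinearMap.snd R M N)
      (LinearMap.snd_comp_inr R M N)
    exact admissible_of_K hb (K_of_prod (admissible_K D))
  · obtain ⟨N, ⟨e⟩⟩ := cg_projective_summand hS hM
    exact decompose_of_admissible hS (hc M N (admissible_of_equiv e (admissible_free R)))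
end

section
/- Let R be a commutative ring and M a flat Mittag-Leffler R-module. Then the external direct sum M ⊕ R^{(ℕ)} of M with a countably generated free module is admissibly Ind-projective. (Proposition B.2 of the appendix by Štovíček and Trlifaj.) -/
universe u

open TensorProduct DirectSum

namespace FlatML

/-- A finite tuple in `N` which is universally (purely) independent. -/
def PureTuple (R : Type u) [CommRing R] {N : Type u} [AddCommGroup N] [Module R N]
    {ι : Type} [Fintype ι] (b : ι → N) : Prop :=
  ∀ (Q : Type u) [AddCommGroup Q] [Module R Q] (t : ι → Q),
    ∑ i, b i ⊗ₜ[R] t i = 0 → ∀ i, t i = 0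

variable {R : Type u} [CommRing R]

/-- Factorization of matrices from inclusion of kernels with arbitrary coefficients. -/
theorem exists_factor {ι κ l : Type} [Fintype ι] [Fintype κ] [DecidableEq ι]
    (a : Matrix ι κ R) (c : Matrix ι l R)
    (H : ∀ (Q : Type u) [AddCommGroup Q] [Module R Q] (t : ι → Q),
      (∀ k, ∑ i, a i k • t i = 0) → ∀ j, ∑ i, c i j • t i = 0) :
    ∃ s : Matrix κ l R, c = a * s := by
  let S : Submodule R (ι → R) := Submodule.span R (Set.range fun k => fun i => a i k)
  have key : ∀ v : ι → R, ∑ i, v i • S.mkQ (Pi.single i 1) = S.mkQ v := by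
    intro v
    rw [pi_eq_sum_univ' v]
    simp only [map_sum, map_smul]
    refine Finset.sum_congr rfl fun i _ => ?_
    congr 1
    simp [Pi.single_apply]
  have h := H ((ι → R) ⧸ S) (fun i => S.mkQ (Pi.single i 1)) (by
    intro k
    rw [key (fun i => a i k)]
    exact (Submodule.Quotient.mk_eq_zero S).2 (Submodule.subset_span ⟨k, rfl⟩))
  have h2 : ∀ j, ∃ s : κ → R, ∑ k, s k • (fun i => a i k) = fun i => c i j := by
    intro j
    have := h j
    rw [key (fun i => c i j)] at this
    exact Submodule.mem_span_range_iff_exists_fun R |>.1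
      ((Submodule.Quotient.mk_eq_zero S).1 this)
  choose s hs using h2
  refine ⟨fun k j => s j k, ?_⟩
  ext i j
  have := congrFun (hs j) i
  simp only [Finset.sum_apply, Pi.smul_apply, smul_eq_mul] at this
  exact this.symm.trans (Finset.sum_congr rfl fun k _ => mul_comm _ _)

variable {M : Type u} [AddCommGroup M] [Module R M]

theorem sum_tmul_factor {ι κ : Type} [Fintype ι] [Fintype κ] (m : ι → M) (y : κ → M)
    (a : Matrix ι κ R) (h : ∀ i, m i = ∑ j, a i j • y j)
    (Q : Type u) [AddCommGroup Q] [Module R Q] (t : ι → Q) :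
    ∑ i, m i ⊗ₜ[R] t i = ∑ j, y j ⊗ₜ[R] (∑ i, a i j • t i) := by
  simp_rw [h, TensorProduct.sum_tmul, TensorProduct.tmul_sum, TensorProduct.smul_tmul]
  exact Finset.sum_comm

/-- The domination property. -/
theorem exists_dominating (hM : IsFlatMittagLeffler R M) {p : ℕ} (m : Fin p → M) :
    ∃ (k : ℕ) (a : Matrix (Fin p) (Fin k) R) (y : Fin k → M),
      (∀ i, m i = ∑ j, a i j • y j) ∧
      ∀ (Q : Type u) [AddCommGroup Q] [Module R Q] (t : Fin p → Q),
        ∑ i, m i ⊗ₜ[R] t i = 0 → ∀ j, ∑ i, a i j • t i = 0 := by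
  obtain ⟨hflat, hml⟩ := hM
  by_contra hcon
  let I : Type u := {z : (Σ k : ℕ, Matrix (Fin p) (Fin k) R × (Fin k → M)) //
    ∀ i, m i = ∑ j, z.2.1 i j • z.2.2 j}
  have hbad : ∀ z : I, ∃ (Q : Type u) (_ : AddCommGroup Q) (_ : Module R Q) (t : Fin p → Q),
      ∑ i, m i ⊗ₜ[R] t i = 0 ∧ ∃ j, ∑ i, z.1.2.1 i j • t i ≠ 0 := by
    intro z
    by_contra hz
    apply hcon
    refine ⟨z.1.1, z.1.2.1, z.1.2.2, z.2, ?_⟩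
    intro Q _ _ t ht j
    by_contra hj
    exact hz ⟨Q, _, _, t, ht, j, hj⟩
  choose Q ig im t ht hj using hbad
  have h0 : ∑ i, m i ⊗ₜ[R] (fun z => t z i : ∀ z, Q z) = 0 := by
    apply hml I Q
    rw [map_zero]
    funext z
    simp only [tensorPiMap, LinearMap.pi_apply, map_sum, LinearMap.lTensor_tmul,
      LinearMap.proj_apply, Pi.zero_apply]
    exact ht z
  have h1 : ∑ i, (fun z => t z i : ∀ z, Q z) ⊗ₜ[R] m i = 0 := by
    have := congrArg (TensorProduct.comm R M (∀ z, Q z)) h0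
    simpa using this
  obtain ⟨k, a, y, hy, ha⟩ :=
    TensorProduct.vanishesTrivially_of_sum_tmul_eq_zero_of_rTensor_injective R
      (Module.Flat.rTensor_preserves_injective_linearMap _ (Submodule.injective_subtype _)) h1
  obtain ⟨j, hjz⟩ := hj ⟨⟨k, a, y⟩, hy⟩
  apply hjz
  have := congrFun (ha j) ⟨⟨k, a, y⟩, hy⟩
  simpa using this

theorem functional_sum {N : Type u} [AddCommGroup N] [Module R N] {ι : Type} [Fintype ι]
    (b : ι → N) (φ : N →ₗ[R] R) (Q : Type u) [AddCommGroup Q] [Module R Q] (t : ι → Q)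
    (h : ∑ i, b i ⊗ₜ[R] t i = 0) : ∑ i, φ (b i) • t i = 0 := by
  have := congrArg ((TensorProduct.lid R Q).toLinearMap ∘ₗ φ.rTensor Q) h
  simpa using this

theorem PureTuple.linearIndependent {N : Type u} [AddCommGroup N] [Module R N] {ι : Type}
    [Fintype ι] {b : ι → N} (hb : PureTuple R b) : LinearIndependent R b := by
  rw [Fintype.linearIndependent_iff]
  intro g hg
  apply hb R g
  apply (TensorProduct.rid R N).injective
  simpa using hg

/-- Every f.g. submodule of `M × R^{(ℕ)}` lies in the span of a pure tuple. -/
theorem exists_pureTuple (hM : IsFlatMittagLeffler R M) (S : Submodule R (M × (ℕ →₀ R)))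
    (hS : S.FG) : ∃ (ι : Type) (_ : Fintype ι) (b : ι → M × (ℕ →₀ R)),
      PureTuple R b ∧ S ≤ Submodule.span R (Set.range b) := by
  classical
  obtain ⟨p, x, rfl⟩ := Submodule.fg_iff_exists_fin_generating_family.1 hS
  obtain ⟨q, a, y, hay, hat⟩ := exists_dominating hM (fun i => (x i).1)
  obtain ⟨k, c, w, hcw, hct⟩ := exists_dominating hM y
  obtain ⟨s, hs⟩ := exists_factor (a * c) a (by
    intro Q _ _ t ht
    apply hat Q t
    rw [sum_tmul_factor _ w (a * c) _ Q t]
    · simp [ht]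
    · intro i
      rw [hay i]
      simp_rw [hcw, Finset.smul_sum, Matrix.mul_apply, Finset.sum_smul, mul_smul]
      exact Finset.sum_comm)
  obtain ⟨n, hn⟩ : ∃ n : ℕ, ∀ i, ∀ e ∈ (x i).2.support, e < n := by
    refine ⟨(Finset.univ.biUnion fun i => (x i).2.support).sup id + 1, fun i e he => ?_⟩
    refine Nat.lt_succ_of_le (Finset.le_sup (f := id) ?_)
    exact Finset.mem_biUnion.2 ⟨i, Finset.mem_univ _, he⟩
  let h : Matrix (Fin q) (Fin q) R := 1 - c * s
  have hah : a * h = 0 := by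
    simp only [h, Matrix.mul_sub, Matrix.mul_one,
      ← Matrix.mul_assoc]
    rw [← hs, sub_self]
  let b : Fin q ⊕ Fin n → M × (ℕ →₀ R) := Sum.elim
    (fun j => (y j, ∑ l, h j l • Finsupp.single (n + (l : ℕ)) (1 : R)))
    (fun i => (0, Finsupp.single (i : ℕ) (1 : R)))
  refine ⟨Fin q ⊕ Fin n, inferInstance, b, ?_, ?_⟩
  · intro Q _ _ t ht
    have e1 : ∑ j, y j ⊗ₜ[R] t (Sum.inl j) = 0 := by
      have := congrArg ((LinearMap.fst R M (ℕ →₀ R)).rTensor Q) ht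
      simpa [b, Fintype.sum_sum_type] using this
    have e2 := hct Q _ e1
    have e3 : ∀ l, t (Sum.inl l) = 0 := by
      intro l
      have := functional_sum b (Finsupp.lapply (n + (l : ℕ)) ∘ₗ LinearMap.snd R M (ℕ →₀ R)) Q t ht
      have aux : ∀ i : Fin n, (Finsupp.single (i : ℕ) (1 : R)) (n + (l : ℕ)) = 0 := by
        intro i
        exact Finsupp.single_eq_of_ne (by omega)
      simp only [b, Fintype.sum_sum_type, LinearMap.comp_apply, LinearMap.snd_apply,
        Sum.elim_inl, Sum.elim_inr, Finsupp.lapply_apply, aux, zero_smul,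
        Finset.sum_const_zero, add_zero, Finsupp.finsetSum_apply, Finsupp.smul_apply,
        Finsupp.single_apply, Nat.add_left_cancel_iff, Fin.val_inj, smul_eq_mul, mul_ite,
        mul_one, mul_zero, Finset.sum_ite_eq', Finset.mem_univ, if_true] at this
      have e4 : ∑ j, (c * s) j l • t (Sum.inl j) = 0 := by
        simp_rw [Matrix.mul_apply, Finset.sum_smul]
        rw [Finset.sum_comm]
        refine Finset.sum_eq_zero fun k' _ => ?_
        simp_rw [mul_comm (c _ _), mul_smul, ← Finset.smul_sum]
        rw [e2 k', smul_zero]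
      simpa [h, Matrix.sub_apply, sub_smul, Finset.sum_sub_distrib, e4, Matrix.one_apply]
        using this
    rintro (l | i)
    · exact e3 l
    · have := functional_sum b (Finsupp.lapply (i : ℕ) ∘ₗ LinearMap.snd R M (ℕ →₀ R)) Q t ht
      simpa [b, Fintype.sum_sum_type, e3, Finsupp.single_apply, Fin.val_inj] using this
  · rw [Submodule.span_le]
    rintro _ ⟨i, rfl⟩
    have hx : x i = ∑ j, a i j • b (Sum.inl j)
        + ∑ e : Fin n, (x i).2 (e : ℕ) • b (Sum.inr e) := by
      refine Prod.ext ?_ ?_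
      · simp [b, Prod.fst_sum, hay i]
      · have z : ∑ j, a i j • ∑ l, h j l • Finsupp.single (n + (l : ℕ)) (1 : R) = 0 := by
          simp_rw [Finset.smul_sum, smul_smul]
          rw [Finset.sum_comm]
          refine Finset.sum_eq_zero fun l _ => ?_
          rw [← Finset.sum_smul, ← Matrix.mul_apply, hah]
          simp
        simp only [b, Prod.snd_add, Prod.snd_sum, Prod.smul_snd, Sum.elim_inl, Sum.elim_inr]
        rw [z, zero_add, Fin.sum_univ_eq_sum_range
          (fun e => (x i).2 e • Finsupp.single e (1 : R)) n]
        conv_lhs => rw [← Finsupp.sum_single (x i).2]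
        rw [Finsupp.sum_of_support_subset (s := Finset.range n) _
          (fun e he => Finset.mem_range.2 (hn i e he)) _ (by simp)]
        simp
    rw [hx]
    exact add_mem (sum_mem fun j _ => Submodule.smul_mem _ _ (Submodule.subset_span ⟨_, rfl⟩))
      (sum_mem fun j _ => Submodule.smul_mem _ _ (Submodule.subset_span ⟨_, rfl⟩))

theorem exists_retraction {N : Type u} [AddCommGroup N] [Module R N] {ι κ : Type}
    [Fintype ι] [Fintype κ] {b : ι → N} {b' : κ → N} (hb : PureTuple R b) (hb' : PureTuple R b')
    {P P' : Submodule R N} (hP : Submodule.span R (Set.range b) = P)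
    (hP' : Submodule.span R (Set.range b') = P') (hle : P ≤ P') :
    ∃ r : P' →ₗ[R] P, ∀ v : P, r (Submodule.inclusion hle v) = v := by
  classical
  subst hP hP'
  have h1 : ∀ i, ∃ a : κ → R, ∑ j, a j • b' j = b i := fun i =>
    (Submodule.mem_span_range_iff_exists_fun R).1 (hle (Submodule.subset_span ⟨i, rfl⟩))
  choose a ha using h1
  obtain ⟨s, hs⟩ := exists_factor (R := R) (a : Matrix ι κ R) (1 : Matrix ι ι R) (by
    intro Q _ _ t ht
    have h0 : ∀ i, t i = 0 := by
      apply hb Q t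
      rw [sum_tmul_factor b b' a (fun i => (ha i).symm) Q t]
      refine Finset.sum_eq_zero fun j _ => ?_
      rw [ht j, TensorProduct.tmul_zero]
    simp [h0])
  let B := Module.Basis.span hb.linearIndependent
  let B' := Module.Basis.span hb'.linearIndependent
  let r := B'.constr R (fun j => ∑ l, s j l • B l)
  refine ⟨r, ?_⟩
  have : r ∘ₗ Submodule.inclusion hle = LinearMap.id := by
    refine B.ext fun i => ?_
    have e : Submodule.inclusion hle (B i) = ∑ j, a i j • B' j := by
      apply Subtype.ext
      simp [B, B', Module.Basis.span_apply, ha]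
    rw [LinearMap.comp_apply, e, map_sum]
    simp_rw [map_smul, r, Module.Basis.constr_basis, Finset.smul_sum, smul_smul]
    rw [Finset.sum_comm]
    simp_rw [← Finset.sum_smul]
    have h2 : ∀ l, ∑ j, a i j * s j l = (1 : Matrix ι ι R) i l := by
      intro l
      rw [hs]
      rfl
    simp [h2, Matrix.one_apply]
  intro v
  exact LinearMap.congr_fun this v

end FlatML

/-- **Proposition B.2**: if `M` is a flat Mittag-Leffler `R`-module, then
`M ⊕ R^{(ℕ)}` is admissibly Ind-projective. -/
theorem isAdmissiblyIndProjective_prod_free_of_flatMittagLeffler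
    (R : Type u) [CommRing R] (M : Type u) [AddCommGroup M] [Module R M]
    (hM : IsFlatMittagLeffler R M) :
    IsAdmissiblyIndProjective R (M × (ℕ →₀ R)) := by
  let N := M × (ℕ →₀ R)
  refine ⟨{
    I := {P : Submodule R N // ∃ (ι : Type) (_ : Fintype ι) (b : ι → N),
      FlatML.PureTuple R b ∧ Submodule.span R (Set.range b) = P}
    directed := ⟨?_⟩
    P := Subtype.val
    mono := fun _ _ h => h
    covers := ?_
    fg := ?_
    proj := ?_
    splits := ?_ }⟩
  · rintro ⟨_, ι, _, b, hb, rfl⟩ ⟨_, κ, _, c, hc, rfl⟩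
    obtain ⟨l, _, d, hd, hle⟩ := FlatML.exists_pureTuple hM
      (Submodule.span R (Set.range b) ⊔ Submodule.span R (Set.range c))
      ((Submodule.fg_span (Set.finite_range b)).sup (Submodule.fg_span (Set.finite_range c)))
    exact ⟨⟨_, l, _, d, hd, rfl⟩, le_sup_left.trans hle, le_sup_right.trans hle⟩
  · intro x
    obtain ⟨l, _, d, hd, hle⟩ := FlatML.exists_pureTuple hM
      (Submodule.span R {x}) (Submodule.fg_span_singleton x)
    exact ⟨⟨_, l, _, d, hd, rfl⟩, hle (Submodule.mem_span_singleton_self x)⟩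
  · rintro ⟨_, ι, _, b, hb, rfl⟩
    exact Submodule.fg_span (Set.finite_range b)
  · rintro ⟨_, ι, _, b, hb, rfl⟩
    exact Module.Projective.of_basis (Module.Basis.span hb.linearIndependent)
  · rintro ⟨P, ι, _, b, hb, hP⟩ ⟨P', κ, _, c, hc, hP'⟩ h
    exact FlatML.exists_retraction hb hc hP hP' h
end

section
/- Let R be a commutative ring and M an R-module. Then M is flat Mittag-Leffler if and only if M is isomorphic to a direct summand of an admissibly Ind-projective R-module. (Object-level form of Proposition 3.32: the category FM(R) of flat Mittag-Leffler modules is equivalent to the idempotent completion FM(P_f(R)) of Indᵃ(P_f(R)).) -/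
universe u

open TensorProduct DirectSum

section Helpers

theorem vanishes_of_flat {R : Type u} [CommRing R] {M N : Type u} [AddCommGroup M] [Module R M]
    [AddCommGroup N] [Module R N] [Module.Flat R M] {n : ℕ} (q : Fin n → N) (x : Fin n → M)
    (h : ∑ i, (q i) ⊗ₜ[R] (x i) = 0) : TensorProduct.VanishesTrivially R q x :=
  TensorProduct.vanishesTrivially_of_sum_tmul_eq_zero_of_rTensor_injective R
    (Module.Flat.rTensor_preserves_injective_linearMap _ (Submodule.subtype_injective _)) h

set_option maxHeartbeats 1000000 in
/-- Stabilisation property of flat Mittag-Leffler modules. -/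
theorem fml_stab {R : Type u} [CommRing R] {M : Type u} [AddCommGroup M] [Module R M]
    (h : IsFlatMittagLeffler R M) {n : ℕ} (x : (Fin n → R) →ₗ[R] M) :
    ∃ (m : ℕ) (w : (Fin n → R) →ₗ[R] (Fin m → R)) (y : (Fin m → R) →ₗ[R] M),
      y ∘ₗ w = x ∧ ∀ (k : ℕ) (v : (Fin n → R) →ₗ[R] (Fin k → R)) (z : (Fin k → R) →ₗ[R] M),
        z ∘ₗ v = x → ∃ r : (Fin k → R) →ₗ[R] (Fin m → R), r ∘ₗ v = w := by
  obtain ⟨hf, hml⟩ := h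
  let ι : Type u := {p : Σ k : ℕ, ((Fin n → R) →ₗ[R] (Fin k → R)) × ((Fin k → R) →ₗ[R] M) //
    p.2.2 ∘ₗ p.2.1 = x}
  let Q : ι → Type u := fun p =>
    Module.Dual R (Fin n → R) ⧸ LinearMap.range (p.1.2.1.dualMap)
  letI iA : ∀ p, AddCommGroup (Q p) := fun p =>
    Submodule.Quotient.addCommGroup (LinearMap.range (p.1.2.1.dualMap))
  letI iM : ∀ p, Module R (Q p) := fun p =>
    Submodule.Quotient.module (LinearMap.range (p.1.2.1.dualMap))
  let q : Fin n → (∀ p, Q p) := fun i p => Submodule.Quotient.mk (LinearMap.proj i)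
  let e : Fin n → (Fin n → R) := fun i => Pi.single i 1
  have hz : ∑ i, (x (e i)) ⊗ₜ[R] (q i) = 0 := by
    apply hml ι Q
    rw [map_zero]
    funext p
    obtain ⟨⟨k, v, z⟩, hp⟩ := p
    simp only [tensorPiMap, LinearMap.pi_apply, map_sum, LinearMap.lTensor_tmul,
      LinearMap.proj_apply, Pi.zero_apply]
    rw [← (TensorProduct.comm R _ _).map_eq_zero_iff]
    simp only [map_sum, TensorProduct.comm_tmul]
    apply TensorProduct.sum_tmul_eq_zero_of_vanishesTrivially
    refine ⟨k, fun i j => v (e i) j, fun j => z (Pi.single j 1), ?_, ?_⟩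
    · intro i
      have : x (e i) = z (v (e i)) := by
        have := LinearMap.congr_fun hp (e i)
        exact this.symm
      change x (e i) = ∑ j, v (e i) j • z (Pi.single j 1)
      rw [this]
      conv_lhs => rw [pi_eq_sum_univ' (v (e i))]
      simp [map_sum]
    · intro j
      have : ∑ i, v (e i) j • (LinearMap.proj i : (Fin n → R) →ₗ[R] R)
          = v.dualMap (LinearMap.proj j) := by
        apply LinearMap.pi_ext'
        intro i
        ext
        simp [e, Pi.single_apply]
      change ∑ i, v (e i) j • (Submodule.mkQ (LinearMap.range v.dualMap)
        (LinearMap.proj i : (Fin n → R) →ₗ[R] R)) = 0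
      simp_rw [← map_smul]
      rw [← map_sum, this]
      simp
  have hz' : ∑ i, (q i) ⊗ₜ[R] (x (e i)) = 0 := by
    have := congrArg (TensorProduct.comm R _ _) hz
    simpa [map_sum] using this
  obtain ⟨m, a, y, hy, ha⟩ :=
    vanishes_of_flat (R := R) (M := M) (N := ∀ p, Q p) q (fun i => x (e i)) hz'
  refine ⟨m, LinearMap.pi fun j => ∑ i, a i j • (LinearMap.proj i : (Fin n → R) →ₗ[R] R),
    Fintype.linearCombination R y, ?_, ?_⟩
  · apply LinearMap.pi_ext'
    intro i
    ext
    have := hy i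
    simp only [e] at this
    simp [Fintype.linearCombination_apply, Pi.single_apply, this]
  · intro k v z hvz
    have hk : ∀ j, ∃ φ : (Fin k → R) →ₗ[R] R,
        φ ∘ₗ v = ∑ i, a i j • (LinearMap.proj i : (Fin n → R) →ₗ[R] R) := by
      intro j
      have h1 := congrFun (ha j) ⟨⟨k, v, z⟩, hvz⟩
      rw [Finset.sum_apply] at h1
      change ∑ i, a i j • (Submodule.mkQ (LinearMap.range v.dualMap)
        (LinearMap.proj i : (Fin n → R) →ₗ[R] R)) = 0 at h1
      simp_rw [← map_smul] at h1
      rw [← map_sum, Submodule.mkQ_apply, Submodule.Quotient.mk_eq_zero] at h1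
      obtain ⟨φ, hφ⟩ := h1
      exact ⟨φ, hφ⟩
    choose φ hφ using hk
    refine ⟨LinearMap.pi φ, ?_⟩
    apply LinearMap.ext
    intro p
    funext j
    exact LinearMap.congr_fun (hφ j) p

/-- `F` is a finitely generated projective submodule that splits off every finite free module
through which its inclusion factors. -/
def IsGoodSub (R : Type u) [CommRing R] {L : Type u} [AddCommGroup L] [Module R L]
    (F : Submodule R L) : Prop :=
  F.FG ∧ Module.Projective R F ∧
    ∀ (k : ℕ) (v : F →ₗ[R] (Fin k → R)) (g : (Fin k → R) →ₗ[R] L), g ∘ₗ v = F.subtype →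
      ∃ s : (Fin k → R) →ₗ[R] F, s ∘ₗ v = LinearMap.id

theorem isGoodSub_range {R : Type u} [CommRing R] {L : Type u} [AddCommGroup L] [Module R L]
    {A : Type u} [AddCommGroup A] [Module R A] [Module.Finite R A] [Module.Free R A]
    (f : A →ₗ[R] L) (hinj : Function.Injective f)
    (hs : ∀ (k : ℕ) (v : A →ₗ[R] (Fin k → R)) (g : (Fin k → R) →ₗ[R] L), g ∘ₗ v = f →
      ∃ s : (Fin k → R) →ₗ[R] A, s ∘ₗ v = LinearMap.id) :
    IsGoodSub R (LinearMap.range f) := by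
  let e : A ≃ₗ[R] LinearMap.range f := LinearEquiv.ofInjective f hinj
  refine ⟨?_, Module.Projective.of_equiv e, ?_⟩
  · rw [← Module.Finite.iff_fg]
    exact Module.Finite.equiv e
  · intro k v g hg
    obtain ⟨s, hs⟩ := hs k (v ∘ₗ e.toLinearMap) g (by
      ext a
      exact LinearMap.congr_fun hg (e a))
    refine ⟨e.toLinearMap ∘ₗ s, ?_⟩
    apply LinearMap.ext
    intro b
    obtain ⟨a, rfl⟩ := e.surjective b
    have := LinearMap.congr_fun hs a
    simp at this
    simp [this]

theorem IsGoodSub.splits {R : Type u} [CommRing R] {L : Type u} [AddCommGroup L] [Module R L]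
    {F G : Submodule R L} (hF : IsGoodSub R F) (hG : IsGoodSub R G) (h : F ≤ G) :
    ∃ r : G →ₗ[R] F, ∀ v : F, r (Submodule.inclusion h v) = v := by
  have := hG.2.1
  have : Module.Finite R G := Module.Finite.iff_fg.mpr hG.1
  obtain ⟨k, p, i, -, -, hpi⟩ := Module.Finite.exists_comp_eq_id_of_projective R G
  obtain ⟨s, hs⟩ := hF.2.2 k (i ∘ₗ Submodule.inclusion h) (G.subtype ∘ₗ p) (by
    ext v
    have := LinearMap.congr_fun hpi (Submodule.inclusion h v)
    simp at this
    simp [this])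
  exact ⟨s ∘ₗ i, fun v => LinearMap.congr_fun hs v⟩

theorem finsupp_room (R : Type u) [CommRing R] (p m : ℕ) (c : (Fin p → R) →ₗ[R] (ℕ →₀ R)) :
    ∃ (N : ℕ) (i : (Fin N →₀ R) →ₗ[R] (ℕ →₀ R)) (c' : (Fin p → R) →ₗ[R] (Fin N →₀ R))
      (j : (Fin m → R) →ₗ[R] (ℕ →₀ R)) (ρ : (ℕ →₀ R) →ₗ[R] (Fin N →₀ R))
      (σ : (ℕ →₀ R) →ₗ[R] (Fin m → R)),
      (∀ a, i (c' a) = c a) ∧ (∀ b, ρ (i b) = b) ∧ (∀ a, ρ (j a) = 0) ∧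
      (∀ b, σ (i b) = 0) ∧ (∀ a, σ (j a) = a) := by
  classical
  obtain ⟨N, hN⟩ : ∃ N : ℕ, ∀ a : Fin p, ∀ n ∈ (c (Pi.single a 1)).support, n < N := by
    obtain ⟨N, hN⟩ :=
      (Finset.univ.biUnion fun a : Fin p => (c (Pi.single a 1)).support).exists_nat_subset_range
    refine ⟨N, fun a n hn => ?_⟩
    exact Finset.mem_range.mp (hN (Finset.mem_biUnion.mpr ⟨a, Finset.mem_univ _, hn⟩))
  have hc : ∀ a n, N ≤ n → c a n = 0 := by
    intro a n hn
    rw [pi_eq_sum_univ' a]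
    simp only [map_sum, map_smul, Finsupp.coe_finsetSum, Finset.sum_apply, Finsupp.smul_apply]
    apply Finset.sum_eq_zero
    intro b _
    have : c (Pi.single b 1) n = 0 := by
      by_contra hne
      have := hN b n (Finsupp.mem_support_iff.mpr hne)
      omega
    rw [this, smul_zero]
  have i1 : Function.Injective (fun k : Fin N => (k : ℕ)) := Fin.val_injective
  have i2 : Function.Injective (fun k : Fin m => N + (k : ℕ)) := by
    intro a b hab
    simp at hab
    exact Fin.ext hab
  let E := Finsupp.linearEquivFunOnFinite R R (Fin m)
  refine ⟨N, Finsupp.lmapDomain R R (fun k : Fin N => (k : ℕ)),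
    Finsupp.lcomapDomain _ i1 ∘ₗ c,
    Finsupp.lmapDomain R R (fun k : Fin m => N + (k : ℕ)) ∘ₗ E.symm.toLinearMap,
    Finsupp.lcomapDomain _ i1, E.toLinearMap ∘ₗ Finsupp.lcomapDomain _ i2, ?_, ?_, ?_, ?_, ?_⟩
  · intro a
    ext n
    by_cases hn : n < N
    · have := Finsupp.mapDomain_apply i1 (Finsupp.lcomapDomain (R := R) _ i1 (c a)) ⟨n, hn⟩
      simpa using this
    · rw [hc a n (by omega)]
      apply Finsupp.mapDomain_of_notMem_range
      rintro ⟨k, hk⟩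
      have := k.2
      simp at hk
      omega
  · intro b
    exact Finsupp.leftInverse_lcomapDomain_mapDomain _ i1 b
  · intro a
    ext k
    simp only [LinearMap.comp_apply, Finsupp.lcomapDomain_apply, Finsupp.comapDomain_apply,
      Finsupp.lmapDomain_apply]
    apply Finsupp.mapDomain_of_notMem_range
    rintro ⟨l, hl⟩
    have := k.2
    simp at hl
    omega
  · intro b
    have : Finsupp.lcomapDomain (R := R) _ i2
        (Finsupp.lmapDomain R R (fun k : Fin N => (k : ℕ)) b) = 0 := by
      ext k
      simp only [Finsupp.lcomapDomain_apply, Finsupp.comapDomain_apply,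
        Finsupp.lmapDomain_apply]
      apply Finsupp.mapDomain_of_notMem_range
      rintro ⟨l, hl⟩
      have := l.2
      simp at hl
      omega
    simp only [LinearMap.comp_apply, this, map_zero]
  · intro a
    have := Finsupp.leftInverse_lcomapDomain_mapDomain (R := R) (M := R) _ i2 (E.symm a)
    simp only [LinearMap.comp_apply, Finsupp.lmapDomain_apply, this, LinearEquiv.coe_coe,
      LinearEquiv.apply_symm_apply]

theorem fml_cover {R : Type u} [CommRing R] {M : Type u} [AddCommGroup M] [Module R M]
    (h : IsFlatMittagLeffler R M) (K : Submodule R (M × (ℕ →₀ R))) (hK : K.FG) :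
    ∃ F : Submodule R (M × (ℕ →₀ R)), IsGoodSub R F ∧ K ≤ F := by
  obtain ⟨p, G, rfl⟩ := (Submodule.fg_iff_exists_fin_linearMap R _).mp hK
  let x := LinearMap.fst R M (ℕ →₀ R) ∘ₗ G
  let c := LinearMap.snd R M (ℕ →₀ R) ∘ₗ G
  obtain ⟨m, u0, y1, hy1, H1⟩ := fml_stab h x
  obtain ⟨m2, u1, y2, hy2, H2⟩ := fml_stab h y1
  obtain ⟨r, hr⟩ := H1 m2 (u1 ∘ₗ u0) y2 (by rw [← LinearMap.comp_assoc, hy2, hy1])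
  obtain ⟨N, i, c', j, ρ, σ, hic, hρi, hρj, hσi, hσj⟩ := finsupp_room R p m c
  let t : (Fin m → R) →ₗ[R] (Fin m → R) := LinearMap.id - r ∘ₗ u1
  have ht : ∀ a, t a = a - r (u1 a) := fun a => rfl
  let f : ((Fin m → R) × (Fin N →₀ R)) →ₗ[R] (M × (ℕ →₀ R)) :=
    LinearMap.prod (y1 ∘ₗ LinearMap.fst _ _ _)
      (i ∘ₗ LinearMap.snd _ _ _ + j ∘ₗ t ∘ₗ LinearMap.fst _ _ _)
  have hf : ∀ a b, f (a, b) = (y1 a, i b + j (t a)) := fun a b => rfl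
  have hflat := h.1
  refine ⟨LinearMap.range f, isGoodSub_range f ?_ ?_, ?_⟩
  · rw [injective_iff_map_eq_zero]
    rintro ⟨a, b⟩ hab
    rw [hf, Prod.mk_eq_zero] at hab
    obtain ⟨h1, h2⟩ := hab
    have hb := congrArg ρ h2
    have ha := congrArg σ h2
    simp only [map_add, hρi, hρj, hσi, hσj, map_zero, add_zero, zero_add] at hb ha
    obtain ⟨k, w, z, hzw, hwa⟩ := Module.Flat.exists_factorization_of_apply_eq_zero_of_free h1
    let E := Finsupp.linearEquivFunOnFinite R R (Fin k)
    obtain ⟨r', hr'⟩ := H2 k (E.toLinearMap ∘ₗ w) (z ∘ₗ E.symm.toLinearMap) (by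
      ext a
      simp [hzw])
    have h3 : u1 a = 0 := by
      rw [← hr']
      simp [hwa]
    rw [ht, h3, map_zero, sub_zero] at ha
    rw [ha, hb, Prod.mk_zero_zero]
  · intro k v g hg
    have hg' : ∀ q, g (v q) = f q := fun q => LinearMap.congr_fun hg q
    obtain ⟨r', hr'⟩ := H2 k (v ∘ₗ LinearMap.inl _ _ _) (LinearMap.fst _ _ _ ∘ₗ g) (by
      apply LinearMap.ext
      intro a
      change (g (v (a, 0))).1 = _
      rw [hg', hf])
    have hr'' : ∀ a, r' (v (a, 0)) = u1 a := fun a => LinearMap.congr_fun hr' a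
    let s2 := ρ ∘ₗ LinearMap.snd R M (ℕ →₀ R) ∘ₗ g
    have hs2 : ∀ a b, s2 (v (a, b)) = b := by
      intro a b
      change ρ (g (v (a, b))).2 = b
      rw [hg', hf]
      simp only [map_add, hρi, hρj, add_zero]
    let s1 := r ∘ₗ r' ∘ₗ (LinearMap.id - v ∘ₗ LinearMap.inr R (Fin m → R) (Fin N →₀ R) ∘ₗ s2)
      + σ ∘ₗ LinearMap.snd R M (ℕ →₀ R) ∘ₗ g
    have hs1 : ∀ a b, s1 (v (a, b)) = a := by
      intro a b
      change r (r' (v (a, b) - v (0, s2 (v (a, b))))) + σ (g (v (a, b))).2 = a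
      rw [hs2, hg', hf, ← map_sub]
      simp only [map_add, hσi, hσj, Prod.mk_sub_mk, sub_zero, sub_self, hr'', ht, zero_add]
      abel
    refine ⟨LinearMap.prod s1 s2, ?_⟩
    apply LinearMap.ext
    rintro ⟨a, b⟩
    change (s1 (v (a, b)), s2 (v (a, b))) = (a, b)
    rw [hs1, hs2]
  · rintro _ ⟨q, rfl⟩
    refine ⟨(u0 q, c' q), ?_⟩
    have h1 : t (u0 q) = 0 := by
      rw [ht, sub_eq_zero]
      exact (LinearMap.congr_fun hr q).symm
    rw [hf, h1, map_zero, add_zero, hic]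
    exact Prod.ext (LinearMap.congr_fun hy1 q) rfl

theorem fml_presentation {R : Type u} [CommRing R] {M : Type u} [AddCommGroup M] [Module R M]
    (h : IsFlatMittagLeffler R M) : IsAdmissiblyIndProjective R (M × (ℕ →₀ R)) := by
  refine ⟨{
    I := {F : Submodule R (M × (ℕ →₀ R)) // IsGoodSub R F}
    directed := ⟨fun F G => ?_⟩
    P := fun F => F.1
    mono := fun F G h => h
    covers := fun x => ?_
    fg := fun F => F.2.1
    proj := fun F => F.2.2.1
    splits := fun F G h => F.2.splits G.2 h }⟩
  · obtain ⟨H, hH, hle⟩ := fml_cover h (F.1 ⊔ G.1) (F.2.1.sup G.2.1)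
    exact ⟨⟨H, hH⟩, le_sup_left.trans hle, le_sup_right.trans hle⟩
  · obtain ⟨H, hH, hle⟩ := fml_cover h (Submodule.span R {x}) (Submodule.fg_span_singleton x)
    exact ⟨⟨H, hH⟩, hle (Submodule.mem_span_singleton_self x)⟩

theorem tensorPiMap_natural {R : Type u} [CommRing R] {M N : Type u} [AddCommGroup M] [Module R M]
    [AddCommGroup N] [Module R N] (f : M →ₗ[R] N)
    {ι : Type u} (Q : ι → Type u) [∀ i, AddCommGroup (Q i)] [∀ i, Module R (Q i)]
    (t : M ⊗[R] (∀ i, Q i)) (i : ι) :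
    tensorPiMap R N Q (f.rTensor _ t) i = f.rTensor _ (tensorPiMap R M Q t i) := by
  simp only [tensorPiMap, LinearMap.pi_apply]
  rw [← LinearMap.comp_apply, ← LinearMap.comp_apply, LinearMap.lTensor_comp_rTensor,
    LinearMap.rTensor_comp_lTensor]

theorem IsMittagLeffler.of_retract {R : Type u} [CommRing R] {M N : Type u} [AddCommGroup M]
    [Module R M] [AddCommGroup N] [Module R N] (h : IsMittagLeffler R N)
    (f : M →ₗ[R] N) (g : N →ₗ[R] M) (hgf : g ∘ₗ f = LinearMap.id) : IsMittagLeffler R M := by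
  intro ι Q _ _
  rw [injective_iff_map_eq_zero]
  intro t ht
  have h1 : f.rTensor _ t = 0 := by
    apply h ι Q
    funext i
    rw [tensorPiMap_natural, ht]
    simp
  have h2 := congrArg (g.rTensor _) h1
  rw [← LinearMap.comp_apply, ← LinearMap.rTensor_comp, hgf] at h2
  simpa using h2

theorem isMittagLeffler_pi {R : Type u} [CommRing R] (n : ℕ) : IsMittagLeffler R (Fin n → R) := by
  intro ι Q _ _
  rw [injective_iff_map_eq_zero]
  intro t ht
  -- each coordinate of `t` vanishes
  have h0 : ∀ a : Fin n, (LinearMap.proj a : (Fin n → R) →ₗ[R] R).rTensor _ t = 0 := by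
    intro a
    rw [← (TensorProduct.lid R _).map_eq_zero_iff]
    funext i
    have h1 : (LinearMap.proj a : (Fin n → R) →ₗ[R] R).rTensor (Q i) (tensorPiMap R _ Q t i) = 0 := by
      rw [ht]; simp
    rw [← tensorPiMap_natural] at h1
    have h2 : ∀ s : R ⊗[R] (∀ i, Q i),
        TensorProduct.lid R _ (tensorPiMap R R Q s i) = (TensorProduct.lid R _ s) i := by
      intro s
      induction s with
      | zero => simp
      | tmul a b => simp [tensorPiMap]
      | add a b ha hb => simp only [map_add, Pi.add_apply, ha, hb]
    rw [← h2, h1]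
    simp
  have h3 : (LinearMap.id : (Fin n → R) →ₗ[R] (Fin n → R)) =
      ∑ a, LinearMap.single R (fun _ => R) a ∘ₗ LinearMap.proj a := by
    apply LinearMap.ext
    intro x
    funext b
    simp [Pi.single_apply]
  have h4 : t = (LinearMap.id : (Fin n → R) →ₗ[R] (Fin n → R)).rTensor _ t := by simp
  rw [h4, h3]
  change LinearMap.rTensorHom _ (∑ a, _) t = 0
  rw [map_sum, LinearMap.sum_apply]
  apply Finset.sum_eq_zero
  intro a _
  rw [LinearMap.coe_rTensorHom, LinearMap.rTensor_comp, LinearMap.comp_apply, h0, map_zero]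

theorem isMittagLeffler_of_finite_projective {R : Type u} [CommRing R] {P : Type u}
    [AddCommGroup P] [Module R P] [Module.Finite R P] [Module.Projective R P] :
    IsMittagLeffler R P := by
  obtain ⟨k, p, i, -, -, hpi⟩ := Module.Finite.exists_comp_eq_id_of_projective R P
  exact (isMittagLeffler_pi k).of_retract i p hpi

namespace AdmissibleIndPresentation

variable {R : Type u} [CommRing R] {L : Type u} [AddCommGroup L] [Module R L]

theorem exists_le_s4 (A : AdmissibleIndPresentation R L) (S : Submodule R L) (hS : S.FG) :
    ∃ i, S ≤ A.P i := by
  let _ := A.ord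
  have := A.directed
  induction S, hS using Submodule.fg_induction with
  | singleton x =>
    obtain ⟨i, hi⟩ := A.covers x
    exact ⟨i, by simpa using hi⟩
  | sup S T _ _ h1 h2 =>
    obtain ⟨i, hi⟩ := h1
    obtain ⟨j, hj⟩ := h2
    obtain ⟨k, hk1, hk2⟩ := exists_ge_ge i j
    exact ⟨k, sup_le (hi.trans (A.mono hk1)) (hj.trans (A.mono hk2))⟩

theorem flat (A : AdmissibleIndPresentation R L) : Module.Flat R L := by
  apply Module.Flat.of_forall_exists_factorization
  intro l f x hx
  obtain ⟨i, hi⟩ := A.exists_le_s4 (LinearMap.range x) (Module.Finite.iff_fg.mp inferInstance)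
  have := A.proj i
  let x' : (Fin l →₀ R) →ₗ[R] A.P i := x.codRestrict _ (fun a => hi ⟨a, rfl⟩)
  have hx' : x' f = 0 := Subtype.ext hx
  obtain ⟨k, a, y, h1, h2⟩ := Module.Flat.exists_factorization_of_apply_eq_zero_of_free hx'
  refine ⟨k, a, (A.P i).subtype ∘ₗ y, ?_, h2⟩
  rw [LinearMap.comp_assoc, ← h1]
  rfl

theorem rTensor_injective (A : AdmissibleIndPresentation R L) (i : A.I)
    (Q : Type u) [AddCommGroup Q] [Module R Q] :
    Function.Injective ((A.P i).subtype.rTensor Q) := by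
  let _ := A.ord
  have := A.directed
  rw [injective_iff_map_eq_zero]
  intro t ht
  obtain ⟨S, hle, hS, h0⟩ := TensorProduct.eq_zero_of_fg_of_subtype_eq_zero (A.fg i) ht
  obtain ⟨j, hj⟩ := A.exists_le_s4 S hS
  obtain ⟨k, hk1, hk2⟩ := exists_ge_ge i j
  obtain ⟨r, hr⟩ := A.splits i k hk1
  have h1 : r ∘ₗ (Submodule.inclusion (hj.trans (A.mono hk2))) ∘ₗ Submodule.inclusion hle
      = LinearMap.id := LinearMap.ext hr
  have h2 : (LinearMap.id : A.P i →ₗ[R] A.P i).rTensor Q t = 0 := by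
    rw [← h1, LinearMap.rTensor_comp, LinearMap.rTensor_comp]
    simp only [LinearMap.comp_apply, h0, map_zero]
  simpa using h2

theorem isMittagLeffler (A : AdmissibleIndPresentation R L) : IsMittagLeffler R L := by
  intro ι Q _ _
  rw [injective_iff_map_eq_zero]
  intro t ht
  obtain ⟨S, hS, hle⟩ := TensorProduct.exists_finite_submodule_left_of_setFinite {t}
    (Set.finite_singleton t)
  obtain ⟨s, hs⟩ := hle rfl
  obtain ⟨i, hi⟩ := A.exists_le_s4 S (Module.Finite.iff_fg.mp hS)
  have := A.proj i
  have : Module.Finite R (A.P i) := Module.Finite.iff_fg.mpr (A.fg i)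
  let s' := (Submodule.inclusion hi).rTensor _ s
  have hs' : (A.P i).subtype.rTensor _ s' = t := by
    rw [← hs, ← LinearMap.comp_apply, ← LinearMap.rTensor_comp]
    rfl
  have h0 : s' = 0 := by
    apply isMittagLeffler_of_finite_projective (R := R) (P := A.P i) ι Q
    funext k
    apply A.rTensor_injective i
    rw [← tensorPiMap_natural, hs', ht]
    simp
  rw [← hs', h0, map_zero]

end AdmissibleIndPresentation

end Helpers

/-- **Proposition 3.32 (object level)**: an `R`-module `M` is flat Mittag-Leffler if and
only if it is isomorphic to a direct summand of an admissibly Ind-projective module. -/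
theorem isFlatMittagLeffler_iff_summand_of_indProjective
    (R : Type u) [CommRing R] (M : Type u) [AddCommGroup M] [Module R M] :
    IsFlatMittagLeffler R M ↔
      ∃ L N : ModuleCat.{u} R,
        IsAdmissiblyIndProjective R L ∧ Nonempty ((L : Type u) ≃ₗ[R] M × (N : Type u)) := by
  constructor
  · intro h
    exact ⟨ModuleCat.of R (M × (ℕ →₀ R)), ModuleCat.of R (ℕ →₀ R), fml_presentation h,
      ⟨LinearEquiv.refl R _⟩⟩
  · rintro ⟨L, N, ⟨A⟩, ⟨e⟩⟩
    have hfl := A.flat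
    have hgf : (LinearMap.fst R M N ∘ₗ e.toLinearMap) ∘ₗ (e.symm.toLinearMap ∘ₗ LinearMap.inl R M N)
        = LinearMap.id := by
      ext x
      simp
    exact ⟨Module.Flat.of_retract _ _ hgf, A.isMittagLeffler.of_retract _ _ hgf⟩
end

section
/- Let R be a commutative ring. Every admissibly Ind-projective R-module is flat and Mittag-Leffler. (Module-level content of Proposition 3.30: Indᵃ(P_f(R)) embeds as a full subcategory of the category of flat Mittag-Leffler R-modules.) -/
universe u

open TensorProduct DirectSum

namespace AdmissibleIndAux

open LinearMap

variable {R : Type u} [CommRing R] {M : Type u} [AddCommGroup M] [Module R M]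

/-- Every finitely generated submodule is contained in a member of the presentation. -/
theorem exists_le (A : AdmissibleIndPresentation R M) (J : Submodule R M) (hJ : J.FG) :
    ∃ i, J ≤ A.P i := by
  let := A.ord
  have := A.directed
  induction J, hJ using Submodule.fg_induction with
  | singleton x =>
    obtain ⟨i, hi⟩ := A.covers x
    exact ⟨i, by simpa [Submodule.span_le] using hi⟩
  | sup J₁ J₂ _ _ h₁ h₂ =>
    obtain ⟨i, hi⟩ := h₁
    obtain ⟨j, hj⟩ := h₂
    obtain ⟨k, hik, hjk⟩ := exists_ge_ge i j
    exact ⟨k, sup_le (hi.trans (A.mono hik)) (hj.trans (A.mono hjk))⟩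

/-- Every element of `M ⊗ N` comes from some `P i ⊗ N`. -/
theorem exists_lift (A : AdmissibleIndPresentation R M) {N : Type u} [AddCommGroup N]
    [Module R N] (x : M ⊗[R] N) :
    ∃ i, ∃ y : A.P i ⊗[R] N, rTensor N (A.P i).subtype y = x := by
  obtain ⟨J, hJ, y, rfl⟩ := TensorProduct.exists_of_fg x
  obtain ⟨i, hi⟩ := exists_le A J hJ
  refine ⟨i, rTensor N (Submodule.inclusion hi) y, ?_⟩
  rw [← rTensor_comp_apply]
  rfl

/-- The maps `P i ⊗ N → M ⊗ N` are injective. -/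
theorem rTensor_injective (A : AdmissibleIndPresentation R M) {N : Type u} [AddCommGroup N]
    [Module R N] (i : A.I) (y : A.P i ⊗[R] N)
    (hy : rTensor N (A.P i).subtype y = 0) : y = 0 := by
  let := A.ord
  have := A.directed
  obtain ⟨Q, hQ, hfg, h0⟩ := TensorProduct.eq_zero_of_fg_of_subtype_eq_zero (A.fg i) hy
  obtain ⟨j, hj⟩ := exists_le A Q hfg
  obtain ⟨k, hik, hjk⟩ := exists_ge_ge i j
  obtain ⟨r, hr⟩ := A.splits i k hik
  have hQk : Q ≤ A.P k := hj.trans (A.mono hjk)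
  have h : r ∘ₗ Submodule.inclusion hQk ∘ₗ Submodule.inclusion hQ = LinearMap.id :=
    LinearMap.ext fun v => hr v
  have h2 := LinearMap.congr_fun (congrArg (rTensor N) h) y
  rw [rTensor_comp_apply, rTensor_comp_apply, h0] at h2
  simpa using h2.symm

/-- Finitely generated projective modules are Mittag-Leffler. -/
theorem mittagLeffler_of_projective (P : Type u) [AddCommGroup P] [Module R P]
    [Module.Finite R P] [Module.Projective R P] : IsMittagLeffler R P := by
  intro ι Q _ _
  obtain ⟨n, f, g, -, -, hfg⟩ := Module.Finite.exists_comp_eq_id_of_projective R P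
  rw [injective_iff_map_eq_zero]
  intro x hx
  have hxi : ∀ i, lTensor P (proj i : (∀ i, Q i) →ₗ[R] Q i) x = 0 := fun i => congrFun hx i
  have hk : ∀ k : Fin n, rTensor (∀ i, Q i) (proj k ∘ₗ g) x = 0 := by
    intro k
    apply (TensorProduct.lid R (∀ i, Q i)).injective
    rw [map_zero]
    funext i
    have : (proj i ∘ₗ (TensorProduct.lid R (∀ i, Q i)).toLinearMap ∘ₗ
        rTensor (∀ i, Q i) (proj k ∘ₗ g)) =
        (TensorProduct.lid R (Q i)).toLinearMap ∘ₗ rTensor (Q i) (proj k ∘ₗ g) ∘ₗ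
          lTensor P (proj i : (∀ i, Q i) →ₗ[R] Q i) := by
      apply TensorProduct.ext'
      intro p q
      simp
    have h2 := LinearMap.congr_fun this x
    simp only [LinearMap.comp_apply, hxi, map_zero] at h2
    exact h2
  have hid : (LinearMap.id : P →ₗ[R] P) =
      ∑ k, (f ∘ₗ LinearMap.single R (fun _ => R) k) ∘ₗ (proj k ∘ₗ g) := by
    rw [← hfg]
    ext p
    simp only [LinearMap.comp_apply, LinearMap.sum_apply, LinearMap.proj_apply]
    rw [← map_sum]
    congr 1
    exact (Finset.univ_sum_single (g p)).symm
  have h3 : x = rTensor (∀ i, Q i) (LinearMap.id : P →ₗ[R] P) x := by simp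
  rw [h3, hid, ← coe_rTensorHom, map_sum, LinearMap.sum_apply]
  refine Finset.sum_eq_zero fun k _ => ?_
  rw [coe_rTensorHom, rTensor_comp_apply, hk, map_zero]

theorem flat (A : AdmissibleIndPresentation R M) : Module.Flat R M := by
  rw [Module.Flat.iff_lTensor_preserves_injective_linearMap]
  intro N N' _ _ _ _ φ hφ
  rw [injective_iff_map_eq_zero]
  intro x hx
  obtain ⟨i, y, rfl⟩ := exists_lift A x
  have := A.proj i
  have h1 : rTensor N' (A.P i).subtype (lTensor (A.P i) φ y) = 0 := by
    rw [← hx, ← LinearMap.comp_apply, ← LinearMap.comp_apply, rTensor_comp_lTensor,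
      lTensor_comp_rTensor]
  have h2 := rTensor_injective A i _ h1
  have h3 : y = 0 := (injective_iff_map_eq_zero _).1
    (Module.Flat.lTensor_preserves_injective_linearMap (M := A.P i) φ hφ) y h2
  rw [h3, map_zero]

theorem mittagLeffler (A : AdmissibleIndPresentation R M) : IsMittagLeffler R M := by
  intro ι Q _ _
  rw [injective_iff_map_eq_zero]
  intro x hx
  obtain ⟨i, y, rfl⟩ := exists_lift A x
  have := A.proj i
  have : Module.Finite R (A.P i) := Module.Finite.iff_fg.2 (A.fg i)
  have h : tensorPiMap R (A.P i) Q y = 0 := by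
    funext j
    apply rTensor_injective A i
    have hj : lTensor M (proj j : (∀ i, Q i) →ₗ[R] Q j)
      (rTensor (∀ i, Q i) (A.P i).subtype y) = 0 := congrFun hx j
    rw [← hj]
    change rTensor (Q j) (A.P i).subtype
      (lTensor (A.P i) (proj j : (∀ i, Q i) →ₗ[R] Q j) y) = _
    rw [← LinearMap.comp_apply, ← LinearMap.comp_apply, rTensor_comp_lTensor,
      lTensor_comp_rTensor]
  have h3 : y = 0 :=
    (injective_iff_map_eq_zero _).1 (mittagLeffler_of_projective (R := R) (A.P i) ι Q) y h
  rw [h3, map_zero]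

end AdmissibleIndAux

/-- **Proposition 3.30 (module level)**: every admissibly Ind-projective `R`-module
is flat and Mittag-Leffler. -/
theorem isFlatMittagLeffler_of_isAdmissiblyIndProjective
    (R : Type u) [CommRing R] (M : Type u) [AddCommGroup M] [Module R M]
    (hM : IsAdmissiblyIndProjective R M) :
    Module.Flat R M ∧ IsMittagLeffler R M := by
  obtain ⟨A⟩ := hM
  exact ⟨AdmissibleIndAux.flat A, AdmissibleIndAux.mittagLeffler A⟩
end

section
/- Let R be a commutative ring and M a countably generated R-module. Then M is projective if and only if M is flat and Mittag-Leffler. (Corollary 3.33, the Raynaud–Gruson theorem rederived in the paper.) -/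
universe u

open TensorProduct DirectSum

namespace FlatML

section

variable {R : Type u} [CommRing R] {M : Type u} [AddCommGroup M] [Module R M]

/-- A projective module is Mittag-Leffler. -/
theorem isMittagLeffler_of_projective [Module.Projective R M] : IsMittagLeffler R M := by
  intro ι Q _ _
  rw [injective_iff_map_eq_zero]
  intro z hz
  classical
  obtain ⟨s, hs⟩ := (Module.projective_def (R := R) (P := M)).1 inferInstance
  have h1 : ∀ φ : M →ₗ[R] R, TensorProduct.lid R _ (LinearMap.rTensor (∀ i, Q i) φ z) = 0 := by
    intro φ
    funext i
    have h2 : (LinearMap.proj i ∘ₗ (TensorProduct.lid R _).toLinearMap ∘ₗ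
        LinearMap.rTensor (∀ i, Q i) φ) =
        (TensorProduct.lid R _).toLinearMap ∘ₗ LinearMap.rTensor (Q i) φ ∘ₗ
          LinearMap.lTensor M (LinearMap.proj i) := by
      ext m q
      simp
    have h3 := LinearMap.congr_fun h2 z
    have h4 : LinearMap.lTensor M (LinearMap.proj i) z = 0 := congrFun hz i
    simp only [LinearMap.comp_apply, h4, map_zero] at h3
    simpa using h3
  have h5 : LinearMap.rTensor (∀ i, Q i) s z = 0 := by
    apply (TensorProduct.finsuppScalarLeft R (∀ i, Q i) M).injective
    rw [map_zero]
    ext1 m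
    rw [TensorProduct.finsuppScalarLeft_apply, ← LinearMap.comp_apply, ← LinearMap.rTensor_comp,
      h1]
    rfl
  have h6 : LinearMap.rTensor (∀ i, Q i) (Finsupp.linearCombination R id ∘ₗ s) z = z := by
    have : Finsupp.linearCombination R id ∘ₗ s = LinearMap.id := LinearMap.ext hs
    rw [this]; simp
  rw [LinearMap.rTensor_comp, LinearMap.comp_apply, h5, map_zero] at h6
  exact h6.symm

/-- Content submodules: over a flat Mittag-Leffler module every tensor has a smallest support. -/
theorem exists_content [Module.Flat R M] (hM : IsMittagLeffler R M)
    {N : Type u} [AddCommGroup N] [Module R N] (x : M ⊗[R] N) :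
    ∃ C : Submodule R N, x ∈ LinearMap.range (LinearMap.lTensor M C.subtype) ∧
      ∀ D : Submodule R N, x ∈ LinearMap.range (LinearMap.lTensor M D.subtype) → C ≤ D := by
  let I := {D : Submodule R N // x ∈ LinearMap.range (LinearMap.lTensor M D.subtype)}
  let g : N →ₗ[R] ∀ i : I, N ⧸ i.1 := LinearMap.pi fun i => i.1.mkQ
  refine ⟨LinearMap.ker g, ?_, ?_⟩
  · have hex : Function.Exact (LinearMap.ker g).subtype g := LinearMap.exact_subtype_ker_map g
    have hex' := Module.Flat.lTensor_exact M hex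
    refine (hex' x).1 ?_
    apply hM I (fun i => N ⧸ i.1)
    rw [map_zero]
    funext i
    change LinearMap.lTensor M (LinearMap.proj i) (LinearMap.lTensor M g x) = 0
    rw [← LinearMap.comp_apply, ← LinearMap.lTensor_comp]
    have : LinearMap.proj i ∘ₗ g = i.1.mkQ := rfl
    rw [this]
    exact ((lTensor_exact M (LinearMap.exact_subtype_mkQ i.1) i.1.mkQ_surjective) x).2 i.2
  · intro D hD v hv
    have := congrFun (LinearMap.mem_ker.1 hv) ⟨D, hD⟩
    exact (Submodule.Quotient.mk_eq_zero D).1 this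

theorem exists_fin_sum {A B : Type u} [AddCommGroup A] [Module R A] [AddCommGroup B] [Module R B]
    (z : A ⊗[R] B) : ∃ (k : ℕ) (y : Fin k → A) (c : Fin k → B), z = ∑ j, y j ⊗ₜ c j := by
  obtain ⟨S, hS⟩ := TensorProduct.exists_finset z
  refine ⟨S.card, fun j => (S.equivFin.symm j).1.1, fun j => (S.equivFin.symm j).1.2, ?_⟩
  rw [hS, ← Finset.sum_coe_sort]
  exact (Equiv.sum_comp S.equivFin.symm (fun i : S => i.1.1 ⊗ₜ[R] i.1.2)).symm

theorem exists_min_matrix [Module.Flat R M] (hM : IsMittagLeffler R M) {n : ℕ} (x : Fin n → M) :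
    ∃ (k : ℕ) (a : Fin n → Fin k → R) (y : Fin k → M), (∀ i, x i = ∑ j, a i j • y j) ∧
      ∀ (k' : ℕ) (a' : Fin n → Fin k' → R) (y' : Fin k' → M),
        (∀ i, x i = ∑ j, a' i j • y' j) →
        ∃ b : Fin k' → Fin k → R, ∀ i j, a i j = ∑ l, a' i l * b l j := by
  let X : M ⊗[R] (Fin n → R) := ∑ i, x i ⊗ₜ Pi.single i 1
  obtain ⟨C, ⟨z, hz⟩, hC⟩ := exists_content hM X
  obtain ⟨k, y, c, rfl⟩ := exists_fin_sum z
  refine ⟨k, fun i j => (c j).1 i, y, ?_, ?_⟩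
  · intro i
    have := congrArg (fun w => TensorProduct.rid R M (LinearMap.lTensor M (LinearMap.proj i) w)) hz
    simp only [map_sum, LinearMap.lTensor_tmul, X, TensorProduct.rid_tmul] at this
    simpa [Pi.single_apply, ite_smul] using this.symm
  · intro k' a' y' h
    have hX : X = ∑ l, y' l ⊗ₜ[R] (fun i => a' i l) := by
      simp only [X, h, TensorProduct.sum_tmul]
      rw [Finset.sum_comm]
      refine Finset.sum_congr rfl fun l _ => ?_
      simp only [TensorProduct.smul_tmul, ← TensorProduct.tmul_sum]
      congr 1
      funext i
      simp [Pi.single_apply]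
    have hle := hC (Submodule.span R (Set.range fun l i => a' i l)) (by
      rw [hX]
      refine Submodule.sum_mem _ fun l _ => ?_
      exact ⟨y' l ⊗ₜ ⟨_, Submodule.subset_span ⟨l, rfl⟩⟩, rfl⟩)
    have hb : ∀ j, ∃ b : Fin k' → R, ∑ l, b l • (fun i => a' i l) = (c j).1 := fun j =>
      (Submodule.mem_span_range_iff_exists_fun R).1 (hle (c j).2)
    choose b hb using hb
    refine ⟨fun l j => b j l, fun i j => ?_⟩
    change (c j).1 i = ∑ l, a' i l * b j l
    rw [← hb j]
    simp [mul_comm]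

/-- `a` is a minimal factor of `y`. -/
def IsMinFactor {n k : ℕ} (a : (Fin n →₀ R) →ₗ[R] (Fin k →₀ R)) (y : (Fin n →₀ R) →ₗ[R] M) :
    Prop :=
  ∀ (k' : ℕ) (a' : (Fin n →₀ R) →ₗ[R] (Fin k' →₀ R)) (y' : (Fin k' →₀ R) →ₗ[R] M),
    y = y' ∘ₗ a' → ∃ b : (Fin k' →₀ R) →ₗ[R] (Fin k →₀ R), a = b ∘ₗ a'

theorem exists_min [Module.Flat R M] (hM : IsMittagLeffler R M) {n : ℕ}
    (y : (Fin n →₀ R) →ₗ[R] M) :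
    ∃ (k : ℕ) (a : (Fin n →₀ R) →ₗ[R] (Fin k →₀ R)) (y₁ : (Fin k →₀ R) →ₗ[R] M),
      y = y₁ ∘ₗ a ∧ IsMinFactor a y := by
  obtain ⟨k, a, y₁, h1, h2⟩ := exists_min_matrix hM (fun i => y (Finsupp.single i 1))
  refine ⟨k, Finsupp.linearCombination R (fun i => Finsupp.equivFunOnFinite.symm (a i)),
    Finsupp.linearCombination R y₁, ?_, ?_⟩
  · apply Finsupp.basisSingleOne.ext
    intro i
    rw [Finsupp.coe_basisSingleOne, LinearMap.comp_apply, Finsupp.linearCombination_single, one_smul]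
    simpa [Finsupp.linearCombination_apply, Finsupp.sum_fintype] using h1 i
  · intro k' a' y' h
    obtain ⟨b, hb⟩ := h2 k' (fun i l => a' (Finsupp.single i 1) l)
      (fun l => y' (Finsupp.single l 1)) (by
        intro i
        rw [h]
        simp only [LinearMap.comp_apply, ← map_smul, ← map_sum]
        congr 1
        simp [Finsupp.smul_single, Finsupp.univ_sum_single])
    refine ⟨Finsupp.linearCombination R (fun i => Finsupp.equivFunOnFinite.symm (b i)), ?_⟩
    apply Finsupp.basisSingleOne.ext
    intro i
    ext j
    rw [Finsupp.coe_basisSingleOne, LinearMap.comp_apply, Finsupp.linearCombination_single, one_smul]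
    simpa [Finsupp.linearCombination_apply, Finsupp.sum_fintype, Finsupp.finsetSum_apply]
      using hb i j

theorem exists_extend {n : ℕ} (y : (Fin n →₀ R) →ₗ[R] M) (m : M) :
    ∃ (k : ℕ) (c : (Fin n →₀ R) →ₗ[R] (Fin k →₀ R)) (y' : (Fin k →₀ R) →ₗ[R] M),
      y' ∘ₗ c = y ∧ m ∈ LinearMap.range y' := by
  have e := ((Module.Free.chooseBasis R ((Fin n →₀ R) × R)).reindex (Fintype.equivFin _)).repr
  refine ⟨_, e.toLinearMap ∘ₗ LinearMap.inl R _ _,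
    (y.coprod (LinearMap.toSpanSingleton R M m)) ∘ₗ e.symm.toLinearMap, ?_, ⟨e (0, 1), ?_⟩⟩
  · ext; simp
  · simp

/-- Partial sections of `p`, described by their graphs. -/
def Good {L : Type u} [AddCommGroup L] [Module R L] (p : L →ₗ[R] M) (Γ : Submodule R (M × L)) :
    Prop :=
  ∃ (n k : ℕ) (a : (Fin n →₀ R) →ₗ[R] (Fin k →₀ R)) (t : (Fin k →₀ R) →ₗ[R] L),
    IsMinFactor a (p ∘ₗ t ∘ₗ a) ∧ Γ = LinearMap.range ((p ∘ₗ t ∘ₗ a).prod (t ∘ₗ a))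

variable {L : Type u} [AddCommGroup L] [Module R L] {p : L →ₗ[R] M}

theorem good_init : ∃ Γ, Good p Γ :=
  ⟨_, 0, 0, 0, 0, fun _ _ _ _ => ⟨0, by simp⟩, rfl⟩

theorem Good.eq_zero [Module.Flat R M] {Γ : Submodule R (M × L)} (h : Good p Γ) {z : M × L}
    (hz : z ∈ Γ) (h0 : z.1 = 0) : z.2 = 0 := by
  obtain ⟨n, k, a, t, hmin, rfl⟩ := h
  obtain ⟨v, rfl⟩ := hz
  obtain ⟨k', a', y', h1, h2⟩ :=
    Module.Flat.exists_factorization_of_apply_eq_zero_of_free (x := p ∘ₗ t ∘ₗ a) (f := v) h0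
  obtain ⟨b, hb⟩ := hmin k' a' y' h1
  have : a v = 0 := by rw [hb, LinearMap.comp_apply, h2, map_zero]
  simp [this]

theorem Good.apply_eq {Γ : Submodule R (M × L)} (h : Good p Γ) {z : M × L}
    (hz : z ∈ Γ) : p z.2 = z.1 := by
  obtain ⟨n, k, a, t, hmin, rfl⟩ := h
  obtain ⟨v, rfl⟩ := hz
  rfl

theorem Good.step [Module.Flat R M] (hM : IsMittagLeffler R M) (hp : Function.Surjective p)
    {Γ : Submodule R (M × L)} (h : Good p Γ) (m : M) :
    ∃ Γ', Good p Γ' ∧ Γ ≤ Γ' ∧ ∃ l, (m, l) ∈ Γ' := by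
  obtain ⟨n, k, a, t, hmin, rfl⟩ := h
  obtain ⟨k', c, y', hc, ⟨w, hw⟩⟩ := exists_extend (p ∘ₗ t) m
  obtain ⟨k'', a', y'', hy', hmin'⟩ := exists_min hM y'
  obtain ⟨t', ht'⟩ := Module.projective_lifting_property p y'' hp
  obtain ⟨b, hb⟩ := hmin k'' (a' ∘ₗ c ∘ₗ a) y'' (by
    rw [← LinearMap.comp_assoc, ← hc, hy']; rfl)
  let h : (Fin k →₀ R) →ₗ[R] L := t' ∘ₗ a' ∘ₗ c - t
  have hph : p ∘ₗ h = 0 := by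
    rw [LinearMap.comp_sub, ← hc, hy', ← ht']
    exact sub_self _
  have hpt : p ∘ₗ (t' - h ∘ₗ b) = y'' := by
    rw [LinearMap.comp_sub, ← LinearMap.comp_assoc, hph, ht']; simp
  have hy'2 : p ∘ₗ (t' - h ∘ₗ b) ∘ₗ a' = y' := by
    rw [← LinearMap.comp_assoc, hpt, hy']
  refine ⟨_, ⟨k', k'', a', t' - h ∘ₗ b, ?_, rfl⟩, ?_, ?_⟩
  · rw [hy'2]; exact hmin'
  · rintro _ ⟨v, rfl⟩
    refine ⟨c (a v), ?_⟩
    rw [hy'2]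
    have hbv : b (a' (c (a v))) = a v := (LinearMap.congr_fun hb v).symm
    refine Prod.ext ?_ ?_
    · exact LinearMap.congr_fun hc (a v)
    · simp [hbv, h]
  · refine ⟨((t' - h ∘ₗ b) ∘ₗ a') w, w, ?_⟩
    rw [hy'2]
    exact Prod.ext hw rfl

theorem exists_section [Module.Flat R M] (hM : IsMittagLeffler R M) (hp : Function.Surjective p)
    (g : ℕ → M) (hg : Submodule.span R (Set.range g) = ⊤) :
    ∃ s : M →ₗ[R] L, p ∘ₗ s = LinearMap.id := by
  choose F hF1 hF2 hF3 using fun (Γ : {Γ : Submodule R (M × L) // Good p Γ}) (m : M) =>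
    Γ.2.step hM hp m
  obtain ⟨Γ₀, h₀⟩ := good_init (p := p)
  let S : ℕ → {Γ : Submodule R (M × L) // Good p Γ} := fun n =>
    Nat.rec ⟨Γ₀, h₀⟩ (fun i Γ => ⟨F Γ (g i), hF1 Γ (g i)⟩) n
  have hS : Monotone fun n => (S n).1 := monotone_nat_of_le_succ fun n => hF2 (S n) (g n)
  let Γ : Submodule R (M × L) := ⨆ n, (S n).1
  have hΓ : ∀ z, z ∈ Γ → ∃ n, z ∈ (S n).1 := fun z hz =>
    (Submodule.mem_iSup_of_directed _ hS.directed_le).1 hz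
  let q : Γ →ₗ[R] M := LinearMap.fst R M L ∘ₗ Γ.subtype
  have hinj : Function.Injective q := by
    rw [injective_iff_map_eq_zero]
    rintro ⟨z, hz⟩ h0
    obtain ⟨n, hn⟩ := hΓ z hz
    exact Subtype.ext (Prod.ext h0 ((S n).2.eq_zero hn h0))
  have hsurj : Function.Surjective q := by
    rw [← LinearMap.range_eq_top, eq_top_iff, ← hg, Submodule.span_le]
    rintro _ ⟨n, rfl⟩
    obtain ⟨l, hl⟩ := hF3 (S n) (g n)
    exact ⟨⟨(g n, l), (le_iSup (fun n => (S n).1) (n + 1)) hl⟩, rfl⟩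
  let e := LinearEquiv.ofBijective q ⟨hinj, hsurj⟩
  refine ⟨LinearMap.snd R M L ∘ₗ Γ.subtype ∘ₗ e.symm.toLinearMap, ?_⟩
  ext m
  obtain ⟨z, rfl⟩ := e.surjective m
  obtain ⟨n, hn⟩ := hΓ z.1 z.2
  have := (S n).2.apply_eq hn
  simp only [LinearMap.comp_apply, LinearEquiv.coe_coe, LinearEquiv.symm_apply_apply]
  exact this

end

end FlatML

/-- **Corollary 3.33 (Raynaud–Gruson)**: a countably generated `R`-module is projective
if and only if it is flat and Mittag-Leffler. -/
theorem projective_iff_flat_mittagLeffler_of_countablyGenerated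
    (R : Type u) [CommRing R] (M : Type u) [AddCommGroup M] [Module R M]
    (hcg : ∃ S : Set M, S.Countable ∧ Submodule.span R S = ⊤) :
    Module.Projective R M ↔ (Module.Flat R M ∧ IsMittagLeffler R M) := by
  constructor
  · intro h
    exact ⟨inferInstance, FlatML.isMittagLeffler_of_projective⟩
  · rintro ⟨hflat, hML⟩
    obtain ⟨S, hS, hspan⟩ := hcg
    obtain ⟨g, hg⟩ := (hS.insert (0 : M)).exists_eq_range ⟨0, Set.mem_insert _ _⟩
    have hg' : Submodule.span R (Set.range g) = ⊤ := by
      rw [← hg, Submodule.span_insert_zero, hspan]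
    obtain ⟨s, hs⟩ := FlatML.exists_section hML
      (Finsupp.linearCombination_id_surjective R M) g hg'
    exact Module.Projective.of_split s _ hs
end

section
/- Let R be a commutative ring and M an R-module. Then M is projective if and only if M is isomorphic to a direct sum of countably generated R-modules and M is flat and Mittag-Leffler. (Theorem 3.34, the Kaplansky–Raynaud–Gruson theorem.) -/
universe u

open TensorProduct DirectSum

section KaplanskyPart
variable {R : Type u} [CommRing R] {M : Type u} [AddCommGroup M] [Module R M]

theorem aux_countable_closure (s : M →ₗ[R] (M →₀ R)) (x : M) :
    ∃ C : Set M, C.Countable ∧ x ∈ C ∧ ∀ y ∈ C, s y ∈ Finsupp.supported R R C := by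
  let f : Set M → Set M := fun A => ⋃ y ∈ A, ((s y).support : Set M)
  let c : ℕ → Set M := fun n => f^[n] {x}
  have hc : ∀ n, (c n).Countable := by
    intro n
    induction n with
    | zero => exact Set.countable_singleton x
    | succ n ih =>
      have : c (n + 1) = f (c n) := Function.iterate_succ_apply' f n _
      rw [this]
      exact ih.biUnion fun y _ => (s y).support.countable_toSet
  refine ⟨⋃ n, c n, Set.countable_iUnion hc, Set.mem_iUnion.2 ⟨0, rfl⟩, ?_⟩
  intro y hy
  obtain ⟨n, hn⟩ := Set.mem_iUnion.1 hy
  rw [Finsupp.mem_supported]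
  intro z hz
  refine Set.mem_iUnion.2 ⟨n + 1, ?_⟩
  have : c (n + 1) = f (c n) := Function.iterate_succ_apply' f n _
  rw [this]
  exact Set.mem_biUnion hn hz

theorem aux_sSupIndep_insert {α : Type*} [CompleteLattice α] [IsModularLattice α]
    {s : Set α} (hs : sSupIndep s) {d : α} (hd : Disjoint (sSup s) d) :
    sSupIndep (insert d s) := by
  intro a ha
  by_cases had : a = d
  · subst had
    refine hd.symm.mono_right (sSup_le_sSup ?_)
    intro b hb
    exact hb.1.resolve_left hb.2
  · have has : a ∈ s := ha.resolve_left had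
    have h1 : Disjoint a (sSup (s \ {a})) := hs has
    have h2 : Disjoint (a ⊔ sSup (s \ {a})) d :=
      hd.mono_left (sup_le (le_sSup has) (sSup_le_sSup Set.sdiff_subset))
    refine (h1.disjoint_sup_right_of_disjoint_sup_left h2).mono_right ?_
    refine sSup_le ?_
    rintro b ⟨hb | hb, hba⟩
    · exact hb ▸ le_sup_right
    · exact le_sup_of_le_left (le_sSup ⟨hb, hba⟩)

/-- the approximating pairs in the proof of Kaplansky's theorem -/
def KapPair (s : M →ₗ[R] (M →₀ R)) (p : Set M × Set (Submodule R M)) : Prop :=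
  (∀ y ∈ p.1, s y ∈ Finsupp.supported R R p.1) ∧ sSupIndep p.2 ∧
  (∀ D ∈ p.2, ∃ T : Set M, T.Countable ∧ Submodule.span R T = D) ∧
  sSup p.2 = Submodule.span R p.1

theorem kap_extend (s : M →ₗ[R] (M →₀ R)) (hs : ∀ m, Finsupp.linearCombination R id (s m) = m)
    (p : Set M × Set (Submodule R M)) (hp : KapPair s p) (x : M) :
    ∃ q, KapPair s q ∧ p ≤ q ∧ x ∈ q.1 := by
  classical
  obtain ⟨S, 𝒟⟩ := p
  obtain ⟨hS, hI, hC, hsup⟩ := hp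
  simp only at hS hI hC hsup
  obtain ⟨C, hCc, hxC, hCs⟩ := aux_countable_closure s x
  let e : M →ₗ[R] M := Finsupp.linearCombination R id ∘ₗ
    (Finsupp.supported R R S).subtype ∘ₗ Finsupp.restrictDom R R S ∘ₗ s
  have he1 : ∀ m, e m ∈ Submodule.span R S := by
    intro m
    have := Finsupp.span_image_eq_map_linearCombination R (v := (id : M → M)) S
    rw [Set.image_id] at this
    rw [this]
    exact ⟨_, (Finsupp.restrictDom R R S (s m)).2, rfl⟩
  have he2 : ∀ m ∈ Submodule.span R S, e m = m := by
    intro m hm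
    have hle : Submodule.span R S ≤ (LinearMap.eqLocus e LinearMap.id) := by
      rw [Submodule.span_le]
      intro y hy
      have : ((Finsupp.restrictDom R R S (s y) : Finsupp.supported R R S) : M →₀ R) = s y := by
        rw [Finsupp.restrictDom_apply]
        exact (Finsupp.filter_eq_self_iff _ _).2 fun z hz =>
          (Finsupp.mem_supported R _).1 (hS y hy) (by simpa using hz)
      change e y = y
      simp only [e, LinearMap.comp_apply, Submodule.subtype_apply, this, hs]
    exact hle hm
  let D : Submodule R M := Submodule.span R ((fun y => y - e y) '' C)
  have hdisj : Disjoint (Submodule.span R S) D := by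
    rw [Submodule.disjoint_def]
    intro m hm hmD
    have hle : D ≤ LinearMap.ker e := by
      rw [Submodule.span_le]
      rintro _ ⟨y, hy, rfl⟩
      simp [he2 _ (he1 y)]
    have := hle hmD
    rw [LinearMap.mem_ker, he2 m hm] at this
    exact this
  refine ⟨(S ∪ C, insert D 𝒟), ⟨?_, ?_, ?_, ?_⟩, ⟨Set.subset_union_left, Set.subset_insert _ _⟩,
    Or.inr hxC⟩
  · rintro y (hy | hy)
    · exact Finsupp.supported_mono Set.subset_union_left (hS y hy)
    · exact Finsupp.supported_mono Set.subset_union_right (hCs y hy)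
  · exact aux_sSupIndep_insert hI (hsup ▸ hdisj)
  · rintro E (rfl | hE)
    · exact ⟨_, hCc.image _, rfl⟩
    · exact hC E hE
  · simp only [sSup_insert, hsup, Submodule.span_union]
    apply le_antisymm
    · refine sup_le (Submodule.span_le.2 ?_) le_sup_left
      rintro _ ⟨y, hy, rfl⟩
      exact sub_mem (Submodule.mem_sup_right (Submodule.subset_span hy))
        (Submodule.mem_sup_left (he1 y))
    · refine sup_le le_sup_right (Submodule.span_le.2 ?_)
      intro y hy
      have : y = (y - e y) + e y := by abel
      rw [this]
      exact add_mem (Submodule.mem_sup_left (Submodule.subset_span ⟨y, hy, rfl⟩))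
        (Submodule.mem_sup_right (he1 y))

theorem kaplansky [Module.Projective R M] :
    ∃ (ι : Type u) (Q : ι → ModuleCat.{u} R),
          (∀ i, ∃ S : Set (Q i : Type u), S.Countable ∧ Submodule.span R S = ⊤) ∧
          Nonempty (M ≃ₗ[R] ⨁ i, (Q i : Type u)) := by
  classical
  obtain ⟨s, hs⟩ := (Module.projective_def (R := R) (P := M)).1 inferInstance
  obtain ⟨p, hp⟩ := zorn_le₀ {p | KapPair s p} (by
    intro c hc hchain
    refine ⟨(⋃ p ∈ c, p.1, ⋃ p ∈ c, p.2), ⟨?_, ?_, ?_, ?_⟩, ?_⟩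
    · intro y hy
      simp only [Set.mem_iUnion] at hy
      obtain ⟨p, hpc, hy⟩ := hy
      exact Finsupp.supported_mono (Set.subset_biUnion_of_mem (u := fun p : Set M × Set (Submodule R M) => p.1) hpc) ((hc hpc).1 y hy)
    · simp only
      rw [Set.biUnion_eq_iUnion]
      refine sSupIndep_iUnion_of_directed ?_ fun i => (hc i.2).2.1
      intro a b
      rcases hchain.total a.2 b.2 with h | h
      · exact ⟨b, h.2, subset_rfl⟩
      · exact ⟨a, subset_rfl, h.2⟩
    · intro D hD
      simp only [Set.mem_iUnion] at hD
      obtain ⟨p, hpc, hD⟩ := hD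
      exact (hc hpc).2.2.1 D hD
    · simp only [sSup_iUnion, Submodule.span_iUnion]
      exact iSup_congr fun p => iSup_congr fun hpc => (hc hpc).2.2.2
    · intro p hpc
      exact ⟨Set.subset_biUnion_of_mem (u := fun p : Set M × Set (Submodule R M) => p.1) hpc,
        Set.subset_biUnion_of_mem (u := fun p : Set M × Set (Submodule R M) => p.2) hpc⟩)
  have hall : ∀ x, x ∈ p.1 := by
    intro x
    obtain ⟨q, hq, hpq, hx⟩ := kap_extend s hs p hp.1 x
    exact (hp.2 hq hpq).1 hx
  obtain ⟨-, hI, hC, hsup⟩ := hp.1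
  have htop : sSup p.2 = ⊤ := by
    rw [hsup, eq_top_iff]
    exact fun x _ => Submodule.subset_span (hall x)
  have hint : DirectSum.IsInternal (fun D : p.2 => (D : Submodule R M)) := by
    refine DirectSum.isInternal_submodule_of_iSupIndep_of_iSup_eq_top ((sSupIndep_iff _).1 hI) ?_
    rw [← sSup_eq_iSup', htop]
  refine ⟨p.2, fun D => ModuleCat.of R (D : Submodule R M), ?_, ⟨?_⟩⟩
  · intro D
    obtain ⟨T, hT, hTD⟩ := hC D D.2
    have hTD' : T ⊆ Set.range ((D : Submodule R M).subtype) := by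
      rw [Submodule.coe_subtype, Subtype.range_coe]
      exact fun t ht => hTD ▸ Submodule.subset_span ht
    refine ⟨(D : Submodule R M).subtype ⁻¹' T, hT.preimage Subtype.val_injective, ?_⟩
    apply Submodule.map_injective_of_injective (f := (D : Submodule R M).subtype) Subtype.val_injective
    rw [Submodule.map_span, Set.image_preimage_eq_of_subset hTD']
    simp [hTD]
  · exact (LinearEquiv.ofBijective (DirectSum.coeLinearMap fun D : p.2 => (D : Submodule R M)) hint).symm
end KaplanskyPart

section MittagLefflerPart
variable {R : Type u} [CommRing R] {M : Type u} [AddCommGroup M] [Module R M]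

theorem ml_of_retract {N : Type u} [AddCommGroup N] [Module R N] (hM : IsMittagLeffler R M)
    (i : N →ₗ[R] M) (r : M →ₗ[R] N) (h : ∀ x, r (i x) = x) : IsMittagLeffler R N := by
  intro ι Q _ _
  rw [injective_iff_map_eq_zero]
  intro z hz
  have h1 : LinearMap.rTensor (∀ j, Q j) i z = 0 := by
    apply (injective_iff_map_eq_zero _).1 (hM ι Q)
    funext j
    have h2 : LinearMap.lTensor N (LinearMap.proj j : (∀ j, Q j) →ₗ[R] Q j) z = 0 :=
      congrFun hz j
    change LinearMap.lTensor M (LinearMap.proj j : (∀ j, Q j) →ₗ[R] Q j)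
      (LinearMap.rTensor (∀ j, Q j) i z) = 0
    rw [← LinearMap.comp_apply, LinearMap.lTensor_comp_rTensor, ← LinearMap.rTensor_comp_lTensor,
      LinearMap.comp_apply, h2, map_zero]
  have h3 : LinearMap.rTensor (∀ j, Q j) r (LinearMap.rTensor (∀ j, Q j) i z) = z := by
    rw [← LinearMap.comp_apply, ← LinearMap.rTensor_comp,
      show r ∘ₗ i = LinearMap.id from LinearMap.ext h, LinearMap.rTensor_id, LinearMap.id_apply]
  rw [← h3, h1, map_zero]

theorem ml_free (X : Type u) : IsMittagLeffler R (X →₀ R) := by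
  classical
  intro ι Q _ _
  rw [injective_iff_map_eq_zero]
  intro z hz
  apply (TensorProduct.finsuppScalarLeft R (∀ j, Q j) X).injective
  rw [map_zero]
  ext x j
  rw [TensorProduct.finsuppScalarLeft_apply]
  have key : LinearMap.proj j ∘ₗ (TensorProduct.lid R (∀ j, Q j)).toLinearMap ∘ₗ
      (Finsupp.lapply x : (X →₀ R) →ₗ[R] R).rTensor (∀ j, Q j) =
      (TensorProduct.lid R (Q j)).toLinearMap ∘ₗ
      (Finsupp.lapply x : (X →₀ R) →ₗ[R] R).rTensor (Q j) ∘ₗ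
      LinearMap.lTensor (X →₀ R) (LinearMap.proj j : (∀ j, Q j) →ₗ[R] Q j) := by
    apply TensorProduct.ext'
    intro a b
    simp
  have h2 : LinearMap.lTensor (X →₀ R) (LinearMap.proj j : (∀ j, Q j) →ₗ[R] Q j) z = 0 :=
      congrFun hz j
  have := LinearMap.congr_fun key z
  simp only [LinearMap.comp_apply, h2, map_zero] at this
  exact this

theorem ml_of_projective [Module.Projective R M] : IsMittagLeffler R M := by
  obtain ⟨s, hs⟩ := (Module.projective_def (R := R) (P := M)).1 inferInstance
  exact ml_of_retract (ml_free M) s _ hs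

theorem key_matrix [Module.Flat R M] (hM : IsMittagLeffler R M) {n : ℕ} (x : Fin n → M) :
    ∃ (k : ℕ) (a : Fin n → Fin k → R) (y : Fin k → M), (∀ i, x i = ∑ j, a i j • y j) ∧
      ∀ (m : ℕ) (w : Fin n → Fin m → R) (z : Fin m → M), (∀ i, x i = ∑ l, w i l • z l) →
        ∃ t : Fin m → Fin k → R, ∀ i j, a i j = ∑ l, w i l * t l j := by
  classical
  let e : Fin n → (Fin n → R) := fun i => Pi.single i 1
  let I : Type u := {N : Submodule R (Fin n → R) //
    ∑ i, x i ⊗ₜ[R] (N.mkQ (e i)) = (0 : M ⊗[R] ((Fin n → R) ⧸ N))}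
  let Q : I → Type u := fun N => (Fin n → R) ⧸ N.1
  let q : Fin n → ∀ N, Q N := fun i N => N.1.mkQ (e i)
  have hz : ∑ i, x i ⊗ₜ[R] q i = (0 : M ⊗[R] (∀ N, Q N)) := by
    apply (injective_iff_map_eq_zero _).1 (hM I Q)
    funext N
    change LinearMap.lTensor M (LinearMap.proj N : (∀ N, Q N) →ₗ[R] Q N) _ = 0
    rw [map_sum]
    exact N.2
  have hz' : ∑ i, q i ⊗ₜ[R] x i = (0 : (∀ N, Q N) ⊗[R] M) := by
    have := congrArg (TensorProduct.comm R M (∀ N, Q N)) hz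
    simpa using this
  obtain ⟨k, a, y, hxy, ha⟩ :=
    TensorProduct.vanishesTrivially_of_sum_tmul_eq_zero_of_rTensor_injective R
      (Module.Flat.rTensor_preserves_injective_linearMap _ (Submodule.injective_subtype _)) hz'
  refine ⟨k, a, y, hxy, ?_⟩
  intro m w z hw
  let N : Submodule R (Fin n → R) := Submodule.span R (Set.range fun l i => w i l)
  have hN : ∑ i, x i ⊗ₜ[R] (N.mkQ (e i)) = (0 : M ⊗[R] ((Fin n → R) ⧸ N)) := by
    simp_rw [hw, TensorProduct.sum_tmul, TensorProduct.smul_tmul]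
    rw [Finset.sum_comm]
    simp_rw [← TensorProduct.tmul_sum, ← map_smul, ← map_sum]
    refine Finset.sum_eq_zero fun l _ => ?_
    have : N.mkQ (∑ i, w i l • e i) = 0 := by
      rw [Submodule.mkQ_apply, Submodule.Quotient.mk_eq_zero]
      refine Submodule.subset_span ⟨l, ?_⟩
      exact pi_eq_sum_univ' _
    rw [this, TensorProduct.tmul_zero]
  have hmem : ∀ j, (fun i => a i j) ∈ N := by
    intro j
    have h1 := congrFun (ha j) ⟨N, hN⟩
    simp only [Finset.sum_apply, Pi.smul_apply, q, Pi.zero_apply] at h1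
    have h2 : N.mkQ (∑ i, a i j • e i) = 0 := by
      rw [map_sum]
      simpa only [map_smul] using h1
    rw [Submodule.mkQ_apply, Submodule.Quotient.mk_eq_zero] at h2
    convert! h2 using 1
    exact pi_eq_sum_univ' _
  choose t ht using fun j => (Submodule.mem_span_range_iff_exists_fun R).1 (hmem j)
  refine ⟨fun l j => t j l, fun i j => ?_⟩
  have := congrFun (ht j) i
  simp only [Finset.sum_apply, Pi.smul_apply, smul_eq_mul] at this
  rw [← this]
  exact Finset.sum_congr rfl fun l _ => mul_comm _ _

theorem key_maps [Module.Flat R M] (hM : IsMittagLeffler R M) (A : Submodule R M) (hA : A.FG) :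
    ∃ (k : ℕ) (α : A →ₗ[R] (Fin k → R)) (b : (Fin k → R) →ₗ[R] M), (∀ x, b (α x) = x) ∧
      ∀ (m : ℕ) (c : A →ₗ[R] (Fin m → R)) (d : (Fin m → R) →ₗ[R] M), (∀ x, d (c x) = x) →
        ∃ t : (Fin m → R) →ₗ[R] (Fin k → R), ∀ x, t (c x) = α x := by
  classical
  obtain ⟨n, x, rfl⟩ := Submodule.fg_iff_exists_fin_generating_family.1 hA
  obtain ⟨k, a, y, hxy, hdom⟩ := key_matrix hM x
  let x' : Fin n → Submodule.span R (Set.range x) := fun i => ⟨x i, Submodule.subset_span ⟨i, rfl⟩⟩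
  let u : (Fin n → R) →ₗ[R] Submodule.span R (Set.range x) := Fintype.linearCombination R x'
  have hux : ∀ r, (u r : M) = ∑ i, r i • x i := by
    intro r
    simp [u, x', Fintype.linearCombination_apply]
  have hu : Function.Surjective u := by
    rintro ⟨m, hm⟩
    obtain ⟨r, hr⟩ := (Submodule.mem_span_range_iff_exists_fun R).1 hm
    exact ⟨r, Subtype.ext ((hux r).trans hr)⟩
  let v : (Fin n → R) →ₗ[R] (Fin k → R) := Fintype.linearCombination R a
  have hker : LinearMap.ker u ≤ LinearMap.ker v := by
    intro r hr
    rw [LinearMap.mem_ker] at hr ⊢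
    have h0 : ∑ i, r i • x i = 0 := by rw [← hux, hr]; rfl
    obtain ⟨m, w, z, hw, hrw⟩ := Module.Flat.isTrivialRelation_of_sum_smul_eq_zero h0
    obtain ⟨t, ht⟩ := hdom m w z hw
    funext j
    simp only [v, Fintype.linearCombination_apply, Finset.sum_apply, Pi.smul_apply, smul_eq_mul,
      Pi.zero_apply, ht, Finset.mul_sum]
    rw [Finset.sum_comm]
    refine Finset.sum_eq_zero fun l _ => ?_
    simp_rw [← mul_assoc]
    rw [← Finset.sum_mul, hrw, zero_mul]
  let α : Submodule.span R (Set.range x) →ₗ[R] (Fin k → R) :=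
    (LinearMap.ker u).liftQ v hker ∘ₗ (u.quotKerEquivOfSurjective hu).symm.toLinearMap
  have hα : ∀ r, α (u r) = v r := by
    intro r
    have : (u.quotKerEquivOfSurjective hu).symm (u r) = (LinearMap.ker u).mkQ r := by
      rw [LinearEquiv.symm_apply_eq]; rfl
    simp [α, this]
  let b : (Fin k → R) →ₗ[R] M := Fintype.linearCombination R y
  refine ⟨k, α, b, ?_, ?_⟩
  · intro m
    obtain ⟨r, rfl⟩ := hu m
    rw [hα, hux]
    simp_rw [hxy, v, Fintype.linearCombination_apply, map_sum, map_smul, b,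
      Fintype.linearCombination_apply]
  · intro m c d hcd
    obtain ⟨t, ht⟩ := hdom m (fun i => c (x' i)) (fun l => d (Pi.single l 1)) (by
      intro i
      have h1 := hcd (x' i)
      rw [pi_eq_sum_univ' (c (x' i)), map_sum] at h1
      simp only [map_smul] at h1
      exact h1.symm)
    refine ⟨Fintype.linearCombination R t, ?_⟩
    intro m
    obtain ⟨r, rfl⟩ := hu m
    rw [hα]
    simp only [u, v, Fintype.linearCombination_apply R x', Fintype.linearCombination_apply R a,
      map_sum, map_smul]
    refine Finset.sum_congr rfl fun i _ => ?_
    congr 1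
    funext j
    rw [ht, Fintype.linearCombination_apply]
    simp

theorem key_extend [Module.Flat R M] (hM : IsMittagLeffler R M) {P : Type u} [AddCommGroup P]
    [Module R P] (π : P →ₗ[R] M) (hπ : Function.Surjective π) (A : Submodule R M) (hA : A.FG) :
    ∃ B : Submodule R M, B.FG ∧ ∃ hAB : A ≤ B, ∀ C : Submodule R M, C.FG → ∀ hBC : B ≤ C,
      ∀ s : B →ₗ[R] P, (∀ x, π (s x) = x) → ∃ s' : C →ₗ[R] P, (∀ x, π (s' x) = x) ∧
        ∀ x : A, s' ⟨x, hBC (hAB x.2)⟩ = s ⟨x, hAB x.2⟩ := by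
  obtain ⟨k, α, b, hb, hdom⟩ := key_maps hM A hA
  have hAB : A ≤ LinearMap.range b := fun x hx => ⟨α ⟨x, hx⟩, hb ⟨x, hx⟩⟩
  refine ⟨LinearMap.range b, Module.Finite.fg_top.map b |> (by rw [LinearMap.range_eq_map]; exact ·),
    hAB, ?_⟩
  intro C hC hBC s hs
  obtain ⟨m, c, d, hcd, -⟩ := key_maps hM C hC
  obtain ⟨s0, hs0⟩ := Module.projective_lifting_property π d hπ
  obtain ⟨t, ht⟩ := hdom m (c ∘ₗ Submodule.inclusion (hAB.trans hBC)) d (fun x => hcd _)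
  let f : C →ₗ[R] P := s0 ∘ₗ c
  have hf : ∀ x, π (f x) = x := fun x => by
    rw [← hcd x, ← hs0]; rfl
  let g : (Fin k → R) →ₗ[R] P := s ∘ₗ b.rangeRestrict -
    f ∘ₗ Submodule.inclusion hBC ∘ₗ b.rangeRestrict
  have hg : ∀ r, π (g r) = 0 := by
    intro r
    simp [g, hs, hf]
  refine ⟨f + g ∘ₗ t ∘ₗ c, ?_, ?_⟩
  · intro x
    simp [hf, hg]
  · intro x
    have h1 : t (c ⟨x, hBC (hAB x.2)⟩) = α x := ht x
    have h2 : b.rangeRestrict (α x) = ⟨x, hAB x.2⟩ := Subtype.ext (hb x)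
    simp only [LinearMap.add_apply, LinearMap.comp_apply, h1, g, LinearMap.sub_apply, h2]
    have h3 : Submodule.inclusion hBC ⟨x, hAB x.2⟩ = ⟨x, hBC (hAB x.2)⟩ := rfl
    rw [h3]
    abel

theorem projective_of_countable [Module.Flat R M] (hM : IsMittagLeffler R M) (S : Set M)
    (hS : S.Countable) (hspan : Submodule.span R S = ⊤) : Module.Projective R M := by
  classical
  let π : (M →₀ R) →ₗ[R] M := Finsupp.linearCombination R id
  have hπ : Function.Surjective π := fun x => ⟨Finsupp.single x 1, by simp [π]⟩
  obtain ⟨x, hx⟩ := (hS.insert (0 : M)).exists_eq_range (Set.insert_nonempty _ _)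
  have hxspan : Submodule.span R (Set.range x) = ⊤ := by
    rw [← hx, eq_top_iff, ← hspan]
    exact Submodule.span_mono (Set.subset_insert _ _)
  choose B hBfg hAB hB using fun A : {A : Submodule R M // A.FG} => key_extend hM π hπ A.1 A.2
  obtain ⟨A, hA1⟩ : ∃ A : ℕ → {A : Submodule R M // A.FG},
      ∀ n, (A (n + 1)).1 = B (A n) ⊔ Submodule.span R {x n} :=
    ⟨fun n => Nat.rec ⟨⊥, Submodule.fg_bot⟩
      (fun n A => ⟨B A ⊔ Submodule.span R {x n}, (hBfg A).sup (Submodule.fg_span_singleton _)⟩) n,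
      fun n => rfl⟩
  have hBA : ∀ n, B (A n) ≤ (A (n + 1)).1 := fun n => hA1 n ▸ le_sup_left
  have hAA : ∀ n, (A n).1 ≤ (A (n + 1)).1 := fun n => (hAB (A n)).trans (hBA n)
  let T : ℕ → Type u := fun n => {s : (A (n + 1)).1 →ₗ[R] (M →₀ R) // ∀ y, π (s y) = y}
  have hstep : ∀ n (s : T n), ∃ s' : T (n + 1), ∀ y : (A n).1,
      s'.1 ⟨y, hAA _ (hAA _ y.2)⟩ = s.1 ⟨y, hAA _ y.2⟩ := by
    intro n s
    obtain ⟨s', h1, h2⟩ := hB (A n) (A (n + 2)).1 (A (n + 2)).2 ((hBA n).trans (hAA (n + 1)))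
      (s.1 ∘ₗ Submodule.inclusion (hBA n)) (fun y => s.2 _)
    exact ⟨⟨s', h1⟩, h2⟩
  have h0 : Nonempty (T 0) := by
    obtain ⟨m, c, d, hcd, -⟩ := key_maps hM (A 1).1 (A 1).2
    obtain ⟨s0, hs0⟩ := Module.projective_lifting_property π d hπ
    exact ⟨s0 ∘ₗ c, fun y => by rw [← hcd y, ← hs0]; rfl⟩
  choose step hstep using hstep
  obtain ⟨s, hs'⟩ : ∃ s : ∀ n, T n, ∀ n, s (n + 1) = step n (s n) :=
    ⟨fun n => Nat.rec h0.some (fun n s => step n s) n, fun n => rfl⟩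
  have hs : ∀ n (y : (A n).1), (s (n + 1)).1 ⟨y, hAA _ (hAA _ y.2)⟩ = (s n).1 ⟨y, hAA _ y.2⟩ :=
    fun n y => by rw [hs' n]; exact hstep n (s n) y
  let f : ℕ → (M →ₗ.[R] (M →₀ R)) := fun n =>
    ⟨(A n).1, (s n).1 ∘ₗ Submodule.inclusion (hAA n)⟩
  have hf : Monotone f := by
    refine monotone_nat_of_le_succ fun n => ⟨hAA n, ?_⟩
    rintro ⟨y, hy⟩ ⟨z, hz⟩ h
    obtain rfl : y = z := h
    exact (hs n ⟨y, hy⟩).symm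
  have hdir : DirectedOn (· ≤ ·) (Set.range f) := directedOn_range.2 hf.directed_le
  let F := LinearPMap.sSup (Set.range f) hdir
  have hFdom : F.domain = ⊤ := by
    rw [eq_top_iff, ← hxspan, Submodule.span_le]
    rintro _ ⟨n, rfl⟩
    refine (LinearPMap.le_sSup hdir ⟨n + 1, rfl⟩).1 ?_
    change x n ∈ (A (n + 1)).1
    rw [hA1]
    exact Submodule.mem_sup_right (Submodule.mem_span_singleton_self _)
  have hFπ : ∀ y : F.domain, π (F y) = y := by
    rintro ⟨y, hy⟩
    obtain ⟨g, ⟨n, rfl⟩, hyn⟩ := (LinearPMap.mem_domain_sSup_iff (Set.range_nonempty f) hdir).1 hy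
    have := LinearPMap.sSup_apply hdir ⟨n, rfl⟩ ⟨y, hyn⟩
    exact (congrArg π this).trans ((s n).2 _)
  let σ : M →ₗ[R] (M →₀ R) := F.toFun ∘ₗ LinearMap.codRestrict F.domain LinearMap.id
    (fun y => hFdom ▸ Submodule.mem_top)
  exact Module.Projective.of_split σ π (LinearMap.ext fun y => hFπ _)
end MittagLefflerPart

/-- **Theorem 3.34 (Kaplansky–Raynaud–Gruson)**: an `R`-module `M` is projective if and
only if `M` is isomorphic to a direct sum of countably generated modules and `M` is
flat and Mittag-Leffler. -/
theorem projective_iff_directSum_countablyGenerated_and_flat_mittagLeffler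
    (R : Type u) [CommRing R] (M : Type u) [AddCommGroup M] [Module R M] :
    Module.Projective R M ↔
      ((∃ (ι : Type u) (Q : ι → ModuleCat.{u} R),
          (∀ i, ∃ S : Set (Q i : Type u), S.Countable ∧ Submodule.span R S = ⊤) ∧
          Nonempty (M ≃ₗ[R] ⨁ i, (Q i : Type u))) ∧
        Module.Flat R M ∧ IsMittagLeffler R M) := by
  classical
  constructor
  · intro h
    exact ⟨kaplansky, inferInstance, ml_of_projective⟩
  · rintro ⟨⟨ι, Q, hQ, ⟨e⟩⟩, hflat, hML⟩
    have hproj : ∀ i, Module.Projective R (Q i) := by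
      intro i
      let j : Q i →ₗ[R] M := e.symm.toLinearMap ∘ₗ DirectSum.lof R ι (fun i => Q i) i
      let r : M →ₗ[R] Q i := DirectSum.component R ι (fun i => Q i) i ∘ₗ e.toLinearMap
      have hrj : ∀ y, r (j y) = y := by
        intro y
        simp [r, j]
      have hfl : Module.Flat R (Q i) := Module.Flat.of_retract j r (LinearMap.ext hrj)
      obtain ⟨S, hS, hspan⟩ := hQ i
      exact projective_of_countable (ml_of_retract hML j r hrj) S hS hspan
    have : Module.Projective R (⨁ i, (Q i : Type u)) := Module.Projective.directSum_iff.2 hproj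
    exact Module.Projective.of_equiv' e.symm
end

section
/- Let R be a ring and M a left R-module. Suppose there exist a countable directed partially ordered set I and a monotone family (P_i)_{i∈I} of submodules of M with union M such that each P_i is finitely generated projective and for all i ≤ j the inclusion P_i ⊆ P_j admits an R-linear retraction. Then M is isomorphic to a direct sum ⊕_{n∈ℕ} Q_n in which every Q_n is a finitely generated projective R-module. (Module instance of Corollary 3.22: for a split exact category C, every countable admissible Ind-object is a countable direct sum of objects of C.) -/
universe u

open DirectSum

theorem exists_fgproj_compl {R : Type u} [Ring R] {M : Type u} [AddCommGroup M] [Module R M]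
    (N K : Submodule R M) (h : N ≤ K) (hfg : K.FG) (hp : Module.Projective R K)
    (r : K →ₗ[R] N) (hr : ∀ v : N, r (Submodule.inclusion h v) = v) :
    ∃ A : Submodule R M, Disjoint A N ∧ N ⊔ A = K ∧ Module.Finite R A ∧
      Module.Projective R A := by
  have hfin : Module.Finite R K := Module.Finite.iff_fg.mpr hfg
  let p : K →ₗ[R] K := LinearMap.id - (Submodule.inclusion h) ∘ₗ r
  have hpk : ∀ x, p x ∈ LinearMap.ker r := by
    intro x
    simp [p, hr]
  let q : K →ₗ[R] LinearMap.ker r := p.codRestrict _ hpk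
  have hq : q ∘ₗ (LinearMap.ker r).subtype = LinearMap.id := by
    ext x
    have := LinearMap.mem_ker.mp x.2
    simp [q, p, this]
  have hqs : Function.Surjective q := fun x => ⟨x.1, LinearMap.congr_fun hq x⟩
  have h1 : Module.Finite R (LinearMap.ker r) := Module.Finite.of_surjective q hqs
  have h2 : Module.Projective R (LinearMap.ker r) := Module.Projective.of_split _ q hq
  let e := Submodule.equivMapOfInjective K.subtype K.injective_subtype (LinearMap.ker r)
  refine ⟨(LinearMap.ker r).map K.subtype, ?_, ?_, Module.Finite.equiv e,
    Module.Projective.of_equiv e⟩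
  · rw [Submodule.disjoint_def]
    rintro _ ⟨x, hx, rfl⟩ hN
    have hx' : r x = 0 := hx
    have := hr ⟨_, hN⟩
    have h3 : Submodule.inclusion h ⟨_, hN⟩ = x := rfl
    rw [h3, hx'] at this
    exact (congrArg Subtype.val this).symm
  · apply le_antisymm
    · exact sup_le h (Submodule.map_subtype_le _ _)
    · intro x hx
      have h4 : x = (r ⟨x, hx⟩ : M) + K.subtype (p ⟨x, hx⟩) := by simp [p]
      rw [h4]
      exact Submodule.add_mem_sup (r ⟨x, hx⟩).2 (Submodule.mem_map_of_mem (hpk _))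

/-- **Corollary 3.22 (module instance)**: if a left `R`-module `M` is the union of a
monotone family, indexed by a countable directed poset, of finitely generated projective
submodules whose mutual inclusions split, then `M` is isomorphic to a countable direct
sum of finitely generated projective modules. -/
theorem directSum_decomposition_of_countable_admissible_ind_presentation
    (R : Type u) [Ring R] (M : Type u) [AddCommGroup M] [Module R M]
    (I : Type u) [PartialOrder I] [Countable I]
    (hdir : IsDirected I (· ≤ ·))
    (P : I → Submodule R M) (hmono : Monotone P)
    (hcovers : ∀ x : M, ∃ i, x ∈ P i)
    (hfg : ∀ i, (P i).FG)
    (hproj : ∀ i, Module.Projective R (P i))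
    (hsplits : ∀ i j, (h : i ≤ j) →
      ∃ r : (P j) →ₗ[R] (P i), ∀ v : P i, r (Submodule.inclusion (hmono h) v) = v) :
    ∃ Q : ℕ → ModuleCat.{u} R,
      (∀ n, Module.Finite R (Q n) ∧ Module.Projective R (Q n)) ∧
      Nonempty (M ≃ₗ[R] ⨁ n, (Q n : Type u)) := by
  have : Nonempty I := ⟨(hcovers 0).choose⟩
  obtain ⟨f, hf, hft⟩ := Filter.exists_seq_monotone_tendsto_atTop_atTop I
  let T : ℕ → Submodule R M := fun n => Nat.casesOn n ⊥ (fun n => P (f n))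
  have hA : ∀ n, ∃ A : Submodule R M, Disjoint A (T n) ∧ T n ⊔ A = T (n + 1) ∧
      Module.Finite R A ∧ Module.Projective R A := by
    intro n
    cases n with
    | zero =>
      exact exists_fgproj_compl ⊥ (P (f 0)) bot_le (hfg _) (hproj _) 0
        (fun v => Subsingleton.elim _ _)
    | succ n =>
      obtain ⟨r, hr⟩ := hsplits (f n) (f (n + 1)) (hf n.le_succ)
      exact exists_fgproj_compl (P (f n)) (P (f (n + 1))) _ (hfg _) (hproj _) r hr
  choose A hdis hsup hfin hpr using hA
  have hT : ∀ n, (Finset.range n).sup A = T n := by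
    intro n
    induction n with
    | zero => rfl
    | succ n ih => rw [Finset.range_add_one, Finset.sup_insert, ih, sup_comm, hsup]
  have hind : iSupIndep A := by
    rw [iSupIndep_iff_supIndep]
    have hr : ∀ n, (Finset.range n).SupIndep A := by
      intro n
      induction n with
      | zero => exact Finset.supIndep_empty _
      | succ n ih =>
        rw [Finset.range_add_one]
        exact ih.insert (by rw [hT]; exact hdis n)
    intro s
    obtain ⟨n, hn⟩ := s.exists_nat_subset_range
    exact (hr n).subset hn
  have htop : iSup A = ⊤ := by
    rw [eq_top_iff]
    intro x _
    obtain ⟨i, hi⟩ := hcovers x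
    obtain ⟨n, hn⟩ := (hft.eventually (Filter.eventually_ge_atTop i)).exists
    have h1 : x ∈ T (n + 1) := hmono hn hi
    rw [← hT (n + 1)] at h1
    exact (Finset.sup_le fun k _ => le_iSup A k) h1
  have hint := DirectSum.isInternal_submodule_of_iSupIndep_of_iSup_eq_top hind htop
  exact ⟨fun n => ModuleCat.of R (A n), fun n => ⟨hfin n, hpr n⟩,
    ⟨(LinearEquiv.ofBijective (DirectSum.coeLinearMap A) hint).symm⟩⟩
end

section
/- Let R be a ring with the discrete topology, let (M_j)_{j∈J} be a family of finitely generated projective left R-modules, each given the discrete topology, and give ∏_{j∈J} M_j the product topology. Let Z be a finitely generated projective left R-module with the discrete topology. Then the canonical homomorphism ⊕_{j∈J} Hom_R(M_j, Z) → Hom_{R}^{cts}(∏_{j∈J} M_j, Z), sending a finitely supported family (f_j)_{j∈J} to the map (x_j)_j ↦ ∑_{j} f_j(x_j), is a bijection. In particular, every continuous R-linear map ∏_{j∈J} M_j → Z factors through the projection onto finitely many factors. (The key claim in the proof of Proposition 4.7.) -/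
universe u

/-- Precomposition with the `j`-th projection, as an additive map
`Hom_R(M j, Z) →+ Hom_R(∏ j, M j, Z)`. -/
def compProjHom (R : Type u) [Ring R] {J : Type u} (M : J → Type u)
    [∀ j, AddCommGroup (M j)] [∀ j, Module R (M j)]
    (Z : Type u) [AddCommGroup Z] [Module R Z] (j : J) :
    (M j →ₗ[R] Z) →+ ((∀ j, M j) →ₗ[R] Z) where
  toFun g := g.comp (LinearMap.proj j)
  map_zero' := LinearMap.ext fun _ => rfl
  map_add' _ _ := LinearMap.ext fun _ => rfl

/-- The canonical homomorphism `⊕_j Hom_R(M j, Z) → Hom_R(∏_j M j, Z)`, sending a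
finitely supported family `(f_j)_j` to the map `(x_j)_j ↦ ∑_j f_j (x_j)`. -/
noncomputable def canonicalHom (R : Type u) [Ring R] {J : Type u} [DecidableEq J]
    (M : J → Type u) [∀ j, AddCommGroup (M j)] [∀ j, Module R (M j)]
    (Z : Type u) [AddCommGroup Z] [Module R Z] :
    (Π₀ j, (M j →ₗ[R] Z)) → ((∀ j, M j) →ₗ[R] Z) :=
  fun f => DFinsupp.sumAddHom (compProjHom R M Z) f

theorem canonicalHom_apply_aux (R : Type u) [Ring R] {J : Type u} [DecidableEq J]
    (M : J → Type u) [∀ j, AddCommGroup (M j)] [∀ j, Module R (M j)]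
    (Z : Type u) [AddCommGroup Z] [Module R Z] (f : Π₀ j, (M j →ₗ[R] Z)) :
    ∃ s : Finset J, (∀ j, j ∉ s → f j = 0) ∧
      ∀ x, canonicalHom R M Z f x = ∑ j ∈ s, f j (x j) := by
  classical
  refine ⟨f.support, fun j hj => by simpa using hj, fun x => ?_⟩
  simp only [canonicalHom, DFinsupp.sumAddHom_apply, DFinsupp.sum, LinearMap.sum_apply]
  rfl

theorem canonicalHom_single_aux (R : Type u) [Ring R] {J : Type u} [DecidableEq J]
    (M : J → Type u) [∀ j, AddCommGroup (M j)] [∀ j, Module R (M j)]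
    (Z : Type u) [AddCommGroup Z] [Module R Z] (f : Π₀ j, (M j →ₗ[R] Z)) (j : J) (m : M j) :
    canonicalHom R M Z f (Pi.single j m) = f j m := by
  obtain ⟨s, hs, h⟩ := canonicalHom_apply_aux R M Z f
  rw [h, Finset.sum_eq_single j]
  · simp
  · intro b _ hb
    simp [Pi.single_eq_of_ne hb]
  · intro hj
    simp [hs j hj]

theorem continuous_factor_aux (R : Type u) [Ring R] {J : Type u} [DecidableEq J]
    (M : J → Type u) [∀ j, AddCommGroup (M j)] [∀ j, Module R (M j)]
    [∀ j, TopologicalSpace (M j)] [∀ j, DiscreteTopology (M j)]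
    (Z : Type u) [AddCommGroup Z] [Module R Z] [TopologicalSpace Z] [DiscreteTopology Z]
    (g : (∀ j, M j) →ₗ[R] Z) (hg : Continuous g) :
    ∃ s : Finset J, ∀ x, g x = ∑ j ∈ s, g (Pi.single j (x j)) := by
  have ho : IsOpen (g ⁻¹' {0}) := (isOpen_discrete _).preimage hg
  obtain ⟨s, u, hu, hsub⟩ := isOpen_pi_iff.1 ho 0 (by simp)
  refine ⟨s, fun x => ?_⟩
  have h0 : g (x - ∑ j ∈ s, Pi.single j (x j)) = 0 := by
    apply hsub
    intro i hi
    have : (x - ∑ j ∈ s, Pi.single j (x j)) i = 0 := by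
      rw [Pi.sub_apply, Finset.sum_apply, Finset.sum_eq_single i]
      · simp
      · intro b _ hb
        exact Pi.single_eq_of_ne hb.symm _
      · intro h
        exact absurd hi h
    rw [this]
    exact (hu i hi).2
  rw [map_sub, sub_eq_zero, map_sum] at h0
  exact h0

/-- **Key claim in the proof of Proposition 4.7**: for a discrete ring `R`, a family of
discrete finitely generated projective modules `M j`, and a discrete finitely generated
projective module `Z`, the canonical homomorphism `⊕_j Hom_R(M j, Z) → Hom_R^cts(∏_j M j, Z)`
is a bijection onto the continuous `R`-linear maps `∏_j M j → Z` (for the product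
topology); in particular every continuous `R`-linear map `∏_j M j → Z` factors through
the projection onto finitely many factors. -/
theorem canonicalHom_bijOn_continuous_linear_maps
    (R : Type u) [Ring R] [TopologicalSpace R] [DiscreteTopology R]
    (J : Type u) [DecidableEq J] (M : J → Type u)
    [∀ j, AddCommGroup (M j)] [∀ j, Module R (M j)]
    [∀ j, TopologicalSpace (M j)] [∀ j, DiscreteTopology (M j)]
    (hMfin : ∀ j, Module.Finite R (M j)) (hMproj : ∀ j, Module.Projective R (M j))
    (Z : Type u) [AddCommGroup Z] [Module R Z] [TopologicalSpace Z] [DiscreteTopology Z]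
    (hZfin : Module.Finite R Z) (hZproj : Module.Projective R Z) :
    Set.BijOn (canonicalHom R M Z) Set.univ
      {g : (∀ j, M j) →ₗ[R] Z | Continuous g} ∧
    ∀ g : (∀ j, M j) →ₗ[R] Z, Continuous g →
      ∃ (s : Finset J) (h : (∀ j : s, M j) →ₗ[R] Z),
        ∀ x : ∀ j, M j, g x = h (fun j => x j.1) := by
  refine ⟨⟨?_, ?_, ?_⟩, ?_⟩
  · intro f _
    obtain ⟨s, _, h⟩ := canonicalHom_apply_aux R M Z f
    have h' : (canonicalHom R M Z f : (∀ j, M j) → Z) =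
        fun x => (fun y : ∀ j : s, M j => ∑ j : s, f j (y j)) (fun j => x j) := by
      funext x
      rw [h, ← Finset.sum_coe_sort]
    change Continuous (canonicalHom R M Z f : (∀ j, M j) → Z)
    rw [h']
    have h1 : Continuous (fun y : ∀ j : s, M j => ∑ j : s, f j (y j)) :=
      continuous_of_discreteTopology
    have h2 : Continuous (fun (x : ∀ j, M j) (j : s) => x j) := by fun_prop
    exact h1.comp h2
  · intro f _ f' _ h
    ext j m
    rw [← canonicalHom_single_aux, h, canonicalHom_single_aux]
  · intro g hg
    obtain ⟨s, hs⟩ := continuous_factor_aux R M Z g hg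
    refine ⟨∑ j ∈ s, DFinsupp.single j (g.comp (LinearMap.single R M j)), trivial, ?_⟩
    ext x
    rw [hs x]
    simp only [canonicalHom, map_sum, DFinsupp.sumAddHom_single, LinearMap.sum_apply]
    rfl
  · intro g hg
    obtain ⟨s, hs⟩ := continuous_factor_aux R M Z g hg
    refine ⟨s, ∑ j : s, (g.comp (LinearMap.single R M j)).comp (LinearMap.proj j), fun x => ?_⟩
    rw [hs x, ← Finset.sum_coe_sort, LinearMap.sum_apply]
    rfl
end
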